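/- Let N ≥ 2, β₀ > 0 and M₁, M₂ ≥ 0. Then there exists a constant C > 0, depending only on β₀, N, M₁ and M₂, with the following property. Let β ≥ β₀ be a positive real number that is not an integer, let C_β ≥ 2^β, and let v : ℝ^N → ℝ be twice continuously differentiable on the closed unit ball cl(B₁), with sup_{|x|=1} |v(x)| ≤ M₁ and sup_{|x|=1} ‖Dv(x)‖ ≤ M₂, satisfying |Δv(x)| ≤ C_β·|x|^β for all x ∈ B₁. Then there exists a polynomial function P : ℝ^N → ℝ of total degree at most ⌊β⌋ + 2 with ΔP ≡ 0, such that the remainder Γ := v − P satisfies |Γ(x)| ≤ C·C_β·β^{N−2}·⟨β⟩^{−1}·|x|^{β+2} and ‖DΓ(x)‖ ≤ C·C_β·β^{N}·⟨β⟩^{−1}·|x|^{β+1} for all x ∈ B₁. -/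

import Mathlib

/-!
The polynomial comes from the multipole expansion of the Newtonian kernel.

For a compactly supported `C²` function `u` with `|Δu(y)| ≤ A ‖y‖ ^ β` on the whole space, Green's
identity (`representation`) writes `u x - u 0` as an integral of `Δu` against the difference of the
Newtonian kernels with poles `x` and `0`. For `‖x‖ < ‖y‖` this difference is a series of solid zonal
harmonics in `x`, homogeneous of degree `1, 2, …` (`kernel_expansion`). The harmonic polynomial `P`
is `u 0` plus the integral of the terms of degree at most `⌊β⌋ + 2`; the integrals converge because
`Δu` vanishes to order `β` at the origin. The remainder is the integral of the truncated kernel,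
which is split at `‖y‖ = exp (1 / (m + 1)) ‖x‖` with `m = ⌊β⌋ + 2`: on the inside the kernel and each
term are integrated separately, on the outside the tail of the series is used (`tail_bound`). The
zonal harmonic of degree `k` is at most `k ^ (N - 3) ‖x‖ᵏ ‖y‖⁻ᵏ` up to constants (`polVal_bound`),
which produces the factor `β ^ (N - 2)`, and the radial integrals with exponent closest to the
borderline produce the inverse of the distance from `β` to the integers (`hasInt_majorant`). This
proves `core`.

The function `v` of the theorem is reduced to this case by a cutoff at distance of order
`1 / (β + 4)` from the unit sphere (`exists_cutoff`). The derivatives of the cutoff cost powers of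
`β + 4`; these are paid by a barrier argument, which gives `|v| ≤ C A / (β + 4)²` (`sup_bound`; here
`A ≥ 2 ^ β` is used), and by the interior gradient estimate, which gives `‖Dv‖ ≤ C A / (β + 4)` in the
transition shell (`shell_gradient`). In that shell `‖x‖ ^ (β + 2) ≥ 1 / 3`, so bounded quantities are
harmless there.

The gradient of the remainder is bounded by the interior gradient estimate in balls of radius
`‖x‖ / (β + 4)` (`gradient_of_growth`), and, close to the sphere, by a global gradient bound for `v`
(`global_gradient`). Both gradient estimates (`interior_gradient`, `global_gradient`) follow from
the maximum principle by doubling the variables, so no integral formula up to the boundary is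
needed.
-/

open MeasureTheory Asymptotics Filter Metric Set

noncomputable def laplacian {N : ℕ} (u : EuclideanSpace ℝ (Fin N) → ℝ)
    (x : EuclideanSpace ℝ (Fin N)) : ℝ :=
  ∑ i : Fin N, iteratedFDeriv ℝ 2 u x ![EuclideanSpace.single i 1, EuclideanSpace.single i 1]

noncomputable def laplacianWithin {N : ℕ} (u : EuclideanSpace ℝ (Fin N) → ℝ)
    (s : Set (EuclideanSpace ℝ (Fin N))) (x : EuclideanSpace ℝ (Fin N)) : ℝ :=
  ∑ i : Fin N, iteratedFDerivWithin ℝ 2 u s x ![EuclideanSpace.single i 1, EuclideanSpace.single i 1]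

def VanishesInfOrder {N : ℕ} (w : EuclideanSpace ℝ (Fin N) → ℝ)
    (x₀ : EuclideanSpace ℝ (Fin N)) : Prop :=
  ∃ ε > (0:ℝ), ∀ m > (0:ℝ),
    (fun r : ℝ => ∫ x in ball x₀ r, |w x| ^ ε) =o[nhdsWithin 0 (Ioi 0)] fun r : ℝ => r ^ m

noncomputable def spow (t s : ℝ) : ℝ := Real.sign t * |t| ^ s

noncomputable def distToInt (x : ℝ) : ℝ := min (Int.fract x) (1 - Int.fract x)

def IsRadial {N : ℕ} (u : EuclideanSpace ℝ (Fin N) → ℝ) : Prop :=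
  ∃ U : ℝ → ℝ, ∀ x, u x = U ‖x‖

namespace CaffarelliFriedman

/-! ### Calculus of the Laplacian -/

lemma laplacian_eq_sum_fderiv {N : ℕ} (u : EuclideanSpace ℝ (Fin N) → ℝ)
    (x : EuclideanSpace ℝ (Fin N)) :
    laplacian u x = ∑ i : Fin N, fderiv ℝ (fderiv ℝ u) x
      (EuclideanSpace.single i 1) (EuclideanSpace.single i 1) := by
  simp [laplacian, iteratedFDeriv_two_apply]

lemma laplacian_eq_sum_basis {N : ℕ} (u : EuclideanSpace ℝ (Fin N) → ℝ)
    (x : EuclideanSpace ℝ (Fin N))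
    (b : OrthonormalBasis (Fin N) ℝ (EuclideanSpace ℝ (Fin N))) :
    laplacian u x = ∑ i : Fin N, fderiv ℝ (fderiv ℝ u) x (b i) (b i) := by
  have h1 := congrFun
    (InnerProductSpace.laplacian_eq_iteratedFDeriv_orthonormalBasis u
      (EuclideanSpace.basisFun (Fin N) ℝ)) x
  have h2 := congrFun (InnerProductSpace.laplacian_eq_iteratedFDeriv_orthonormalBasis u b) x
  rw [h1] at h2
  simpa [laplacian, iteratedFDeriv_two_apply] using h2

lemma laplacian_congr {N : ℕ} {u w : EuclideanSpace ℝ (Fin N) → ℝ}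
    {x : EuclideanSpace ℝ (Fin N)} (h : u =ᶠ[nhds x] w) : laplacian u x = laplacian w x := by
  rw [laplacian_eq_sum_fderiv, laplacian_eq_sum_fderiv]
  rw [h.fderiv.fderiv_eq]

lemma differentiableAt_fderiv {N : ℕ} {u : EuclideanSpace ℝ (Fin N) → ℝ}
    {x : EuclideanSpace ℝ (Fin N)} (hu : ContDiffAt ℝ 2 u x) :
    DifferentiableAt ℝ (fderiv ℝ u) x :=
  (hu.fderiv_right (m := 1) (by norm_num)).differentiableAt (by norm_num)

lemma eventually_differentiableAt {N : ℕ} {u : EuclideanSpace ℝ (Fin N) → ℝ}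
    {x : EuclideanSpace ℝ (Fin N)} (hu : ContDiffAt ℝ 2 u x) :
    ∀ᶠ z in nhds x, DifferentiableAt ℝ u z := by
  filter_upwards [hu.eventually (by simp)] with z hz
  exact hz.differentiableAt (by norm_num)

/-- If the gradient of `u` agrees near `x` with `G`, the Laplacian is the trace of the derivative
of `G`. -/
lemma laplacian_of_fderiv {N : ℕ} {u : EuclideanSpace ℝ (Fin N) → ℝ}
    {x : EuclideanSpace ℝ (Fin N)}
    {G : EuclideanSpace ℝ (Fin N) → EuclideanSpace ℝ (Fin N) →L[ℝ] ℝ}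
    {G' : EuclideanSpace ℝ (Fin N) →L[ℝ] EuclideanSpace ℝ (Fin N) →L[ℝ] ℝ}
    (hG : ∀ᶠ z in nhds x, HasFDerivAt u (G z) z) (hG' : HasFDerivAt G G' x) :
    laplacian u x = ∑ i, G' (EuclideanSpace.single i 1) (EuclideanSpace.single i 1) := by
  have : fderiv ℝ u =ᶠ[nhds x] G := hG.mono fun z hz => hz.fderiv
  rw [laplacian_eq_sum_fderiv, this.fderiv_eq, hG'.fderiv]

lemma laplacian_add {N : ℕ} {u w : EuclideanSpace ℝ (Fin N) → ℝ}
    {x : EuclideanSpace ℝ (Fin N)} (hu : ContDiffAt ℝ 2 u x) (hw : ContDiffAt ℝ 2 w x) :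
    laplacian (fun z => u z + w z) x = laplacian u x + laplacian w x := by
  rw [laplacian_of_fderiv (G := fun z => fderiv ℝ u z + fderiv ℝ w z) _
    ((differentiableAt_fderiv hu).hasFDerivAt.add (differentiableAt_fderiv hw).hasFDerivAt)]
  · simp [laplacian_eq_sum_fderiv, Finset.sum_add_distrib]
  · filter_upwards [eventually_differentiableAt hu, eventually_differentiableAt hw] with z h1 h2
    exact h1.hasFDerivAt.add h2.hasFDerivAt

lemma laplacian_const_mul {N : ℕ} {u : EuclideanSpace ℝ (Fin N) → ℝ}
    {x : EuclideanSpace ℝ (Fin N)} (c : ℝ) (hu : ContDiffAt ℝ 2 u x) :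
    laplacian (fun z => c * u z) x = c * laplacian u x := by
  rw [laplacian_of_fderiv (G := fun z => c • fderiv ℝ u z) _
    ((differentiableAt_fderiv hu).hasFDerivAt.const_smul c)]
  · simp [laplacian_eq_sum_fderiv, Finset.mul_sum]
  · filter_upwards [eventually_differentiableAt hu] with z h1
    exact h1.hasFDerivAt.const_mul c

lemma laplacian_sub {N : ℕ} {u w : EuclideanSpace ℝ (Fin N) → ℝ}
    {x : EuclideanSpace ℝ (Fin N)} (hu : ContDiffAt ℝ 2 u x) (hw : ContDiffAt ℝ 2 w x) :
    laplacian (fun z => u z - w z) x = laplacian u x - laplacian w x := by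
  have h := laplacian_add hu (contDiffAt_const.mul hw : ContDiffAt ℝ 2 (fun z => (-1:ℝ) * w z) x)
  rw [laplacian_const_mul _ hw] at h
  simpa [sub_eq_add_neg] using h

lemma laplacian_mul {N : ℕ} {u w : EuclideanSpace ℝ (Fin N) → ℝ}
    {x : EuclideanSpace ℝ (Fin N)} (hu : ContDiffAt ℝ 2 u x) (hw : ContDiffAt ℝ 2 w x) :
    laplacian (fun z => u z * w z) x = u x * laplacian w x + w x * laplacian u x
      + 2 * ∑ i, fderiv ℝ u x (EuclideanSpace.single i 1)
        * fderiv ℝ w x (EuclideanSpace.single i 1) := by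
  have hu1 := hu.differentiableAt (by norm_num)
  have hw1 := hw.differentiableAt (by norm_num)
  rw [laplacian_of_fderiv (G := fun z => u z • fderiv ℝ w z + w z • fderiv ℝ u z) _
    ((hu1.hasFDerivAt.smul (differentiableAt_fderiv hw).hasFDerivAt).add
      (hw1.hasFDerivAt.smul (differentiableAt_fderiv hu).hasFDerivAt))]
  · simp only [laplacian_eq_sum_fderiv, Finset.mul_sum, ← Finset.sum_add_distrib]
    refine Finset.sum_congr rfl fun i _ => ?_
    simp
    ring
  · filter_upwards [eventually_differentiableAt hu, eventually_differentiableAt hw] with z h1 h2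
    exact h1.hasFDerivAt.mul h2.hasFDerivAt

lemma sum_inner_single_sq {N : ℕ} (x : EuclideanSpace ℝ (Fin N)) :
    ∑ i : Fin N, (inner ℝ x (EuclideanSpace.single i (1:ℝ))) ^ 2 = ‖x‖ ^ 2 := by
  simp [EuclideanSpace.norm_sq_eq, EuclideanSpace.inner_single_right]

/-- First derivative of a function of `‖x‖²`. -/
lemma hasFDerivAt_comp_normSq {N : ℕ} {χ : ℝ → ℝ} {χ' : ℝ}
    {x : EuclideanSpace ℝ (Fin N)} (h : HasDerivAt χ χ' (‖x‖ ^ 2)) :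
    HasFDerivAt (fun z : EuclideanSpace ℝ (Fin N) => χ (‖z‖ ^ 2))
      ((2 * χ') • innerSL ℝ x) x := by
  have := h.comp_hasFDerivAt x (hasStrictFDerivAt_norm_sq x).hasFDerivAt
  refine this.congr_fderiv ?_
  ext d
  simp
  ring

/-- The Laplacian of a function of `‖x‖²`. -/
lemma laplacian_comp_normSq {N : ℕ} {χ χ₁ : ℝ → ℝ} {χ₂ : ℝ}
    {x : EuclideanSpace ℝ (Fin N)} (h : ∀ᶠ ρ in nhds (‖x‖ ^ 2), HasDerivAt χ (χ₁ ρ) ρ)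
    (h' : HasDerivAt χ₁ χ₂ (‖x‖ ^ 2)) :
    laplacian (fun z : EuclideanSpace ℝ (Fin N) => χ (‖z‖ ^ 2)) x
      = 2 * N * χ₁ (‖x‖ ^ 2) + 4 * ‖x‖ ^ 2 * χ₂ := by
  have hcont : Filter.Tendsto (fun z : EuclideanSpace ℝ (Fin N) => ‖z‖ ^ 2) (nhds x)
      (nhds (‖x‖ ^ 2)) := by
    apply Continuous.tendsto; fun_prop
  have hA : HasFDerivAt (fun z : EuclideanSpace ℝ (Fin N) => innerSL ℝ z) (innerSL ℝ) x :=
    (innerSL ℝ (E := EuclideanSpace ℝ (Fin N))).hasFDerivAt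
  rw [laplacian_of_fderiv (G := fun z => (2 * χ₁ (‖z‖ ^ 2)) • innerSL ℝ z) _
    (((hasFDerivAt_comp_normSq h').const_mul 2).smul hA)]
  · simp only [add_apply, smul_apply,
      ContinuousLinearMap.smulRight_apply]
    simp only [innerSL_apply_apply, smul_eq_mul, Finset.sum_add_distrib]
    have e : ∀ i : Fin N, 2 * (2 * χ₂ * inner ℝ x (EuclideanSpace.single i (1:ℝ))) *
        inner ℝ x (EuclideanSpace.single i (1:ℝ)) =
        4 * χ₂ * (inner ℝ x (EuclideanSpace.single i (1:ℝ))) ^ 2 := by intro i; ring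
    simp only [e, ← Finset.mul_sum, sum_inner_single_sq]
    have e1 : ∀ i : Fin N, innerSL ℝ (EuclideanSpace.single i (1:ℝ))
        (EuclideanSpace.single i (1:ℝ)) = 1 := fun i => by
      rw [innerSL_apply_apply, real_inner_self_eq_norm_sq]; simp
    rw [Finset.sum_congr rfl fun i _ => e1 i]
    simp
    ring
  · filter_upwards [hcont.eventually h] with z hz
    exact hasFDerivAt_comp_normSq hz

/-- Second derivative test: at a local maximum the second derivative is nonpositive. -/
lemma second_deriv_nonpos {g g₁ : ℝ → ℝ} {c : ℝ} (h : ∀ᶠ t in nhds 0, HasDerivAt g (g₁ t) t)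
    (h' : HasDerivAt g₁ c 0) (hmax : IsLocalMax g 0) : c ≤ 0 := by
  by_contra! hc
  have hg0 : g₁ 0 = 0 := hmax.hasDerivAt_eq_zero h.self_of_nhds
  -- subtracting `(c/4) t²` keeps a positive second derivative, so `0` is a strict local minimum
  have hk : ∀ᶠ t in nhds 0, HasDerivAt (fun t => g t - c / 4 * t ^ 2) (g₁ t - c / 2 * t) t := by
    filter_upwards [h] with t ht
    refine (ht.sub ((hasDerivAt_pow 2 t).const_mul (c / 4))).congr_deriv ?_
    push_cast; ring
  have hd : deriv (fun t => g t - c / 4 * t ^ 2) =ᶠ[nhds 0] fun t => g₁ t - c / 2 * t :=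
    hk.mono fun t ht => ht.deriv
  have hdd : deriv (deriv (fun t => g t - c / 4 * t ^ 2)) 0 = c / 2 := by
    rw [hd.deriv_eq]
    have : HasDerivAt (fun t => g₁ t - c / 2 * t) (c - c / 2 * 1) 0 :=
      h'.sub ((hasDerivAt_id (0:ℝ)).const_mul (c / 2))
    rw [this.deriv]
    ring
  have hmin : IsLocalMin (fun t => g t - c / 4 * t ^ 2) 0 :=
    isLocalMin_of_deriv_deriv_pos (by rw [hdd]; positivity)
      (by rw [hd.self_of_nhds]; simp [hg0]) hk.self_of_nhds.continuousAt
  have hev : ∀ᶠ t in nhds (0:ℝ), t = 0 := by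
    filter_upwards [hmin, hmax] with t h1 h2
    simp at h1
    have h3 : c / 4 * t ^ 2 ≤ 0 := by linarith
    have h4 : t ^ 2 ≤ 0 := by
      by_contra! h5
      have : 0 < c / 4 * t ^ 2 := by positivity
      linarith
    exact pow_eq_zero_iff (two_ne_zero) |>.1 (le_antisymm h4 (sq_nonneg t))
  obtain ⟨ε, hε, hb⟩ := Metric.eventually_nhds_iff.1 hev
  have := @hb (ε / 2) (by simp [abs_of_pos hε]; linarith)
  linarith

/-- Restriction of a `C²` function to a line. -/
lemma hasDerivAt_line {N : ℕ} {u : EuclideanSpace ℝ (Fin N) → ℝ}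
    {x : EuclideanSpace ℝ (Fin N)} (hu : ContDiffAt ℝ 2 u x) (d : EuclideanSpace ℝ (Fin N)) :
    (∀ᶠ t : ℝ in nhds 0, HasDerivAt (fun t : ℝ => u (x + t • d)) (fderiv ℝ u (x + t • d) d) t) ∧
    HasDerivAt (fun t : ℝ => fderiv ℝ u (x + t • d) d) (fderiv ℝ (fderiv ℝ u) x d d) 0 := by
  have hline : ∀ t : ℝ, HasDerivAt (fun t : ℝ => x + t • d) d t := fun t => by
    simpa using ((hasDerivAt_id t).smul_const d).const_add x
  have ht : Filter.Tendsto (fun t : ℝ => x + t • d) (nhds 0) (nhds x) := by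
    have : Continuous (fun t : ℝ => x + t • d) := by fun_prop
    simpa using this.tendsto 0
  constructor
  · filter_upwards [ht.eventually (eventually_differentiableAt hu)] with t h
    exact h.hasFDerivAt.comp_hasDerivAt t (hline t)
  · have h1 : HasFDerivAt (fderiv ℝ u) (fderiv ℝ (fderiv ℝ u) x) (x + (0:ℝ) • d) := by
      simpa using (differentiableAt_fderiv hu).hasFDerivAt
    have h2 := h1.comp_hasDerivAt (0:ℝ) (hline 0)
    have h3 := h2.clm_apply (hasDerivAt_const (0:ℝ) d)
    simpa using h3

/-! ### Maximum principle and gradient estimates -/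

lemma laplacian_nonpos_of_isLocalMax {N : ℕ} {u : EuclideanSpace ℝ (Fin N) → ℝ}
    {x : EuclideanSpace ℝ (Fin N)} (hu : ContDiffAt ℝ 2 u x) (hmax : IsLocalMax u x) :
    laplacian u x ≤ 0 := by
  rw [laplacian_eq_sum_fderiv]
  refine Finset.sum_nonpos fun i _ => ?_
  obtain ⟨h1, h2⟩ := hasDerivAt_line hu (EuclideanSpace.single i (1:ℝ))
  refine second_deriv_nonpos h1 h2 ?_
  have hc : Continuous (fun t : ℝ => x + t • EuclideanSpace.single i (1:ℝ)) := by fun_prop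
  have := hc.tendsto 0
  simp only [zero_smul, add_zero] at this
  simpa [IsLocalMax, IsMaxFilter] using this.eventually hmax

lemma contDiff_normSq_sub {N : ℕ} (c : EuclideanSpace ℝ (Fin N)) :
    ContDiff ℝ 2 (fun z : EuclideanSpace ℝ (Fin N) => ‖z - c‖ ^ 2) :=
  (contDiff_id.sub contDiff_const).norm_sq ℝ

lemma laplacian_normSq {N : ℕ} (x : EuclideanSpace ℝ (Fin N)) :
    laplacian (fun z : EuclideanSpace ℝ (Fin N) => ‖z‖ ^ 2) x = 2 * N := by
  have := laplacian_comp_normSq (χ := fun ρ => ρ) (χ₁ := fun _ => 1) (χ₂ := 0) (x := x)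
    (Eventually.of_forall fun ρ => hasDerivAt_id ρ) (hasDerivAt_const _ _)
  simpa using this

/-- The weak maximum principle on the unit ball. -/
lemma weak_max {N : ℕ} (hN : 1 ≤ N) {w : EuclideanSpace ℝ (Fin N) → ℝ} {M : ℝ}
    (hc : ContinuousOn w (closedBall 0 1)) (hw : ∀ x ∈ ball 0 1, ContDiffAt ℝ 2 w x)
    (hl : ∀ x ∈ ball 0 1, 0 ≤ laplacian w x) (hb : ∀ x ∈ sphere 0 1, w x ≤ M) :
    ∀ x ∈ closedBall 0 1, w x ≤ M := by
  intro x hx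
  refine le_of_forall_pos_le_add fun ε hε => ?_
  -- `w + ε ‖·‖²` has positive Laplacian, so its maximum lies on the sphere
  obtain ⟨x₀, hx₀, hmax⟩ := (isCompact_closedBall (0 : EuclideanSpace ℝ (Fin N)) 1).exists_isMaxOn
    ⟨x, hx⟩ (f := fun z => w z + ε * ‖z‖ ^ 2) (hc.add (by fun_prop))
  have hxs : x₀ ∈ sphere (0 : EuclideanSpace ℝ (Fin N)) 1 := by
    by_contra hns
    have hx₀b : x₀ ∈ ball (0 : EuclideanSpace ℝ (Fin N)) 1 := by
      simp only [mem_closedBall, mem_sphere, mem_ball] at *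
      exact lt_of_le_of_ne hx₀ hns
    have hn : ContDiffAt ℝ 2 (fun z : EuclideanSpace ℝ (Fin N) => ‖z‖ ^ 2) x₀ :=
      (contDiff_norm_sq ℝ).contDiffAt
    have h1 := laplacian_nonpos_of_isLocalMax ((hw _ hx₀b).add (contDiffAt_const.mul hn))
      (hmax.isLocalMax (mem_of_superset (isOpen_ball.mem_nhds hx₀b) ball_subset_closedBall))
    rw [laplacian_add (hw _ hx₀b) (contDiffAt_const.mul hn), laplacian_const_mul _ hn,
      laplacian_normSq] at h1
    have := hl _ hx₀b
    have hN' : (1:ℝ) ≤ N := by exact_mod_cast hN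
    nlinarith
  have h1 := hmax hx
  have h2 := hb _ hxs
  simp only [Set.mem_ofPred_eq] at h1
  rw [mem_sphere_zero_iff_norm] at hxs
  rw [hxs] at h1
  nlinarith [sq_nonneg ‖x‖]

/-- Second-order condition at an interior maximum, off the diagonal, of the doubled function
`(x, y) ↦ w x - w y - φ(‖x - y‖) - K ‖x - x₀‖² - K ‖y - x₀‖²` with `φ t = L t - Q t²`.
It is tested along the directions `(eᵢ, R eᵢ)`, where `R` is the reflection reversing `x - y`:
along these the difference of the two points stays on one line, so only `φ''` enters. -/
lemma doubling_interior {N : ℕ} {w : EuclideanSpace ℝ (Fin N) → ℝ} {L Q K : ℝ}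
    {x₀ x y : EuclideanSpace ℝ (Fin N)} (hx : ContDiffAt ℝ 2 w x) (hy : ContDiffAt ℝ 2 w y)
    (hne : x ≠ y)
    (hmax : IsLocalMax (fun p : EuclideanSpace ℝ (Fin N) × EuclideanSpace ℝ (Fin N) =>
      w p.1 - w p.2 - (L * ‖p.1 - p.2‖ - Q * ‖p.1 - p.2‖ ^ 2) - K * ‖p.1 - x₀‖ ^ 2
        - K * ‖p.2 - x₀‖ ^ 2) (x, y)) :
    laplacian w x - laplacian w y + 8 * Q - 4 * N * K ≤ 0 := by
  set t₀ := ‖x - y‖ with ht₀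
  have ht₀pos : 0 < t₀ := norm_pos_iff.2 (sub_ne_zero.2 hne)
  set e : EuclideanSpace ℝ (Fin N) := t₀⁻¹ • (x - y) with he
  have hxy : x - y = t₀ • e := by rw [he, smul_smul, mul_inv_cancel₀ ht₀pos.ne', one_smul]
  have hen : ‖e‖ = 1 := by
    rw [he, norm_smul, norm_inv, Real.norm_of_nonneg ht₀pos.le, ← ht₀, inv_mul_cancel₀ ht₀pos.ne']
  let R := (ℝ ∙ e).reflection
  let b := (EuclideanSpace.basisFun (Fin N) ℝ).map R
  let s : Fin N → EuclideanSpace ℝ (Fin N) := fun i => EuclideanSpace.single i 1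
  have hsn : ∀ i, ‖s i‖ = 1 := fun i => by simp [s]
  have hb : ∀ i, b i = (2 * inner ℝ e (s i)) • e - s i := fun i => by
    simp only [b, R, OrthonormalBasis.map_apply, EuclideanSpace.basisFun_apply]
    rw [Submodule.reflection_singleton_apply]
    simp only [hen, s, RCLike.ofReal_real_eq_id, id, one_pow, div_one]
    module
  have hbn : ∀ i, ‖b i‖ = 1 := fun i => b.orthonormal.1 i
  have key : ∀ i, fderiv ℝ (fderiv ℝ w) x (s i) (s i) - fderiv ℝ (fderiv ℝ w) y (b i) (b i)
      + 8 * Q * (inner ℝ e (s i)) ^ 2 - 4 * K ≤ 0 := by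
    intro i
    set c := inner ℝ e (s i) with hc
    obtain ⟨hx1, hx2⟩ := hasDerivAt_line hx (s i)
    obtain ⟨hy1, hy2⟩ := hasDerivAt_line hy (-(b i))
    refine second_deriv_nonpos
      (g := fun t => w (x + t • s i) - w (y + t • -(b i))
        - (L * (t₀ + 2 * c * t) - Q * (t₀ + 2 * c * t) ^ 2)
        - K * (‖x - x₀‖ ^ 2 + 2 * inner ℝ (x - x₀) (s i) * t + t ^ 2)
        - K * (‖y - x₀‖ ^ 2 + 2 * inner ℝ (y - x₀) (-(b i)) * t + t ^ 2))
      (g₁ := fun t => fderiv ℝ w (x + t • s i) (s i) - fderiv ℝ w (y + t • -(b i)) (-(b i))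
        - (L * (2 * c) - Q * (4 * c * (t₀ + 2 * c * t)))
        - K * (2 * inner ℝ (x - x₀) (s i) + 2 * t)
        - K * (2 * inner ℝ (y - x₀) (-(b i)) + 2 * t)) ?_ ?_ ?_
    · filter_upwards [hx1, hy1] with t h1 h2
      have hlin : HasDerivAt (fun t : ℝ => t₀ + 2 * c * t) (2 * c) t := by
        simpa using ((hasDerivAt_id t).const_mul (2 * c)).const_add t₀
      have hq : ∀ A B : ℝ, HasDerivAt (fun t : ℝ => A + 2 * B * t + t ^ 2) (2 * B + 2 * t) t := by
        intro A B
        have := (((hasDerivAt_id t).const_mul (2 * B)).const_add A).add (hasDerivAt_pow 2 t)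
        refine this.congr_deriv (by simp)
      refine ((((h1.sub h2).sub ((hlin.const_mul L).sub ((hlin.pow 2).const_mul Q))).sub
        ((hq _ _).const_mul K)).sub ((hq _ _).const_mul K)).congr_deriv ?_
      push_cast
      ring
    · have hlin : HasDerivAt (fun t : ℝ => Q * (4 * c * (t₀ + 2 * c * t))) (Q * (8 * c ^ 2)) 0 := by
        refine (((((hasDerivAt_id (0:ℝ)).const_mul (2 * c)).const_add t₀).const_mul
          (4 * c)).const_mul Q).congr_deriv (by ring)
      have hq : ∀ B : ℝ, HasDerivAt (fun t : ℝ => K * (2 * B + 2 * t)) (K * 2) 0 := by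
        intro B
        refine ((((hasDerivAt_id (0:ℝ)).const_mul 2).const_add (2 * B)).const_mul K).congr_deriv
          (by ring)
      refine ((((hx2.sub hy2).sub (hlin.const_sub (L * (2 * c)))).sub (hq _)).sub
        (hq _)).congr_deriv ?_
      simp only [map_neg, neg_apply, neg_neg]
      ring
    · have hcont : Continuous (fun t : ℝ => (x + t • s i, y + t • -(b i))) := by fun_prop
      have h0 := hcont.tendsto 0
      simp only [zero_smul, add_zero] at h0
      have hpos : ∀ᶠ t : ℝ in nhds 0, 0 < t₀ + 2 * c * t := by
        have : Continuous (fun t : ℝ => t₀ + 2 * c * t) := by fun_prop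
        have h := this.tendsto 0
        simp only [mul_zero, add_zero] at h
        exact h.eventually (lt_mem_nhds ht₀pos)
      have hform : ∀ t : ℝ, 0 ≤ t₀ + 2 * c * t →
          ‖(x + t • s i) - (y + t • -(b i))‖ = t₀ + 2 * c * t := by
        intro t ht
        have : (x + t • s i) - (y + t • -(b i)) = (t₀ + 2 * c * t) • e := by
          rw [hb i, add_smul, ← hxy]
          module
        rw [this, norm_smul, hen, mul_one, Real.norm_of_nonneg ht]
      have hsq : ∀ (a d : EuclideanSpace ℝ (Fin N)) (t : ℝ), ‖d‖ = 1 →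
          ‖a + t • d - x₀‖ ^ 2 = ‖a - x₀‖ ^ 2 + 2 * inner ℝ (a - x₀) d * t + t ^ 2 := by
        intro a d t hd
        rw [add_sub_right_comm, norm_add_sq_real, norm_smul, hd, inner_smul_right]
        simp
        ring
      filter_upwards [h0.eventually hmax, hpos] with t h1 h2
      simp only [hsq x (s i) t (hsn i), hsq y (-(b i)) t (by rw [norm_neg, hbn]),
        hform t h2.le] at h1
      simp only [zero_smul, add_zero, mul_zero]
      convert h1 using 1
      ring
  have hsum := Finset.sum_nonpos fun i (_ : i ∈ Finset.univ) => key i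
  simp only [Finset.sum_sub_distrib, Finset.sum_add_distrib, ← Finset.mul_sum] at hsum
  rw [laplacian_eq_sum_fderiv w x, laplacian_eq_sum_basis w y b]
  have h1 : ∑ i, (inner ℝ e (s i)) ^ 2 = 1 := by
    rw [sum_inner_single_sq e, hen]; norm_num
  rw [h1] at hsum
  simp at hsum
  linarith

/-- Interior gradient estimate for `C²` functions. -/
lemma interior_gradient {N : ℕ} (hN : 1 ≤ N) {w : EuclideanSpace ℝ (Fin N) → ℝ} {S F ρ : ℝ}
    {x₀ : EuclideanSpace ℝ (Fin N)} (hρ : 0 < ρ) (hS : 0 < S) (hF : 0 ≤ F)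
    (hw : ∀ z ∈ closedBall x₀ ρ, ContDiffAt ℝ 2 w z)
    (hwS : ∀ z ∈ closedBall x₀ ρ, |w z| ≤ S)
    (hwF : ∀ z ∈ closedBall x₀ ρ, |laplacian w z| ≤ F) :
    ‖fderiv ℝ w x₀‖ ≤ (4 * N + 2) * (S / ρ) + 2 * (ρ * F) := by
  have hN' : (1:ℝ) ≤ N := by exact_mod_cast hN
  set K := 2 * S / ρ ^ 2 with hK
  have hKpos : 0 < K := by positivity
  have hKρ : K * ρ ^ 2 = 2 * S := by rw [hK]; field_simp
  set Q := F + N * K with hQ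
  have hQpos : 0 < Q := by positivity
  set L := 2 * ρ * Q with hL
  have hcw : ContinuousOn w (closedBall x₀ ρ) := fun z hz => (hw z hz).continuousAt.continuousWithinAt
  set Fn : EuclideanSpace ℝ (Fin N) × EuclideanSpace ℝ (Fin N) → ℝ := fun p =>
      w p.1 - w p.2 - (L * ‖p.1 - p.2‖ - Q * ‖p.1 - p.2‖ ^ 2) - K * ‖p.1 - x₀‖ ^ 2
        - K * ‖p.2 - x₀‖ ^ 2 with hFn
  have hx₀ : x₀ ∈ closedBall x₀ ρ := mem_closedBall_self hρ.le
  have hFc : ContinuousOn Fn (closedBall x₀ ρ ×ˢ closedBall x₀ ρ) := by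
    have h1 : ContinuousOn (fun p : EuclideanSpace ℝ (Fin N) × EuclideanSpace ℝ (Fin N) => w p.1)
      (closedBall x₀ ρ ×ˢ closedBall x₀ ρ) := hcw.comp continuousOn_fst fun p hp => hp.1
    have h2 : ContinuousOn (fun p : EuclideanSpace ℝ (Fin N) × EuclideanSpace ℝ (Fin N) => w p.2)
      (closedBall x₀ ρ ×ˢ closedBall x₀ ρ) := hcw.comp continuousOn_snd fun p hp => hp.2
    have h3 : Continuous (fun p : EuclideanSpace ℝ (Fin N) × EuclideanSpace ℝ (Fin N) =>
      (L * ‖p.1 - p.2‖ - Q * ‖p.1 - p.2‖ ^ 2)) := by fun_prop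
    have h4 : Continuous (fun p : EuclideanSpace ℝ (Fin N) × EuclideanSpace ℝ (Fin N) =>
      K * ‖p.1 - x₀‖ ^ 2) := by fun_prop
    have h5 : Continuous (fun p : EuclideanSpace ℝ (Fin N) × EuclideanSpace ℝ (Fin N) =>
      K * ‖p.2 - x₀‖ ^ 2) := by fun_prop
    exact (((h1.sub h2).sub h3.continuousOn).sub h4.continuousOn).sub h5.continuousOn
  obtain ⟨⟨x, y⟩, ⟨hxm, hym⟩, hmax⟩ := ((isCompact_closedBall x₀ ρ).prod
    (isCompact_closedBall x₀ ρ)).exists_isMaxOn ⟨(x₀, x₀), hx₀, hx₀⟩ hFc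
  simp only at hxm hym
  have hφ : 0 ≤ L * ‖x - y‖ - Q * ‖x - y‖ ^ 2 := by
    have h1 : ‖x - y‖ ≤ 2 * ρ := by
      have := dist_triangle_right x y x₀
      rw [mem_closedBall] at hxm hym
      rw [← dist_eq_norm]; linarith
    have h2 : L * ‖x - y‖ - Q * ‖x - y‖ ^ 2 = Q * ‖x - y‖ * (2 * ρ - ‖x - y‖) := by rw [hL]; ring
    rw [h2]
    have : 0 ≤ 2 * ρ - ‖x - y‖ := by linarith
    positivity
  have hle : Fn (x, y) ≤ 0 := by
    have hax := abs_le.1 (hwS x hxm)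
    have hay := abs_le.1 (hwS y hym)
    have hpx : 0 ≤ K * ‖x - x₀‖ ^ 2 := by positivity
    have hpy : 0 ≤ K * ‖y - x₀‖ ^ 2 := by positivity
    rcases eq_or_ne x y with rfl | hne
    · simp only [hFn]; simp; linarith
    rw [mem_closedBall, dist_eq_norm] at hxm hym
    rcases hxm.eq_or_lt with h | hxl
    · simp only [hFn]; rw [h, hKρ]; linarith
    rcases hym.eq_or_lt with h | hyl
    · simp only [hFn]; rw [h, hKρ]; linarith
    exfalso
    have hxb : x ∈ closedBall x₀ ρ := by rw [mem_closedBall, dist_eq_norm]; exact hxl.le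
    have hyb : y ∈ closedBall x₀ ρ := by rw [mem_closedBall, dist_eq_norm]; exact hyl.le
    have hnhds : closedBall x₀ ρ ×ˢ closedBall x₀ ρ ∈ nhds (x, y) := by
      refine prod_mem_nhds ?_ ?_
      · exact mem_of_superset (isOpen_ball.mem_nhds (by rw [mem_ball, dist_eq_norm]; exact hxl))
          ball_subset_closedBall
      · exact mem_of_superset (isOpen_ball.mem_nhds (by rw [mem_ball, dist_eq_norm]; exact hyl))
          ball_subset_closedBall
    have := doubling_interior (hw x hxb) (hw y hyb) hne (hmax.isLocalMax hnhds)
    have h1 := abs_le.1 (hwF x hxb)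
    have h2 := abs_le.1 (hwF y hyb)
    have hNK : 0 < N * K := by positivity
    nlinarith
  have hall : ∀ p q, p ∈ closedBall x₀ ρ → q ∈ closedBall x₀ ρ → Fn (p, q) ≤ 0 :=
    fun p q hp hq => (hmax (show (p, q) ∈ closedBall x₀ ρ ×ˢ closedBall x₀ ρ from ⟨hp, hq⟩)).trans hle
  have hfin : ‖fderiv ℝ w x₀‖ ≤ L + K * ρ := by
    refine ((hw x₀ hx₀).differentiableAt (by norm_num)).hasFDerivAt.le_of_lip' (by positivity) ?_
    filter_upwards [closedBall_mem_nhds x₀ hρ] with z hz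
    have h1 := hall z x₀ hz hx₀
    have h2 := hall x₀ z hx₀ hz
    simp only [hFn, norm_sub_rev x₀ z, sub_self, norm_zero] at h1 h2
    rw [mem_closedBall, dist_eq_norm] at hz
    have h3 : K * ‖z - x₀‖ ^ 2 ≤ K * ρ * ‖z - x₀‖ := by
      have := mul_le_mul_of_nonneg_left hz (by positivity : 0 ≤ K * ‖z - x₀‖)
      nlinarith
    have h4 : 0 ≤ Q * ‖z - x₀‖ ^ 2 := by positivity
    rw [Real.norm_eq_abs, abs_le]
    constructor <;> nlinarith
  refine hfin.trans (le_of_eq ?_)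
  rw [hL, hQ, hK]
  field_simp
  ring

/-- First-order condition at a boundary maximum: the point is moved along the segment
towards `q`, which stays in the ball by convexity. -/
lemma boundary_slope {N : ℕ} {v : EuclideanSpace ℝ (Fin N) → ℝ} {L Q : ℝ}
    {p q : EuclideanSpace ℝ (Fin N)} (hp : p ∈ closedBall 0 1) (hq : q ∈ closedBall 0 1)
    (hv : DifferentiableWithinAt ℝ v (closedBall 0 1) p) (hne : p ≠ q)
    (hmax : ∀ z ∈ closedBall 0 1, v z - (L * ‖z - q‖ - Q * ‖z - q‖ ^ 2)
      ≤ v p - (L * ‖p - q‖ - Q * ‖p - q‖ ^ 2)) :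
    L - 2 * Q * ‖p - q‖ ≤ ‖fderivWithin ℝ v (closedBall 0 1) p‖ := by
  set T := ‖p - q‖ with hT
  have hTpos : 0 < T := norm_pos_iff.2 (sub_ne_zero.2 hne)
  have hmaps : MapsTo (fun t : ℝ => p + t • (q - p)) (Icc 0 1) (closedBall 0 1) := by
    intro t ht
    exact (convex_closedBall (0 : EuclideanSpace ℝ (Fin N)) 1).add_smul_sub_mem hp hq ht
  have hline : HasDerivWithinAt (fun t : ℝ => p + t • (q - p)) (q - p) (Icc 0 1) 0 := by
    have := (((hasDerivAt_id (0:ℝ)).smul_const (q - p)).const_add p).hasDerivWithinAt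
      (s := Icc (0:ℝ) 1)
    simpa using this
  have hv' : HasFDerivWithinAt v (fderivWithin ℝ v (closedBall 0 1) p) (closedBall 0 1)
      (p + (0:ℝ) • (q - p)) := by simpa using hv.hasFDerivWithinAt
  have h1 := hv'.comp_hasDerivWithinAt (0:ℝ) hline hmaps
  have hlin : HasDerivWithinAt (fun t : ℝ => (1 - t) * T) (-T) (Icc 0 1) 0 := by
    have := (((hasDerivAt_id (0:ℝ)).const_sub 1).mul_const T).hasDerivWithinAt (s := Icc (0:ℝ) 1)
    simpa using this
  have h2 := h1.sub ((hlin.const_mul L).sub ((hlin.pow 2).const_mul Q))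
  have hloc : IsLocalMaxOn ((v ∘ fun t : ℝ => p + t • (q - p)) -
      ((fun t : ℝ => L * ((1 - t) * T)) - fun t : ℝ => Q * (((1 - t) * T) ^ 2))) (Icc 0 1) 0 := by
    refine IsMaxOn.localize fun t ht => ?_
    have hn : ‖p + t • (q - p) - q‖ = (1 - t) * T := by
      have : p + t • (q - p) - q = (1 - t) • (p - q) := by module
      rw [this, norm_smul, Real.norm_of_nonneg (by linarith [ht.2])]
    have := hmax _ (hmaps ht)
    simp only [hn] at this
    simpa using this
  have h3 := hloc.hasFDerivWithinAt_nonpos h2.hasFDerivWithinAt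
    (y := (1:ℝ)) (by
      have := mem_posTangentConeAt_of_segment_subset (x := (0:ℝ)) (y := 1) (s := Icc 0 1)
        (by rw [zero_add, segment_eq_Icc zero_le_one])
      exact this)
  have h4 : -(‖fderivWithin ℝ v (closedBall 0 1) p‖ * T)
      ≤ fderivWithin ℝ v (closedBall 0 1) p (q - p) := by
    have := (fderivWithin ℝ v (closedBall 0 1) p).le_opNorm (q - p)
    rw [norm_sub_rev, ← hT, Real.norm_eq_abs] at this
    exact (abs_le.1 this).1
  rw [map_sub] at h4
  simp at h3
  have h5 : (L - 2 * Q * T) * T ≤ ‖fderivWithin ℝ v (closedBall 0 1) p‖ * T := by nlinarith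
  exact le_of_mul_le_mul_right h5 hTpos

/-- A gradient bound on the sphere and a bound on the Laplacian bound the gradient in the ball. -/
lemma global_gradient {N : ℕ} {v : EuclideanSpace ℝ (Fin N) → ℝ} {F M : ℝ}
    (hF : 0 < F) (hM : 0 ≤ M) (hv : ContDiffOn ℝ 2 v (closedBall 0 1))
    (hb : ∀ x ∈ sphere (0 : EuclideanSpace ℝ (Fin N)) 1,
      ‖fderivWithin ℝ v (closedBall 0 1) x‖ ≤ M)
    (hl : ∀ x ∈ ball (0 : EuclideanSpace ℝ (Fin N)) 1, |laplacian v x| ≤ F) :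
    ∀ x ∈ ball (0 : EuclideanSpace ℝ (Fin N)) 1, ‖fderiv ℝ v x‖ ≤ M + 5 * F := by
  have hC : ∀ x ∈ ball (0 : EuclideanSpace ℝ (Fin N)) 1, ContDiffAt ℝ 2 v x := fun x hx =>
    hv.contDiffAt (mem_of_superset (isOpen_ball.mem_nhds hx) ball_subset_closedBall)
  have hcw := hv.continuousOn
  set L := M + 5 * F with hL
  set Fn : EuclideanSpace ℝ (Fin N) × EuclideanSpace ℝ (Fin N) → ℝ := fun p =>
      v p.1 - v p.2 - (L * ‖p.1 - p.2‖ - F * ‖p.1 - p.2‖ ^ 2) - 0 * ‖p.1 - 0‖ ^ 2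
        - 0 * ‖p.2 - 0‖ ^ 2 with hFn
  have hFc : ContinuousOn Fn (closedBall 0 1 ×ˢ closedBall 0 1) := by
    have h1 : ContinuousOn (fun p : EuclideanSpace ℝ (Fin N) × EuclideanSpace ℝ (Fin N) => v p.1)
      (closedBall 0 1 ×ˢ closedBall 0 1) := hcw.comp continuousOn_fst fun p hp => hp.1
    have h2 : ContinuousOn (fun p : EuclideanSpace ℝ (Fin N) × EuclideanSpace ℝ (Fin N) => v p.2)
      (closedBall 0 1 ×ˢ closedBall 0 1) := hcw.comp continuousOn_snd fun p hp => hp.2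
    have h3 : Continuous (fun p : EuclideanSpace ℝ (Fin N) × EuclideanSpace ℝ (Fin N) =>
      (L * ‖p.1 - p.2‖ - F * ‖p.1 - p.2‖ ^ 2)) := by fun_prop
    have h4 : Continuous (fun p : EuclideanSpace ℝ (Fin N) × EuclideanSpace ℝ (Fin N) =>
      0 * ‖p.1 - 0‖ ^ 2) := by fun_prop
    have h5 : Continuous (fun p : EuclideanSpace ℝ (Fin N) × EuclideanSpace ℝ (Fin N) =>
      0 * ‖p.2 - 0‖ ^ 2) := by fun_prop
    exact (((h1.sub h2).sub h3.continuousOn).sub h4.continuousOn).sub h5.continuousOn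
  have h0 : (0 : EuclideanSpace ℝ (Fin N)) ∈ closedBall (0 : EuclideanSpace ℝ (Fin N)) 1 :=
    mem_closedBall_self zero_le_one
  obtain ⟨⟨x, y⟩, ⟨hxm, hym⟩, hmax⟩ := ((isCompact_closedBall _ _).prod
    (isCompact_closedBall _ _)).exists_isMaxOn ⟨(0, 0), h0, h0⟩ hFc
  simp only at hxm hym
  have hM' : ∀ p q, p ∈ closedBall 0 1 → q ∈ closedBall 0 1 → Fn (p, q) ≤ Fn (x, y) :=
    fun p q hp hq => hmax (show (p, q) ∈ closedBall 0 1 ×ˢ closedBall 0 1 from ⟨hp, hq⟩)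
  have hdist : ‖x - y‖ ≤ 2 := by
    have := dist_triangle_right x y 0
    rw [mem_closedBall] at hxm hym
    rw [← dist_eq_norm]; linarith
  have hle : Fn (x, y) ≤ 0 := by
    rcases eq_or_ne x y with rfl | hne
    · simp [hFn]
    exfalso
    have hslope : M < L - 2 * F * ‖x - y‖ := by rw [hL]; nlinarith
    have hxl : x ∈ ball (0 : EuclideanSpace ℝ (Fin N)) 1 := by
      by_contra hx
      have hxs : x ∈ sphere (0 : EuclideanSpace ℝ (Fin N)) 1 := by
        simp only [mem_closedBall, mem_sphere, mem_ball, not_lt] at *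
        exact le_antisymm hxm hx
      have := boundary_slope (L := L) (Q := F) hxm hym
        ((hv.differentiableOn (by norm_num)) x hxm) hne (fun z hz => by
          have := hM' z y hz hym
          simp only [hFn] at this
          linarith)
      linarith [hb x hxs]
    have hyl : y ∈ ball (0 : EuclideanSpace ℝ (Fin N)) 1 := by
      by_contra hy
      have hys : y ∈ sphere (0 : EuclideanSpace ℝ (Fin N)) 1 := by
        simp only [mem_closedBall, mem_sphere, mem_ball, not_lt] at *
        exact le_antisymm hym hy
      have := boundary_slope (v := fun z => -v z) (L := L) (Q := F) hym hxm
        ((hv.differentiableOn (by norm_num)) y hym).neg hne.symm (fun z hz => by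
          have := hM' x z hxm hz
          simp only [hFn, norm_sub_rev x z, norm_sub_rev x y] at this
          linarith)
      rw [fderivWithin_fun_neg, norm_neg, norm_sub_rev] at this
      · linarith [hb y hys]
      · refine uniqueDiffOn_convex (convex_closedBall _ _) ⟨0, ?_⟩ y hym
        exact interior_mono ball_subset_closedBall
          (by rw [isOpen_ball.interior_eq]; exact mem_ball_self one_pos)
    have hnhds : closedBall 0 1 ×ˢ closedBall 0 1 ∈ nhds (x, y) :=
      prod_mem_nhds (mem_of_superset (isOpen_ball.mem_nhds hxl) ball_subset_closedBall)
        (mem_of_superset (isOpen_ball.mem_nhds hyl) ball_subset_closedBall)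
    have := doubling_interior (hC x hxl) (hC y hyl) hne (hmax.isLocalMax hnhds)
    have h1 := abs_le.1 (hl x hxl)
    have h2 := abs_le.1 (hl y hyl)
    linarith
  intro z hz
  refine ((hC z hz).differentiableAt (by norm_num)).hasFDerivAt.le_of_lip' (by positivity) ?_
  filter_upwards [isOpen_ball.mem_nhds hz] with z' hz'
  have h1 := (hM' z z' (ball_subset_closedBall hz) (ball_subset_closedBall hz')).trans hle
  have h2 := (hM' z' z (ball_subset_closedBall hz') (ball_subset_closedBall hz)).trans hle
  simp only [hFn, norm_sub_rev z z'] at h1 h2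
  have h4 : 0 ≤ F * ‖z' - z‖ ^ 2 := by positivity
  rw [Real.norm_eq_abs, abs_le]
  constructor <;> nlinarith

/-! ### Polynomial Laplacian -/

/-- The Laplacian of a polynomial, as a polynomial. -/
noncomputable def polyLap {N : ℕ} (p : MvPolynomial (Fin N) ℝ) : MvPolynomial (Fin N) ℝ :=
  ∑ i, MvPolynomial.pderiv i (MvPolynomial.pderiv i p)

lemma polyLap_sum {N : ℕ} {ι : Type} [Fintype ι] (f : ι → MvPolynomial (Fin N) ℝ) :
    polyLap (∑ j, f j) = ∑ j, polyLap (f j) := by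
  simp only [polyLap, map_sum]
  exact Finset.sum_comm

lemma polyLap_C_mul {N : ℕ} (c : ℝ) (p : MvPolynomial (Fin N) ℝ) :
    polyLap (MvPolynomial.C c * p) = MvPolynomial.C c * polyLap p := by
  simp [polyLap, Finset.mul_sum]

lemma polyLap_sub {N : ℕ} (p q : MvPolynomial (Fin N) ℝ) :
    polyLap (p - q) = polyLap p - polyLap q := by
  simp [polyLap]

lemma polyLap_add {N : ℕ} (p q : MvPolynomial (Fin N) ℝ) :
    polyLap (p + q) = polyLap p + polyLap q := by
  simp [polyLap, Finset.sum_add_distrib]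

lemma contDiff_eval {N : ℕ} (p : MvPolynomial (Fin N) ℝ) :
    ContDiff ℝ 2 (fun y : EuclideanSpace ℝ (Fin N) => MvPolynomial.eval (fun i => y i) p) := by
  induction p using MvPolynomial.induction_on with
  | C a => simpa using contDiff_const
  | add p q hp hq => simpa using hp.add hq
  | mul_X p i hp =>
    simp only [map_mul, MvPolynomial.eval_X]
    exact hp.mul (by fun_prop)

lemma hasFDerivAt_eval {N : ℕ} (p : MvPolynomial (Fin N) ℝ) (x : EuclideanSpace ℝ (Fin N)) :
    HasFDerivAt (fun y : EuclideanSpace ℝ (Fin N) => MvPolynomial.eval (fun i => y i) p)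
      (∑ i, MvPolynomial.eval (fun i => x i) (MvPolynomial.pderiv i p) •
        EuclideanSpace.proj (𝕜 := ℝ) i) x := by
  induction p using MvPolynomial.induction_on with
  | C a => simpa using hasFDerivAt_const a x
  | add p q hp hq =>
    simp only [map_add, add_smul, Finset.sum_add_distrib]
    exact hp.add hq
  | mul_X p i hp =>
    simp only [map_mul, MvPolynomial.eval_X]
    have h : HasFDerivAt (fun y : EuclideanSpace ℝ (Fin N) => y i)
      (EuclideanSpace.proj (𝕜 := ℝ) i) x := (EuclideanSpace.proj (𝕜 := ℝ) i).hasFDerivAt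
    refine (hp.mul h).congr_fderiv ?_
    ext d
    have h1 : ∀ j, MvPolynomial.eval (fun i => x i) (MvPolynomial.pderiv j
        (p * MvPolynomial.X i)) = MvPolynomial.eval (fun i => x i) p * (if i = j then 1 else 0)
        + x i * MvPolynomial.eval (fun i => x i) (MvPolynomial.pderiv j p) := by
      intro j
      rw [Derivation.leibniz, MvPolynomial.pderiv_X, Pi.single_apply]
      simp [apply_ite]
    simp only [h1, add_smul, Finset.sum_add_distrib]
    simp [Finset.mul_sum, mul_assoc]

lemma laplacian_eval {N : ℕ} (p : MvPolynomial (Fin N) ℝ) (x : EuclideanSpace ℝ (Fin N)) :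
    laplacian (fun y : EuclideanSpace ℝ (Fin N) => MvPolynomial.eval (fun i => y i) p) x
      = MvPolynomial.eval (fun i => x i) (polyLap p) := by
  rw [laplacian_of_fderiv (Eventually.of_forall fun z => hasFDerivAt_eval p z)
    (HasFDerivAt.fun_sum fun i _ => HasFDerivAt.smul_const
      (hasFDerivAt_eval (MvPolynomial.pderiv i p) x) (EuclideanSpace.proj (𝕜 := ℝ) i))]
  simp [polyLap]

/-! ### The polynomial expansion of the fundamental solution -/

section kernel

variable {N : ℕ}

/-- The linear form `x ↦ x · y`. -/
noncomputable def linF (y : EuclideanSpace ℝ (Fin N)) : MvPolynomial (Fin N) ℝ :=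
  ∑ i, MvPolynomial.C (y i) * MvPolynomial.X i

/-- The quadratic form `x ↦ ‖y‖² ‖x‖²`. -/
noncomputable def quadF (y : EuclideanSpace ℝ (Fin N)) : MvPolynomial (Fin N) ℝ :=
  MvPolynomial.C (‖y‖ ^ 2) * ∑ i, MvPolynomial.X i ^ 2

/-- `μ = N - 2`, twice the Gegenbauer index. -/
noncomputable def mu (N : ℕ) : ℝ := N - 2

/-- The solid zonal harmonics `‖x‖ᵏ ‖y‖ᵏ C_k^λ(cos θ) / (2λ)`, `λ = (N - 2)/2`, through the
three-term recurrence; with this normalisation the case `N = 2` is the limit `λ → 0`.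
The term of degree `0`, which that limit does not reach, is set to `0`. -/
noncomputable def pol (y : EuclideanSpace ℝ (Fin N)) : ℕ → MvPolynomial (Fin N) ℝ
  | 0 => 0
  | 1 => linF y
  | 2 => MvPolynomial.C (1 + mu N / 2) * linF y ^ 2 - MvPolynomial.C (1 / 2) * quadF y
  | (k + 3) => MvPolynomial.C (1 / ((k : ℝ) + 3)) *
      (MvPolynomial.C (2 * (k + 2) + mu N) * (linF y * pol y (k + 2))
        - MvPolynomial.C (k + 1 + mu N) * (quadF y * pol y (k + 1)))

/-- The values of `pol` as functions of `u = x · y` and `r = ‖x‖² ‖y‖²`. -/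
noncomputable def polVal (N : ℕ) (u r : ℝ) : ℕ → ℝ
  | 0 => 0
  | 1 => u
  | 2 => (1 + mu N / 2) * u ^ 2 - 1 / 2 * r
  | (k + 3) => 1 / ((k : ℝ) + 3) *
      ((2 * (k + 2) + mu N) * (u * polVal N u r (k + 2))
        - (k + 1 + mu N) * (r * polVal N u r (k + 1)))

lemma eval_linF (y x : EuclideanSpace ℝ (Fin N)) :
    MvPolynomial.eval (fun i => x i) (linF y) = inner ℝ x y := by
  simp [linF, PiLp.inner_apply]

lemma eval_quadF (y x : EuclideanSpace ℝ (Fin N)) :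
    MvPolynomial.eval (fun i => x i) (quadF y) = ‖x‖ ^ 2 * ‖y‖ ^ 2 := by
  simp [quadF, EuclideanSpace.norm_sq_eq x, mul_comm]

lemma eval_pol (y x : EuclideanSpace ℝ (Fin N)) (k : ℕ) :
    MvPolynomial.eval (fun i => x i) (pol y k)
      = polVal N (inner ℝ x y) (‖x‖ ^ 2 * ‖y‖ ^ 2) k := by
  induction k using Nat.strong_induction_on with
  | _ k ih =>
    match k with
    | 0 => simp [pol, polVal]
    | 1 => simp [pol, polVal, eval_linF]
    | 2 => simp [pol, polVal, eval_linF, eval_quadF]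
    | (k + 3) =>
      simp only [pol, polVal, map_mul, map_sub, MvPolynomial.eval_C, eval_linF, eval_quadF,
        ih (k + 2) (by lia), ih (k + 1) (by lia)]

/-- Derivative in the direction `y`. -/
noncomputable def dirD (y : EuclideanSpace ℝ (Fin N)) :
    Derivation ℝ (MvPolynomial (Fin N) ℝ) (MvPolynomial (Fin N) ℝ) :=
  ∑ i, (MvPolynomial.C (y i) : MvPolynomial (Fin N) ℝ) • MvPolynomial.pderiv i

/-- The Euler field `∑ xᵢ ∂ᵢ`. -/
noncomputable def eulerD : Derivation ℝ (MvPolynomial (Fin N) ℝ) (MvPolynomial (Fin N) ℝ) :=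
  ∑ i, (MvPolynomial.X i : MvPolynomial (Fin N) ℝ) • MvPolynomial.pderiv i

lemma dirD_apply (y : EuclideanSpace ℝ (Fin N)) (p : MvPolynomial (Fin N) ℝ) :
    dirD y p = ∑ i, MvPolynomial.C (y i) * MvPolynomial.pderiv i p := by
  have : ∀ s : Finset (Fin N), (∑ i ∈ s, (MvPolynomial.C (y i) : MvPolynomial (Fin N) ℝ) •
      MvPolynomial.pderiv i : Derivation ℝ (MvPolynomial (Fin N) ℝ) (MvPolynomial (Fin N) ℝ)) p
      = ∑ i ∈ s, MvPolynomial.C (y i) * MvPolynomial.pderiv i p := by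
    intro s
    induction s using Finset.induction_on with
    | empty => simp
    | insert a s ha ih => simp [Finset.sum_insert ha, ih]
  exact this _

lemma eulerD_apply (p : MvPolynomial (Fin N) ℝ) :
    eulerD p = ∑ i, MvPolynomial.X i * MvPolynomial.pderiv i p := by
  have : ∀ s : Finset (Fin N), (∑ i ∈ s, (MvPolynomial.X i : MvPolynomial (Fin N) ℝ) •
      MvPolynomial.pderiv i : Derivation ℝ (MvPolynomial (Fin N) ℝ) (MvPolynomial (Fin N) ℝ)) p
      = ∑ i ∈ s, MvPolynomial.X i * MvPolynomial.pderiv i p := by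
    intro s
    induction s using Finset.induction_on with
    | empty => simp
    | insert a s ha ih => simp [Finset.sum_insert ha, ih]
  exact this _

lemma pderiv_linF (y : EuclideanSpace ℝ (Fin N)) (i : Fin N) :
    MvPolynomial.pderiv i (linF y) = MvPolynomial.C (y i) := by
  simp [linF, MvPolynomial.pderiv_X, Pi.single_apply]

lemma pderiv_quadF (y : EuclideanSpace ℝ (Fin N)) (i : Fin N) :
    MvPolynomial.pderiv i (quadF y)
      = MvPolynomial.C (‖y‖ ^ 2) * (2 * MvPolynomial.X i) := by
  simp [quadF, MvPolynomial.pderiv_X, Pi.single_apply, Derivation.leibniz_pow]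

lemma sum_C_sq (y : EuclideanSpace ℝ (Fin N)) :
    ∑ i, (MvPolynomial.C (y i) : MvPolynomial (Fin N) ℝ) * MvPolynomial.C (y i)
      = MvPolynomial.C (‖y‖ ^ 2) := by
  rw [EuclideanSpace.norm_sq_eq, map_sum]
  simp [pow_two]

lemma dirD_linF (y : EuclideanSpace ℝ (Fin N)) :
    dirD y (linF y) = MvPolynomial.C (‖y‖ ^ 2) := by
  simp only [dirD_apply, pderiv_linF, sum_C_sq]

lemma dirD_quadF (y : EuclideanSpace ℝ (Fin N)) :
    dirD y (quadF y) = 2 * MvPolynomial.C (‖y‖ ^ 2) * linF y := by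
  simp only [dirD_apply, pderiv_quadF, linF, Finset.mul_sum]
  exact Finset.sum_congr rfl fun i _ => by ring

lemma eulerD_linF (y : EuclideanSpace ℝ (Fin N)) : eulerD (linF y) = linF y := by
  simp only [eulerD_apply, pderiv_linF]
  rw [linF]
  exact Finset.sum_congr rfl fun i _ => by ring

lemma eulerD_quadF (y : EuclideanSpace ℝ (Fin N)) : eulerD (quadF y) = 2 * quadF y := by
  simp only [eulerD_apply, pderiv_quadF]
  simp only [quadF, Finset.mul_sum]
  exact Finset.sum_congr rfl fun i _ => by ring

lemma polyLap_linF_mul (y : EuclideanSpace ℝ (Fin N)) (p : MvPolynomial (Fin N) ℝ) :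
    polyLap (linF y * p) = linF y * polyLap p + 2 * dirD y p := by
  simp only [polyLap, dirD_apply, Derivation.leibniz, pderiv_linF, map_add, smul_eq_mul,
    MvPolynomial.pderiv_C, Finset.mul_sum, ← Finset.sum_add_distrib]
  exact Finset.sum_congr rfl fun i _ => by ring

lemma polyLap_quadF_mul (y : EuclideanSpace ℝ (Fin N)) (p : MvPolynomial (Fin N) ℝ) :
    polyLap (quadF y * p) = quadF y * polyLap p
      + MvPolynomial.C (‖y‖ ^ 2) * (2 * (N : MvPolynomial (Fin N) ℝ) * p + 4 * eulerD p) := by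
  have h2 : ∀ i : Fin N, MvPolynomial.pderiv i (2 : MvPolynomial (Fin N) ℝ) = 0 := fun i => by
    rw [← map_ofNat MvPolynomial.C 2, MvPolynomial.pderiv_C]
  have hN : (2 * (N : MvPolynomial (Fin N) ℝ) * p) = ∑ i : Fin N, 2 * p := by
    simp [mul_assoc, mul_left_comm]
  simp only [hN, polyLap, eulerD_apply, Derivation.leibniz, pderiv_quadF, map_add, smul_eq_mul,
    MvPolynomial.pderiv_C, Finset.mul_sum, ← Finset.sum_add_distrib, h2,
    MvPolynomial.pderiv_X_self]
  exact Finset.sum_congr rfl fun i _ => by ring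

lemma C_ofNat_two : (MvPolynomial.C 2 : MvPolynomial (Fin N) ℝ) = 2 := map_ofNat _ 2

lemma C_ofNat_three : (MvPolynomial.C 3 : MvPolynomial (Fin N) ℝ) = 3 := map_ofNat _ 3

lemma pol_succ_mul (y : EuclideanSpace ℝ (Fin N)) (k : ℕ) :
    ((k : MvPolynomial (Fin N) ℝ) + 3) * pol y (k + 3)
      = (2 * ((k : MvPolynomial (Fin N) ℝ) + 2) + MvPolynomial.C (mu N)) * (linF y * pol y (k + 2))
        - ((k : MvPolynomial (Fin N) ℝ) + 1 + MvPolynomial.C (mu N)) * (quadF y * pol y (k + 1)) := by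
  have hC : ((k : MvPolynomial (Fin N) ℝ) + 3) = MvPolynomial.C ((k : ℝ) + 3) := by
    simp [C_ofNat_three]
  have h3 : ((k : ℝ) + 3) * (1 / ((k : ℝ) + 3)) = 1 := by
    have : ((k : ℝ) + 3) ≠ 0 := by positivity
    field_simp
  rw [pol, hC, ← mul_assoc, ← map_mul, h3, map_one, one_mul]
  simp [C_ofNat_two]

lemma pol_two_mul (y : EuclideanSpace ℝ (Fin N)) :
    2 * pol y 2 = (2 + MvPolynomial.C (mu N)) * linF y ^ 2 - quadF y := by
  have h1 : (2 : MvPolynomial (Fin N) ℝ) * MvPolynomial.C (1 + mu N / 2)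
      = 2 + MvPolynomial.C (mu N) := by
    rw [← C_ofNat_two, ← map_mul, ← map_add]
    congr 1
    ring
  have h2 : (2 : MvPolynomial (Fin N) ℝ) * MvPolynomial.C (1 / 2) = 1 := by
    rw [← C_ofNat_two, ← map_mul]
    norm_num
  rw [pol]
  linear_combination linF y ^ 2 * h1 - quadF y * h2

lemma natCast_add_ne_zero (k : ℕ) : ((k : MvPolynomial (Fin N) ℝ) + 3) ≠ 0 := by
  exact_mod_cast (by lia : k + 3 ≠ 0)

lemma eulerD_pol (y : EuclideanSpace ℝ (Fin N)) (k : ℕ) : eulerD (pol y k) = k * pol y k := by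
  induction k using Nat.strong_induction_on with
  | _ k ih =>
    match k with
    | 0 => simp [pol]
    | 1 => simp [pol, eulerD_linF]
    | 2 =>
      simp only [pol, map_sub, Derivation.leibniz, Derivation.leibniz_pow, eulerD_linF,
        eulerD_quadF, MvPolynomial.derivation_C]
      simp
      ring
    | (k + 3) =>
      have h := congrArg eulerD (pol_succ_mul y k)
      have h0 := pol_succ_mul y k
      have e1 : eulerD ((k : MvPolynomial (Fin N) ℝ)) = 0 := Derivation.map_natCast _ _
      have e2 : eulerD (1 : MvPolynomial (Fin N) ℝ) = 0 := Derivation.map_one_eq_zero _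
      have e3 : eulerD (2 : MvPolynomial (Fin N) ℝ) = 0 := by
        exact_mod_cast Derivation.map_natCast (eulerD (N := N)) 2
      have e4 : eulerD (3 : MvPolynomial (Fin N) ℝ) = 0 := by
        exact_mod_cast Derivation.map_natCast (eulerD (N := N)) 3
      simp only [map_sub, Derivation.leibniz, map_add, e1, e2, e3, e4, eulerD_linF,
        eulerD_quadF, MvPolynomial.derivation_C, ih (k + 2) (by lia), ih (k + 1) (by lia),
        smul_eq_mul] at h
      apply mul_left_cancel₀ (natCast_add_ne_zero (N := N) k)
      push_cast at h ⊢
      linear_combination h - ((k : MvPolynomial (Fin N) ℝ) + 3) * h0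

lemma dirD_pol (y : EuclideanSpace ℝ (Fin N)) (k : ℕ) :
    dirD y (pol y (k + 2)) = ((k : MvPolynomial (Fin N) ℝ) + 1 + MvPolynomial.C (mu N)) * MvPolynomial.C (‖y‖ ^ 2)
      * pol y (k + 1) := by
  have e1 : ∀ k : ℕ, dirD y ((k : MvPolynomial (Fin N) ℝ)) = 0 := fun k =>
    Derivation.map_natCast _ _
  have e2 : dirD y (1 : MvPolynomial (Fin N) ℝ) = 0 := Derivation.map_one_eq_zero _
  have e3 : dirD y (2 : MvPolynomial (Fin N) ℝ) = 0 := by exact_mod_cast e1 2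
  have e4 : dirD y (3 : MvPolynomial (Fin N) ℝ) = 0 := by exact_mod_cast e1 3
  have hd2 : dirD y (pol y 2)
      = (1 + MvPolynomial.C (mu N)) * MvPolynomial.C (‖y‖ ^ 2) * pol y 1 := by
    have h := congrArg (dirD y) (pol_two_mul y)
    simp only [map_sub, Derivation.leibniz, Derivation.leibniz_pow, map_add, e3, dirD_linF,
      dirD_quadF, MvPolynomial.derivation_C, smul_eq_mul] at h
    apply mul_left_cancel₀ (two_ne_zero : (2 : MvPolynomial (Fin N) ℝ) ≠ 0)
    have hp1 : pol y 1 = linF y := rfl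
    simp only [add_zero, Nat.add_one_sub_one, pow_one, nsmul_eq_mul,
      Nat.cast_ofNat] at h
    rw [hp1]
    linear_combination h
  induction k using Nat.strong_induction_on with
  | _ k ih =>
    match k with
    | 0 => simpa using hd2
    | 1 =>
      have h := congrArg (dirD y) (pol_succ_mul y 0)
      have h0 := pol_two_mul y
      simp only [map_sub, Derivation.leibniz, map_add, e1, e2, e3, e4, dirD_linF,
        dirD_quadF, MvPolynomial.derivation_C, hd2, smul_eq_mul, zero_add] at h
      apply mul_left_cancel₀ (natCast_add_ne_zero (N := N) 0)
      have hp1 : pol y 1 = linF y := rfl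
      rw [hp1] at h
      rw [dirD_linF] at h
      push_cast at h ⊢
      linear_combination h - (1 + MvPolynomial.C (mu N)) * MvPolynomial.C (‖y‖ ^ 2) * h0
    | (k + 2) =>
      have h := congrArg (dirD y) (pol_succ_mul y (k + 1))
      have h0 := pol_succ_mul y k
      simp only [map_sub, Derivation.leibniz, map_add, e1, e2, e3, e4, dirD_linF,
        dirD_quadF, MvPolynomial.derivation_C, ih (k + 1) (by lia), ih k (by lia),
        smul_eq_mul, show k + 1 + 1 = k + 2 from rfl] at h
      apply mul_left_cancel₀ (natCast_add_ne_zero (N := N) (k + 1))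
      push_cast at h ⊢
      simp only [show k + 1 + 3 = k + 4 from rfl, show k + 1 + 2 = k + 3 from rfl] at h ⊢
      linear_combination h - (k + 2 + MvPolynomial.C (mu N)) * MvPolynomial.C (‖y‖ ^ 2) * h0

lemma polyLap_natCast_mul (k : ℕ) (p : MvPolynomial (Fin N) ℝ) :
    polyLap ((k : MvPolynomial (Fin N) ℝ) * p) = k * polyLap p := by
  have : (k : MvPolynomial (Fin N) ℝ) = MvPolynomial.C (k : ℝ) := by simp
  rw [this, polyLap_C_mul]

/-- The polynomials of the expansion are harmonic. -/
lemma polyLap_pol (y : EuclideanSpace ℝ (Fin N)) (k : ℕ) : polyLap (pol y k) = 0 := by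
  have hmu : (N : MvPolynomial (Fin N) ℝ) = MvPolynomial.C (mu N) + 2 := by
    simp [mu, C_ofNat_two]
  have hl : polyLap (linF y) = 0 := by simp [polyLap, pderiv_linF]
  induction k using Nat.strong_induction_on with
  | _ k ih =>
    match k with
    | 0 => simp [pol, polyLap]
    | 1 => simpa [pol] using hl
    | 2 =>
      have h1 := polyLap_linF_mul y (linF y)
      have h2 := polyLap_quadF_mul y 1
      have h3 : eulerD (1 : MvPolynomial (Fin N) ℝ) = 0 := Derivation.map_one_eq_zero _
      have h4 : polyLap (1 : MvPolynomial (Fin N) ℝ) = 0 := by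
        simp [polyLap]
      rw [hl, dirD_linF] at h1
      rw [h3, h4, mul_one, hmu] at h2
      apply mul_left_cancel₀ (two_ne_zero : (2 : MvPolynomial (Fin N) ℝ) ≠ 0)
      have hh := polyLap_natCast_mul 2 (pol y 2)
      push_cast at hh
      have e : (2 + MvPolynomial.C (mu N) : MvPolynomial (Fin N) ℝ)
        = MvPolynomial.C (2 + mu N) := by simp [C_ofNat_two]
      rw [← hh, pol_two_mul, polyLap_sub, h2, e, polyLap_C_mul, pow_two, h1, ← e]
      ring
    | (k + 3) =>
      apply mul_left_cancel₀ (natCast_add_ne_zero (N := N) k)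
      have hh := polyLap_natCast_mul (k + 3) (pol y (k + 3))
      push_cast at hh
      have e : (2 * ((k : MvPolynomial (Fin N) ℝ) + 2) + MvPolynomial.C (mu N) : MvPolynomial (Fin N) ℝ)
        = MvPolynomial.C (2 * (k + 2) + mu N) := by simp [C_ofNat_two]
      have e' : ((k : MvPolynomial (Fin N) ℝ) + 1 + MvPolynomial.C (mu N) : MvPolynomial (Fin N) ℝ)
        = MvPolynomial.C (k + 1 + mu N) := by simp
      rw [← hh, pol_succ_mul, polyLap_sub, e, e', polyLap_C_mul, polyLap_C_mul, polyLap_linF_mul,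
        polyLap_quadF_mul, ih (k + 2) (by lia), ih (k + 1) (by lia), ← e, ← e', dirD_pol,
        eulerD_pol, hmu]
      push_cast
      ring

end kernel

/-! ### Size of the coefficients -/

/-- The Taylor coefficients `s (s + 1) ⋯ (s + n - 1) / n!` of `(1 - z)^(-s)`. -/
noncomputable def rc (s : ℝ) : ℕ → ℝ
  | 0 => 1
  | (n + 1) => rc s n * (s + n) / (n + 1)

lemma rc_succ_mul (s : ℝ) (n : ℕ) : (n + 1) * rc s (n + 1) = (s + n) * rc s n := by
  have : (n : ℝ) + 1 ≠ 0 := by positivity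
  rw [rc]; field_simp

lemma rc_nonneg {s : ℝ} (hs : 0 ≤ s) (n : ℕ) : 0 ≤ rc s n := by
  induction n with
  | zero => simp [rc]
  | succ n ih => rw [rc]; positivity

lemma rc_shift (s : ℝ) (n : ℕ) : (n + 1) * rc s (n + 1) = s * rc (s + 1) n := by
  induction n with
  | zero => simp [rc]
  | succ n ih =>
    have h1 := rc_succ_mul s (n + 1)
    have h2 := rc_succ_mul (s + 1) n
    have : (n : ℝ) + 1 ≠ 0 := by positivity
    push_cast at *
    apply mul_left_cancel₀ this
    linear_combination (n + 1) * h1 + (s + n + 1) * ih - s * h2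

lemma rc_diff (s : ℝ) (n : ℕ) : rc (s + 1) (n + 1) - rc (s + 1) n = rc s (n + 1) := by
  have h1 := rc_shift s n
  have h2 := rc_succ_mul (s + 1) n
  have : (n : ℝ) + 1 ≠ 0 := by positivity
  apply mul_left_cancel₀ this
  linear_combination h2 - h1

/-- The binomial series `(1 - W X)^(-s)`. -/
noncomputable def gser (s : ℝ) (W : ℂ) : PowerSeries ℂ := PowerSeries.mk fun n => (rc s n : ℂ) * W ^ n

lemma gser_ode (s : ℝ) (W : ℂ) :
    (1 - PowerSeries.C W * PowerSeries.X) * PowerSeries.derivative ℂ (gser s W)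
      = PowerSeries.C (s * W) * gser s W := by
  ext n
  have h : ∀ n : ℕ, ((n : ℂ) + 1) * (rc s (n + 1) : ℂ) = (s + n) * rc s n := fun n => by
    exact_mod_cast congrArg (fun t : ℝ => (t : ℂ)) (rc_succ_mul s n)
  rw [sub_mul, one_mul, mul_assoc]
  cases n with
  | zero =>
    have := h 0
    rw [map_sub, PowerSeries.coeff_C_mul, PowerSeries.coeff_zero_X_mul, PowerSeries.coeff_C_mul,
      PowerSeries.coeff_derivative, gser, PowerSeries.coeff_mk, PowerSeries.coeff_mk]
    push_cast at this ⊢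
    linear_combination W * this
  | succ n =>
    have := h (n + 1)
    rw [map_sub, PowerSeries.coeff_C_mul, PowerSeries.coeff_succ_X_mul, PowerSeries.coeff_C_mul,
      PowerSeries.coeff_derivative, PowerSeries.coeff_derivative, gser, PowerSeries.coeff_mk,
      PowerSeries.coeff_mk]
    push_cast at this ⊢
    linear_combination W ^ (n + 2) * this

lemma gser_succ (s : ℝ) (W : ℂ) :
    (1 - PowerSeries.C W * PowerSeries.X) * gser (s + 1) W = gser s W := by
  ext n
  rw [sub_mul, one_mul, mul_assoc]
  cases n with
  | zero => simp [gser, rc]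
  | succ n =>
    have := congrArg (fun t : ℝ => (t : ℂ)) (rc_diff s n)
    simp [gser, PowerSeries.coeff_C_mul, PowerSeries.coeff_succ_X_mul] at this ⊢
    linear_combination W ^ (n + 1) * this

lemma rc_conv (s t : ℝ) (n : ℕ) :
    ∑ p ∈ Finset.HasAntidiagonal.antidiagonal n, rc s p.1 * rc t p.2 = rc (s + t) n := by
  set F := gser s 1 * gser t 1 with hF
  have hode : (1 - PowerSeries.X) * PowerSeries.derivative ℂ F
      = PowerSeries.C ((s : ℂ) + t) * F := by
    have h1 := gser_ode s 1
    have h2 := gser_ode t 1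
    simp only [map_one, one_mul, mul_one] at h1 h2
    rw [hF, Derivation.leibniz, map_add, smul_eq_mul, smul_eq_mul]
    linear_combination gser t 1 * h1 + gser s 1 * h2
  have hcoef : ∀ n, PowerSeries.coeff n F = rc (s + t) n := by
    intro n
    induction n with
    | zero => simp [hF, gser, rc]
    | succ n ih =>
      have h1 := congrArg (PowerSeries.coeff n) hode
      have h2 := congrArg (fun t : ℝ => (t : ℂ)) (rc_succ_mul (s + t) n)
      have h3 : ((n : ℂ) + 1) ≠ 0 := by exact_mod_cast Nat.succ_ne_zero n
      apply mul_left_cancel₀ h3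
      rw [sub_mul, one_mul, map_sub, PowerSeries.coeff_C_mul, ih] at h1
      push_cast at h2
      cases n with
      | zero =>
        rw [PowerSeries.coeff_zero_X_mul, PowerSeries.coeff_derivative] at h1
        push_cast at h1 h2 ⊢
        linear_combination h1 - h2
      | succ n =>
        rw [PowerSeries.coeff_succ_X_mul, PowerSeries.coeff_derivative,
          PowerSeries.coeff_derivative, ih] at h1
        push_cast at h1 h2 ⊢
        linear_combination h1 - h2
  have := hcoef n
  rw [hF, PowerSeries.coeff_mul] at this
  simp [gser] at this
  exact_mod_cast this

lemma rc_le (j n : ℕ) : rc ((j : ℝ) + 1) n ≤ ((n : ℝ) + 1) ^ j := by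
  induction n with
  | zero => simp [rc]
  | succ n ih =>
    have hpos : (0:ℝ) < n + 1 := by positivity
    have hb : 1 + (j : ℝ) * (1 / (n + 1)) ≤ (1 + 1 / ((n:ℝ) + 1)) ^ j :=
      one_add_mul_le_pow (by have : 0 < 1 / ((n:ℝ) + 1) := by positivity
                             linarith) j
    calc rc ((j : ℝ) + 1) (n + 1) = rc ((j : ℝ) + 1) n * (1 + j * (1 / (n + 1))) := by
          rw [rc]; field_simp; ring
      _ ≤ ((n : ℝ) + 1) ^ j * (1 + 1 / ((n:ℝ) + 1)) ^ j := by
          gcongr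
      _ = (((n + 1 : ℕ) : ℝ) + 1) ^ j := by
          rw [← mul_pow]; congr 1; push_cast; field_simp

/-- The generating series `∑ (k + 1) polVal (k + 1) Xᵏ`, factored over `ℂ`. -/
noncomputable def tser (m : ℝ) (W V : ℂ) : PowerSeries ℂ :=
  PowerSeries.C (1 / 2) * (PowerSeries.C W * (gser (m / 2 + 1) W * gser (m / 2) V)
    + PowerSeries.C V * (gser (m / 2 + 1) V * gser (m / 2) W))

/-- Both sides satisfy the three-term recurrence of the Gegenbauer polynomials. -/
lemma polVal_eq_coeff (N : ℕ) {u r : ℝ} {W V : ℂ} (hsum : W + V = 2 * u) (hmul : W * V = r)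
    (k : ℕ) : ((k : ℂ) + 1) * polVal N u r (k + 1) = PowerSeries.coeff k (tser (mu N) W V) := by
  set m := mu N with hm
  set T := tser m W V with hT
  set E := gser (m / 2) W * gser (m / 2) V with hE
  set Q : PowerSeries ℂ := (1 - PowerSeries.C W * PowerSeries.X)
    * (1 - PowerSeries.C V * PowerSeries.X) with hQ
  have hQ0 : Q ≠ 0 := by
    intro h
    have := congrArg PowerSeries.constantCoeff h
    simp [hQ] at this
  have hC2 : (PowerSeries.C (1 / 2 : ℂ)) * 2 = 1 := by
    rw [show (2 : PowerSeries ℂ) = PowerSeries.C 2 from (map_ofNat PowerSeries.C 2).symm,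
      ← map_mul]
    norm_num
  have hCs : PowerSeries.C W + PowerSeries.C V = 2 * PowerSeries.C (u : ℂ) := by
    rw [show (2 : PowerSeries ℂ) = PowerSeries.C 2 from (map_ofNat PowerSeries.C 2).symm,
      ← map_mul, ← map_add, hsum]
  have hCm : PowerSeries.C W * PowerSeries.C V = PowerSeries.C (r : ℂ) := by
    rw [← map_mul, hmul]
  have hQT : Q * T = (PowerSeries.C (u : ℂ) - PowerSeries.C (r : ℂ) * PowerSeries.X) * E := by
    have h1 := gser_succ (m / 2) W
    have h2 := gser_succ (m / 2) V
    have e1 : PowerSeries.C W * (1 - PowerSeries.C V * PowerSeries.X)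
        + PowerSeries.C V * (1 - PowerSeries.C W * PowerSeries.X)
        = 2 * (PowerSeries.C (u : ℂ) - PowerSeries.C (r : ℂ) * PowerSeries.X) := by
      rw [← hCm]; linear_combination hCs
    calc Q * T = PowerSeries.C (1 / 2) * (PowerSeries.C W * (1 - PowerSeries.C V * PowerSeries.X)
          * (((1 - PowerSeries.C W * PowerSeries.X) * gser (m / 2 + 1) W) * gser (m / 2) V)
          + PowerSeries.C V * (1 - PowerSeries.C W * PowerSeries.X)
          * (((1 - PowerSeries.C V * PowerSeries.X) * gser (m / 2 + 1) V) * gser (m / 2) W)) := by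
          rw [hT, tser, hQ]; ring
      _ = PowerSeries.C (1 / 2) * ((PowerSeries.C W * (1 - PowerSeries.C V * PowerSeries.X)
        + PowerSeries.C V * (1 - PowerSeries.C W * PowerSeries.X)) * E) := by
          rw [h1, h2, hE]; ring
      _ = _ := by rw [e1]; linear_combination
                    ((PowerSeries.C (u : ℂ) - PowerSeries.C (r : ℂ) * PowerSeries.X) * E) * hC2
  have hEd : PowerSeries.derivative ℂ E = PowerSeries.C (m : ℂ) * T := by
    have h1 := gser_ode (m / 2) W
    have h2 := gser_ode (m / 2) V
    have hCm2 : (PowerSeries.C (((m / 2 : ℝ) : ℂ))) * 2 = PowerSeries.C (m : ℂ) := by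
      rw [show (2 : PowerSeries ℂ) = PowerSeries.C 2 from (map_ofNat PowerSeries.C 2).symm,
        ← map_mul]
      push_cast
      congr 1
      ring
    rw [map_mul] at h1 h2
    apply mul_left_cancel₀ hQ0
    have : Q * (PowerSeries.C (m : ℂ) * T) = PowerSeries.C (m : ℂ) * (Q * T) := by ring
    rw [this, hQT, hE, Derivation.leibniz, smul_eq_mul, smul_eq_mul, ← hCm2, ← hCm, hQ]
    linear_combination (1 - PowerSeries.C V * PowerSeries.X) * gser (m / 2) V * h1
      + (1 - PowerSeries.C W * PowerSeries.X) * gser (m / 2) W * h2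
      + PowerSeries.C (((m / 2 : ℝ) : ℂ)) * gser (m / 2) W * gser (m / 2) V * hCs
  have hE0 : PowerSeries.coeff 0 E = 1 := by simp [hE, gser, rc]
  have hEk : ∀ k : ℕ, ((k : ℂ) + 1) * PowerSeries.coeff (k + 1) E = m * PowerSeries.coeff k T := by
    intro k
    have := congrArg (PowerSeries.coeff k) hEd
    rw [PowerSeries.coeff_derivative, PowerSeries.coeff_C_mul] at this
    rw [mul_comm]; exact this
  have hQ' : Q = 1 - PowerSeries.C (2 * (u : ℂ)) * PowerSeries.X
      + PowerSeries.C (r : ℂ) * (PowerSeries.X * PowerSeries.X) := by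
    rw [← hsum, ← hmul, hQ]; simp only [map_add, map_mul]; ring
  have hT' : T - PowerSeries.C (2 * (u : ℂ)) * (PowerSeries.X * T)
      + PowerSeries.C (r : ℂ) * (PowerSeries.X * (PowerSeries.X * T))
      = PowerSeries.C (u : ℂ) * E - PowerSeries.C (r : ℂ) * (PowerSeries.X * E) := by
    rw [hQ'] at hQT; linear_combination hQT
  have hT0 : PowerSeries.coeff 0 T = u := by
    have := congrArg (PowerSeries.coeff 0) hT'
    simp only [map_add, map_sub, PowerSeries.coeff_C_mul, PowerSeries.coeff_zero_X_mul, hE0] at this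
    simpa using this
  have hT1 : PowerSeries.coeff 1 T = (2 + m) * u ^ 2 - r := by
    have := congrArg (PowerSeries.coeff 1) hT'
    have h2 := hEk 0
    have hX : ∀ F : PowerSeries ℂ, PowerSeries.coeff 1 (PowerSeries.X * F)
      = PowerSeries.coeff 0 F := fun F => PowerSeries.coeff_succ_X_mul 0 F
    rw [hT0] at h2
    simp only [map_add, map_sub, PowerSeries.coeff_C_mul, hX, PowerSeries.coeff_zero_X_mul, hE0,
      hT0] at this
    push_cast at this h2
    rw [zero_add, one_mul] at h2
    linear_combination this + u * h2
  have hTk : ∀ k, PowerSeries.coeff (k + 2) T - 2 * u * PowerSeries.coeff (k + 1) T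
      + r * PowerSeries.coeff k T
      = u * PowerSeries.coeff (k + 2) E - r * PowerSeries.coeff (k + 1) E := by
    intro k
    have := congrArg (PowerSeries.coeff (k + 2)) hT'
    simpa only [map_add, map_sub, PowerSeries.coeff_C_mul, PowerSeries.coeff_succ_X_mul] using this
  induction k using Nat.strong_induction_on with
  | _ k ih =>
    match k with
    | 0 => simp [polVal, hT0]
    | 1 =>
      rw [hT1, polVal, ← hm]; push_cast; ring
    | (k + 2) =>
      have h1 := ih (k + 1) (by lia)
      have h2 := ih k (by lia)
      have h3 := hTk k
      have h4 := hEk k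
      have h5 := hEk (k + 1)
      rw [← h1] at h3 h5
      rw [← h2] at h3 h4
      have n1 : ((k : ℂ) + 1) ≠ 0 := by exact_mod_cast Nat.succ_ne_zero k
      have n2 : ((k : ℂ) + 2) ≠ 0 := by exact_mod_cast (by lia : k + 2 ≠ 0)
      have n3 : ((k : ℂ) + 3) ≠ 0 := by exact_mod_cast (by lia : k + 3 ≠ 0)
      push_cast at h3 h4 h5
      have h4' : PowerSeries.coeff (k + 1) E = m * polVal N u r (k + 1) := by
        apply mul_left_cancel₀ n1; linear_combination h4
      have h5' : PowerSeries.coeff (k + 2) E = m * polVal N u r (k + 2) := by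
        apply mul_left_cancel₀ n2; linear_combination h5
      rw [h4', h5'] at h3
      rw [polVal, ← hm]
      push_cast
      have n4 : ((k : ℂ) + 2 + 1) ≠ 0 := by exact_mod_cast (by lia : k + 2 + 1 ≠ 0)
      have n5 : ((k : ℂ) + 2 + 1) * (1 / ((k : ℂ) + 3)) = 1 := by
        rw [show (k : ℂ) + 2 + 1 = k + 3 by ring]; field_simp
      rw [← mul_assoc, n5]
      linear_combination -h3

/-- The Gegenbauer bound `|C_k^λ| ≤ C_k^λ(1)`, with the growth of the right-hand side. -/
lemma polVal_bound {N : ℕ} (hN : 2 ≤ N) {u R : ℝ} (hR : 0 ≤ R) (hu : u ^ 2 ≤ R ^ 2) (k : ℕ) :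
    ((k : ℝ) + 1) * |polVal N u (R ^ 2) (k + 1)| ≤ ((k : ℝ) + 1) ^ (N - 2) * R ^ (k + 1) := by
  obtain ⟨j, rfl⟩ : ∃ j, N = j + 2 := ⟨N - 2, by lia⟩
  have hmu : mu (j + 2) = j := by simp [mu]
  set w := Real.sqrt (R ^ 2 - u ^ 2) with hw
  have hw2 : w ^ 2 = R ^ 2 - u ^ 2 := Real.sq_sqrt (by linarith)
  set W : ℂ := u + w * Complex.I with hW
  set V : ℂ := u - w * Complex.I with hV
  have hsum : W + V = 2 * u := by rw [hW, hV]; ring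
  have hw2' : (w : ℂ) ^ 2 = (R : ℂ) ^ 2 - (u : ℂ) ^ 2 := by exact_mod_cast hw2
  have hmul : W * V = ((R ^ 2 : ℝ) : ℂ) := by
    rw [hW, hV]; push_cast; linear_combination hw2' - (w:ℂ)^2 * Complex.I_sq
  have hnW : ‖W‖ = R := by
    rw [hW, Complex.norm_add_mul_I, ← Real.sqrt_sq hR]; congr 1; linarith
  have hnV : ‖V‖ = R := by
    have : V = u + ((-w : ℝ) : ℂ) * Complex.I := by rw [hV]; push_cast; ring
    rw [this, Complex.norm_add_mul_I, ← Real.sqrt_sq hR]; congr 1; linarith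
  have h := congrArg norm (polVal_eq_coeff (j + 2) hsum hmul k)
  have hl : ‖((k : ℂ) + 1) * (polVal (j + 2) u (R ^ 2) (k + 1) : ℂ)‖
      = ((k : ℝ) + 1) * |polVal (j + 2) u (R ^ 2) (k + 1)| := by
    rw [norm_mul, Complex.norm_real, Real.norm_eq_abs]
    congr 1
    have : ((k : ℂ) + 1) = ((k + 1 : ℕ) : ℂ) := by push_cast; ring
    rw [this, Complex.norm_natCast]; push_cast; ring
  rw [hl] at h
  rw [h, hmu]
  have hprod : ∀ A B : ℂ, ‖A‖ = R → ‖B‖ = R →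
      ‖PowerSeries.coeff k (PowerSeries.C A * (gser ((j:ℝ) / 2 + 1) A * gser ((j:ℝ) / 2) B))‖
        ≤ ((k : ℝ) + 1) ^ j * R ^ (k + 1) := by
    intro A B hA hB
    rw [PowerSeries.coeff_C_mul, norm_mul, hA, PowerSeries.coeff_mul]
    have h1 : ‖∑ p ∈ Finset.HasAntidiagonal.antidiagonal k, PowerSeries.coeff p.1 (gser ((j:ℝ) / 2 + 1) A)
        * PowerSeries.coeff p.2 (gser ((j:ℝ) / 2) B)‖
        ≤ ∑ p ∈ Finset.HasAntidiagonal.antidiagonal k, rc ((j:ℝ) / 2 + 1) p.1 * rc ((j:ℝ) / 2) p.2 * R ^ k := by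
      refine (norm_sum_le _ _).trans (Finset.sum_le_sum fun p hp => le_of_eq ?_)
      rw [Finset.HasAntidiagonal.mem_antidiagonal] at hp
      simp only [gser, PowerSeries.coeff_mk, norm_mul, norm_pow, hA, hB, Complex.norm_real,
        Real.norm_eq_abs]
      rw [abs_of_nonneg (rc_nonneg (by positivity) _), abs_of_nonneg (rc_nonneg (by positivity) _),
        ← hp, pow_add]
      ring
    rw [← Finset.sum_mul, rc_conv, show (j:ℝ) / 2 + 1 + j / 2 = j + 1 by ring] at h1
    calc _ ≤ R * (rc ((j:ℝ) + 1) k * R ^ k) := by gcongr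
      _ ≤ R * (((k : ℝ) + 1) ^ j * R ^ k) := by gcongr; exact rc_le j k
      _ = _ := by ring
  rw [tser, PowerSeries.coeff_C_mul, norm_mul, map_add]
  have h2 := norm_add_le
    (PowerSeries.coeff k (PowerSeries.C W * (gser ((j:ℝ) / 2 + 1) W * gser ((j:ℝ) / 2) V)))
    (PowerSeries.coeff k (PowerSeries.C V * (gser ((j:ℝ) / 2 + 1) V * gser ((j:ℝ) / 2) W)))
  have h3 := hprod W V hnW hnV
  have h4 := hprod V W hnV hnW
  have h5 : ‖(1 / 2 : ℂ)‖ = 1 / 2 := by norm_num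
  rw [h5, Nat.add_sub_cancel]
  linarith

/-! ### Expansion of the fundamental solution -/

/-- The profile of the fundamental solution as a function of `ρ = ‖z‖²`, normalised by
`hf' = - ρ^(-N/2) / 2`. -/
noncomputable def hf (N : ℕ) (ρ : ℝ) : ℝ :=
  if N = 2 then -(Real.log ρ) / 2 else ρ ^ (-(mu N) / 2) / mu N

lemma hasDerivAt_hf (N : ℕ) {ρ : ℝ} (hρ : 0 < ρ) :
    HasDerivAt (hf N) (-(1 / 2) * ρ ^ (-(N : ℝ) / 2)) ρ := by
  by_cases h : N = 2
  · subst h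
    have : hf 2 = fun ρ => -(Real.log ρ) / 2 := by ext; simp [hf]
    rw [this]
    refine ((Real.hasDerivAt_log hρ.ne').neg.div_const 2).congr_deriv ?_
    norm_num [Real.rpow_neg_one]
    ring
  · have : hf N = fun ρ => ρ ^ (-(mu N) / 2) / mu N := by ext; simp [hf, h]
    rw [this]
    have hm : mu N ≠ 0 := by
      rw [mu, sub_ne_zero]; exact_mod_cast h
    refine ((Real.hasDerivAt_rpow_const (p := -(mu N) / 2) (Or.inl hρ.ne')).div_const
      (mu N)).congr_deriv ?_
    have : -(mu N) / 2 - 1 = -(N : ℝ) / 2 := by rw [mu]; ring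
    rw [this]
    field_simp

lemma hf_mul (N : ℕ) {c ρ : ℝ} (hc : 0 < c) (hρ : 0 < ρ) :
    hf N (c * ρ) - hf N c = c ^ (-(mu N) / 2) * (hf N ρ - hf N 1) := by
  by_cases h : N = 2
  · subst h
    simp only [hf, if_true, mu]
    rw [Real.log_mul hc.ne' hρ.ne']
    norm_num
    ring
  · simp only [hf, h, if_false]
    rw [Real.mul_rpow hc.le hρ.le, Real.one_rpow]
    ring

lemma summable_pow_geom (j : ℕ) {θ : ℝ} (h0 : 0 ≤ θ) (h1 : θ < 1) :
    Summable fun k : ℕ => ((k : ℝ) + 1) ^ j * θ ^ (k + 1) := by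
  have := (summable_nat_add_iff 1).2
    (summable_pow_mul_geometric_of_norm_lt_one (R := ℝ) j (r := θ)
      (by rwa [Real.norm_of_nonneg h0]))
  simpa using this

/-- The generating function of the solid zonal harmonics, on the unit scale. -/
lemma hasSum_polVal {N : ℕ} (hN : 2 ≤ N) {u R : ℝ} (hR : 0 ≤ R) (hR1 : R < 1)
    (hu : u ^ 2 ≤ R ^ 2) :
    HasSum (fun k => polVal N u (R ^ 2) (k + 1)) (hf N (1 - 2 * u + R ^ 2) - hf N 1) := by
  set p : ℕ → ℝ := fun k => polVal N u (R ^ 2) (k + 1) with hp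
  set t : ℕ → ℝ := fun k => ((k : ℝ) + 1) * p k with ht
  have htb : ∀ k, |t k| ≤ ((k : ℝ) + 1) ^ (N - 2) * R ^ (k + 1) := by
    intro k
    rw [ht, abs_mul, abs_of_nonneg (by positivity)]
    exact polVal_bound hN hR hu k
  have hpt : ∀ k, |p k| ≤ |t k| := by
    intro k
    rw [ht, abs_mul, abs_of_nonneg (by positivity : (0:ℝ) ≤ (k:ℝ) + 1)]
    have : (0:ℝ) ≤ k := by positivity
    nlinarith [abs_nonneg (p k)]
  set ρ := 2 / (1 + R) with hρ
  have hρ1 : 1 < ρ := by rw [hρ, lt_div_iff₀ (by linarith)]; linarith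
  have hρR : R * ρ < 1 := by
    rw [hρ, mul_div_assoc', div_lt_one (by linarith)]; linarith
  have hρR0 : 0 ≤ R * ρ := by positivity
  have hsum := summable_pow_geom (N - 2) hρR0 hρR
  have hbd : ∀ k : ℕ, ∀ s ∈ Ioo (-ρ) ρ, ‖t k * s ^ k‖ ≤ ((k : ℝ) + 1) ^ (N - 2)
      * (R * ρ) ^ (k + 1) := by
    intro k s hs
    have hs' : |s| ≤ ρ := (abs_lt.2 hs).le
    rw [norm_mul, norm_pow, Real.norm_eq_abs, Real.norm_eq_abs]
    calc |t k| * |s| ^ k ≤ (((k : ℝ) + 1) ^ (N - 2) * R ^ (k + 1)) * ρ ^ k := by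
          gcongr; exact htb k
      _ ≤ (((k : ℝ) + 1) ^ (N - 2) * R ^ (k + 1)) * ρ ^ (k + 1) := by
          gcongr
          · exact hρ1.le
          · lia
      _ = _ := by rw [mul_pow]; ring
  have hts : ∀ s ∈ Ioo (-ρ) ρ, Summable fun k => t k * s ^ k := fun s hs =>
    Summable.of_norm_bounded hsum fun k => hbd k s hs
  have hps : ∀ s ∈ Ioo (-ρ) ρ, Summable fun k => p k * s ^ (k + 1) := by
    intro s hs
    refine Summable.of_norm_bounded (hsum.mul_left |s|) fun k => ?_
    have h1 := hbd k s hs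
    rw [norm_mul, norm_pow, Real.norm_eq_abs, Real.norm_eq_abs] at h1 ⊢
    calc |p k| * |s| ^ (k + 1) ≤ |t k| * |s| ^ (k + 1) := mul_le_mul_of_nonneg_right (hpt k) (by positivity)
      _ = |s| * (|t k| * |s| ^ k) := by ring
      _ ≤ _ := by gcongr
  set G : ℝ → ℝ := fun s => ∑' k, p k * s ^ (k + 1) with hG
  set τ : ℝ → ℝ := fun s => ∑' k, t k * s ^ k with hτ
  have hGd : ∀ s ∈ Ioo (-ρ) ρ, HasDerivAt G (τ s) s := by
    intro s hs
    refine hasDerivAt_tsum_of_isPreconnected hsum isOpen_Ioo isPreconnected_Ioo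
      (fun k s _ => ?_) hbd (y₀ := 0) (by constructor <;> linarith) (by simp [summable_zero]) hs
    refine ((hasDerivAt_pow (k + 1) s).const_mul (p k)).congr_deriv ?_
    simp [ht]; ring
  -- the three-term recurrence is a first-order linear equation for `G`
  have hode : ∀ s ∈ Ioo (-ρ) ρ, (1 - 2 * u * s + R ^ 2 * s ^ 2) * τ s
      = (u - R ^ 2 * s) * (1 + mu N * G s) := by
    intro s hs
    have hT := (hts s hs).hasSum
    have hP := (hps s hs).hasSum
    have hT1 := (hasSum_nat_add_iff' 1).2 hT
    have hT2 := (hasSum_nat_add_iff' 2).2 hT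
    have hP1 := (hasSum_nat_add_iff' 1).2 hP
    have hR := (((hT1.mul_left (2 * u * s)).add (hP1.mul_left (mu N * u))).sub
      (hT.mul_left (R ^ 2 * s ^ 2))).sub (hP.mul_left (mu N * R ^ 2 * s))
    have hrec : ∀ k, t (k + 2) * s ^ (k + 2) = 2 * u * s * (t (k + 1) * s ^ (k + 1))
        + mu N * u * (p (k + 1) * s ^ (k + 1 + 1)) - R ^ 2 * s ^ 2 * (t k * s ^ k)
        - mu N * R ^ 2 * s * (p k * s ^ (k + 1)) := by
      intro k
      have : t (k + 2) = 2 * u * t (k + 1) + mu N * u * p (k + 1) - R ^ 2 * t k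
          - mu N * R ^ 2 * p k := by
        have h3 : (k : ℝ) + 3 ≠ 0 := by positivity
        simp only [ht, hp]
        rw [show k + 2 + 1 = k + 3 from rfl, polVal]
        push_cast
        field_simp
        ring
      rw [this]; ring
    have hu1 := (hT2.congr_fun fun k => (hrec k).symm).unique hR
    have e0 : t 0 = u := by simp [ht, hp, polVal]
    have e1 : t 1 = (2 + mu N) * u ^ 2 - R ^ 2 := by
      simp only [ht, hp, polVal]; push_cast; ring
    have e2 : p 0 = u := by simp [hp, polVal]
    simp only [Finset.sum_range_succ, Finset.sum_range_zero, e0, e1, e2] at hu1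
    change τ s - _ = 2 * u * s * (τ s - _) + mu N * u * (G s - _) - R ^ 2 * s ^ 2 * τ s
      - mu N * R ^ 2 * s * G s at hu1
    linear_combination hu1
  have huR : |u| ≤ R := abs_le_of_sq_le_sq' hu hR |> abs_le.2
  have hq : ∀ s ∈ Icc (0:ℝ) 1, 0 < 1 - 2 * u * s + R ^ 2 * s ^ 2 := by
    intro s hs
    have h1 : u * s ≤ R * s := mul_le_mul_of_nonneg_right ((le_abs_self u).trans huR) hs.1
    have h2 : R * s < 1 := by nlinarith [hs.1, hs.2]
    nlinarith [sq_nonneg (1 - R * s), mul_pos (sub_pos.2 h2) (sub_pos.2 h2)]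
  have hsub : ∀ s ∈ Icc (0:ℝ) 1, s ∈ Ioo (-ρ) ρ := fun s hs =>
    ⟨by linarith [hs.1], by linarith [hs.2]⟩
  have hqd : ∀ s : ℝ, HasDerivAt (fun s : ℝ => 1 - 2 * u * s + R ^ 2 * s ^ 2)
      (-2 * u + 2 * R ^ 2 * s) s := by
    intro s
    refine ((((hasDerivAt_id s).const_mul (2 * u)).const_sub 1).add
      ((hasDerivAt_pow 2 s).const_mul (R ^ 2))).congr_deriv ?_
    simp; ring
  have hG0 : G 0 = 0 := by simp [hG]
  have hF : ∀ s ∈ Icc (0:ℝ) 1, (1 + mu N * G s)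
      * (1 - 2 * u * s + R ^ 2 * s ^ 2) ^ (mu N / 2) = 1 := by
    have hd : ∀ s ∈ Icc (0:ℝ) 1, HasDerivAt (fun s => (1 + mu N * G s)
        * (1 - 2 * u * s + R ^ 2 * s ^ 2) ^ (mu N / 2)) 0 s := by
      intro s hs
      have hs' := hsub s hs
      refine ((((hGd s hs').const_mul (mu N)).const_add 1).mul
        ((hqd s).rpow_const (p := mu N / 2) (Or.inl (hq s hs).ne'))).congr_deriv ?_
      have h1 := hode s hs'
      have h2 : (1 - 2 * u * s + R ^ 2 * s ^ 2) ^ (mu N / 2)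
          = (1 - 2 * u * s + R ^ 2 * s ^ 2) * (1 - 2 * u * s + R ^ 2 * s ^ 2) ^ (mu N / 2 - 1) := by
        rw [Real.rpow_sub_one (hq s hs).ne', mul_div_cancel₀ _ (hq s hs).ne']
      rw [h2]
      linear_combination mu N * (1 - 2 * u * s + R ^ 2 * s ^ 2) ^ (mu N / 2 - 1) * h1
    intro s hs
    have := constant_of_has_deriv_right_zero (a := (0:ℝ)) (b := 1)
      (fun s hs => (hd s hs).continuousAt.continuousWithinAt)
      (fun s hs => (hd s ⟨hs.1, hs.2.le⟩).hasDerivWithinAt) s hs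
    rw [this]
    simp [hG0]
  have hfin : ∀ s ∈ Icc (0:ℝ) 1, hf N (1 - 2 * u * s + R ^ 2 * s ^ 2) - G s = hf N 1 := by
    have hd : ∀ s ∈ Icc (0:ℝ) 1, HasDerivAt (fun s => hf N (1 - 2 * u * s + R ^ 2 * s ^ 2) - G s)
        0 s := by
      intro s hs
      have hs' := hsub s hs
      refine (((hasDerivAt_hf N (hq s hs)).comp s (hqd s)).sub (hGd s hs')).congr_deriv ?_
      have h1 := hode s hs'
      have h2 := hF s hs
      set Q := 1 - 2 * u * s + R ^ 2 * s ^ 2 with hQ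
      have hQpos : 0 < Q := hq s hs
      have h3 : Q ^ (-(N:ℝ) / 2) * Q = Q ^ (-(mu N / 2)) := by
        rw [← Real.rpow_add_one hQpos.ne']
        congr 1; rw [mu]; ring
      have h4 : 1 + mu N * G s = Q ^ (-(mu N / 2)) := by
        rw [Real.rpow_neg hQpos.le]; exact eq_inv_of_mul_eq_one_left h2
      apply mul_left_cancel₀ hQpos.ne'
      rw [h4] at h1
      linear_combination -h1 + (u - R ^ 2 * s) * h3
    intro s hs
    have := constant_of_has_deriv_right_zero (a := (0:ℝ)) (b := 1)
      (fun s hs => (hd s hs).continuousAt.continuousWithinAt)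
      (fun s hs => (hd s ⟨hs.1, hs.2.le⟩).hasDerivWithinAt) s hs
    rw [this]
    simp [hG0]
  have h1 := hfin 1 ⟨zero_le_one, le_rfl⟩
  have h2 := (hps 1 (hsub 1 ⟨zero_le_one, le_rfl⟩)).hasSum
  simp only [one_pow, mul_one] at h1 h2
  have h3 : ∑' k, p k = hf N (1 - 2 * u + R ^ 2) - hf N 1 := by
    have : G 1 = ∑' k, p k := by simp [hG]
    rw [← this]; linarith
  rwa [h3] at h2

/-- The inversion of `y` in the unit sphere. -/
noncomputable def inv1 {N : ℕ} (y : EuclideanSpace ℝ (Fin N)) : EuclideanSpace ℝ (Fin N) :=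
  (‖y‖ ^ 2)⁻¹ • y

lemma norm_inv1 {N : ℕ} (y : EuclideanSpace ℝ (Fin N)) : ‖inv1 y‖ = ‖y‖⁻¹ := by
  rcases eq_or_ne y 0 with rfl | h
  · simp [inv1]
  · have := norm_pos_iff.2 h
    rw [inv1, norm_smul, norm_inv, norm_pow, norm_norm]
    field_simp

lemma abs_eval_pol_le {N : ℕ} (hN : 2 ≤ N) (x z : EuclideanSpace ℝ (Fin N)) (k : ℕ) :
    |MvPolynomial.eval (fun i => x i) (pol z (k + 1))|
      ≤ ((k : ℝ) + 1) ^ (N - 2) / (k + 1) * (‖x‖ * ‖z‖) ^ (k + 1) := by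
  have hb := polVal_bound hN (u := inner ℝ x z) (R := ‖x‖ * ‖z‖) (by positivity)
    (sq_le_sq' (by linarith [abs_le.1 (abs_real_inner_le_norm x z)])
      (abs_le.1 (abs_real_inner_le_norm x z)).2) k
  rw [eval_pol, ← mul_pow, div_mul_eq_mul_div, le_div_iff₀ (by positivity), mul_comm]
  exact hb

/-- Expansion of the Newtonian kernel with pole `y` in harmonic polynomials of `x`. -/
lemma kernel_expansion {N : ℕ} (hN : 2 ≤ N) {x y : EuclideanSpace ℝ (Fin N)} (h : ‖x‖ < ‖y‖) :
    HasSum (fun k => ‖y‖ ^ (-mu N) * MvPolynomial.eval (fun i => x i) (pol (inv1 y) (k + 1)))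
      (hf N (‖x - y‖ ^ 2) - hf N (‖y‖ ^ 2)) := by
  have hy : 0 < ‖y‖ := (norm_nonneg x).trans_lt h
  have hR : ‖x‖ * ‖inv1 y‖ < 1 := by
    rw [norm_inv1, mul_inv_lt_iff₀ hy]; linarith
  have hs := hasSum_polVal hN (u := inner ℝ x (inv1 y)) (R := ‖x‖ * ‖inv1 y‖) (by positivity) hR
    (sq_le_sq' (by linarith [abs_le.1 (abs_real_inner_le_norm x (inv1 y))])
      (abs_le.1 (abs_real_inner_le_norm x (inv1 y))).2)
  have hin : inner ℝ x (inv1 y) = (‖y‖ ^ 2)⁻¹ * inner ℝ x y := by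
    rw [inv1, inner_smul_right]
  have hq : ‖x - y‖ ^ 2 = ‖y‖ ^ 2 * (1 - 2 * inner ℝ x (inv1 y) + (‖x‖ * ‖inv1 y‖) ^ 2) := by
    rw [hin, norm_inv1, norm_sub_sq_real]
    field_simp
    ring
  have hpos : 0 < 1 - 2 * inner ℝ x (inv1 y) + (‖x‖ * ‖inv1 y‖) ^ 2 := by
    have h1 : 0 < ‖x - y‖ ^ 2 := by
      have : x - y ≠ 0 := by
        rw [sub_ne_zero]; rintro rfl; exact lt_irrefl _ h
      positivity
    rw [hq] at h1
    exact pos_of_mul_pos_right h1 (by positivity)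
  have hpw : (‖y‖ ^ 2) ^ (-(mu N) / 2) = ‖y‖ ^ (-mu N) := by
    rw [← Real.rpow_natCast, ← Real.rpow_mul hy.le]; congr 1; push_cast; ring
  rw [hq, hf_mul N (by positivity) hpos, hpw]
  simp only [eval_pol, ← mul_pow]
  exact hs.mul_left _

/-! ### Integrating the zonal harmonics in the pole -/

/-- A polynomial family `y ↦ f y` which is a finite combination of fixed polynomials of degree at
most `k`, with continuous coefficients of size `O(‖y‖ᵏ)`. -/
def SepFamily {N : ℕ} (k : ℕ) (f : EuclideanSpace ℝ (Fin N) → MvPolynomial (Fin N) ℝ) : Prop :=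
  ∃ (ι : Type) (_ : Fintype ι) (b : ι → EuclideanSpace ℝ (Fin N) → ℝ)
    (Q : ι → MvPolynomial (Fin N) ℝ) (K : ℝ),
    0 ≤ K ∧ (∀ i, Continuous (b i)) ∧ (∀ i y, |b i y| ≤ K * ‖y‖ ^ k) ∧
    (∀ i, (Q i).totalDegree ≤ k) ∧ ∀ y, f y = ∑ i, MvPolynomial.C (b i y) * Q i

section

variable {N : ℕ}

lemma SepFamily.sub {k : ℕ} {f g : EuclideanSpace ℝ (Fin N) → MvPolynomial (Fin N) ℝ}
    (hf : SepFamily k f) (hg : SepFamily k g) : SepFamily k (fun y => f y - g y) := by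
  obtain ⟨ι₁, _, b₁, Q₁, K₁, hK₁, hc₁, hb₁, hd₁, he₁⟩ := hf
  obtain ⟨ι₂, _, b₂, Q₂, K₂, hK₂, hc₂, hb₂, hd₂, he₂⟩ := hg
  refine ⟨ι₁ ⊕ ι₂, inferInstance, Sum.elim b₁ (fun i y => - b₂ i y), Sum.elim Q₁ Q₂, K₁ + K₂,
    by positivity, ?_, ?_, ?_, ?_⟩
  · rintro (i | i)
    · exact hc₁ i
    · exact (hc₂ i).neg
  · rintro (i | i) y
    · exact (hb₁ i y).trans (mul_le_mul_of_nonneg_right (by linarith) (by positivity))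
    · simp only [Sum.elim_inr, abs_neg]
      exact (hb₂ i y).trans (mul_le_mul_of_nonneg_right (by linarith) (by positivity))
  · rintro (i | i)
    · exact hd₁ i
    · exact hd₂ i
  · intro y
    simp [Fintype.sum_sum_type, he₁, he₂, sub_eq_add_neg]

lemma SepFamily.mul {k l : ℕ} {f g : EuclideanSpace ℝ (Fin N) → MvPolynomial (Fin N) ℝ}
    (hf : SepFamily k f) (hg : SepFamily l g) : SepFamily (k + l) (fun y => f y * g y) := by
  obtain ⟨ι₁, _, b₁, Q₁, K₁, hK₁, hc₁, hb₁, hd₁, he₁⟩ := hf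
  obtain ⟨ι₂, _, b₂, Q₂, K₂, hK₂, hc₂, hb₂, hd₂, he₂⟩ := hg
  refine ⟨ι₁ × ι₂, inferInstance, fun i y => b₁ i.1 y * b₂ i.2 y, fun i => Q₁ i.1 * Q₂ i.2,
    K₁ * K₂, by positivity, fun i => (hc₁ _).mul (hc₂ _), fun i y => ?_, fun i => ?_, fun y => ?_⟩
  · rw [abs_mul, pow_add]
    calc _ ≤ (K₁ * ‖y‖ ^ k) * (K₂ * ‖y‖ ^ l) :=
          mul_le_mul (hb₁ _ y) (hb₂ _ y) (abs_nonneg _) (by positivity)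
      _ = _ := by ring
  · exact (MvPolynomial.totalDegree_mul _ _).trans (add_le_add (hd₁ _) (hd₂ _))
  · beta_reduce
    rw [he₁, he₂, Finset.sum_mul_sum, Fintype.sum_prod_type]
    refine Finset.sum_congr rfl fun i _ => Finset.sum_congr rfl fun j _ => ?_
    rw [map_mul]; ring

lemma sepFamily_const (c : ℝ) :
    SepFamily 0 (fun _ : EuclideanSpace ℝ (Fin N) => MvPolynomial.C c) :=
  ⟨Unit, inferInstance, fun _ _ => c, fun _ => 1, |c|, abs_nonneg c, fun _ => continuous_const,
    fun _ _ => by simp, fun _ => by simp, fun y => by simp⟩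

lemma SepFamily.C_mul {k : ℕ} {f : EuclideanSpace ℝ (Fin N) → MvPolynomial (Fin N) ℝ} (c : ℝ)
    (hf : SepFamily k f) : SepFamily k (fun y => MvPolynomial.C c * f y) := by
  simpa using (sepFamily_const c).mul hf

lemma sepFamily_linF : SepFamily 1 (linF (N := N)) := by
  refine ⟨Fin N, inferInstance, fun i y => y i, fun i => MvPolynomial.X i, 1, by simp,
    fun i => by fun_prop, fun i y => ?_, fun i => by simp, fun y => rfl⟩
  simpa using PiLp.norm_apply_le y i

lemma sepFamily_quadF : SepFamily 2 (quadF (N := N)) := by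
  refine ⟨Unit, inferInstance, fun i y => ‖y‖ ^ 2, fun _ => ∑ i, MvPolynomial.X i ^ 2, 1, by simp,
    fun i => by fun_prop, fun i y => by simp, fun i => ?_, fun y => by simp [quadF]⟩
  refine (MvPolynomial.totalDegree_finsetSum _ _).trans (Finset.sup_le fun i _ => ?_)
  exact (MvPolynomial.totalDegree_pow _ _).trans (by simp)

lemma sepFamily_pol (k : ℕ) : SepFamily k (fun y : EuclideanSpace ℝ (Fin N) => pol y k) := by
  induction k using Nat.strong_induction_on with
  | _ k ih =>
    match k with
    | 0 => simpa [pol] using sepFamily_const (N := N) 0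
    | 1 => exact sepFamily_linF
    | 2 =>
      simp only [pol, sq (linF _)]
      exact ((sepFamily_linF.mul sepFamily_linF).C_mul _).sub (sepFamily_quadF.C_mul _)
    | (k + 3) =>
      simp only [pol]
      refine SepFamily.C_mul _ (SepFamily.sub (SepFamily.C_mul _ ?_) (SepFamily.C_mul _ ?_))
      · have := sepFamily_linF.mul (ih (k + 2) (by lia))
        rwa [show 1 + (k + 2) = k + 3 by lia] at this
      · have := sepFamily_quadF.mul (ih (k + 1) (by lia))
        rwa [show 2 + (k + 1) = k + 3 by lia] at this

lemma measurable_inv1 : Measurable (inv1 (N := N)) := by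
  unfold inv1; fun_prop

/-- Averages over the pole of the zonal harmonics of degree `k` are harmonic polynomials of degree
at most `k`. -/
lemma exists_poly_integral (k : ℕ) {ω : EuclideanSpace ℝ (Fin N) → ℝ} (hω : Measurable ω)
    (hintg : Integrable (fun y => (‖y‖⁻¹) ^ k * |ω y|)) :
    ∃ P : MvPolynomial (Fin N) ℝ, P.totalDegree ≤ k ∧
      (∀ x : EuclideanSpace ℝ (Fin N), MvPolynomial.eval (fun i => x i) (polyLap P) = 0) ∧
      ∀ x : EuclideanSpace ℝ (Fin N),
        Integrable (fun y => ω y * MvPolynomial.eval (fun i => x i) (pol (inv1 y) k)) ∧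
        MvPolynomial.eval (fun i => x i) P
          = ∫ y, ω y * MvPolynomial.eval (fun i => x i) (pol (inv1 y) k) := by
  obtain ⟨ι, _, b, Q, K, hK, hc, hb, hd, he⟩ := sepFamily_pol (N := N) k
  have hi : ∀ i, Integrable (fun y => ω y * b i (inv1 y)) := by
    intro i
    refine (hintg.const_mul K).mono'
      (hω.mul ((hc i).measurable.comp measurable_inv1)).aestronglyMeasurable
      (Eventually.of_forall fun y => ?_)
    have := hb i (inv1 y)
    rw [norm_inv1] at this
    rw [norm_mul, Real.norm_eq_abs, Real.norm_eq_abs]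
    calc _ ≤ |ω y| * (K * ‖y‖⁻¹ ^ k) := by gcongr
      _ = _ := by ring
  have hsum : ∀ (c : ι → ℝ), Integrable (fun y => ω y * ∑ i, b i (inv1 y) * c i) ∧
      ∑ i, (∫ y, ω y * b i (inv1 y)) * c i = ∫ y, ω y * ∑ i, b i (inv1 y) * c i := by
    intro c
    have h1 : (fun y => ω y * ∑ i, b i (inv1 y) * c i)
        = fun y => ∑ i, (ω y * b i (inv1 y)) * c i := by
      ext y; rw [Finset.mul_sum]; exact Finset.sum_congr rfl fun i _ => by ring
    rw [h1]
    refine ⟨integrable_finsetSum _ fun i _ => (hi i).mul_const _, ?_⟩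
    rw [integral_finsetSum _ fun i _ => (hi i).mul_const _]
    exact Finset.sum_congr rfl fun i _ => (integral_mul_const _ _).symm
  refine ⟨∑ i, MvPolynomial.C (∫ y, ω y * b i (inv1 y)) * Q i, ?_, fun x => ?_, fun x => ?_⟩
  · refine (MvPolynomial.totalDegree_finsetSum _ _).trans (Finset.sup_le fun i _ => ?_)
    exact (MvPolynomial.totalDegree_mul _ _).trans (by simpa using hd i)
  · have h0 : ∀ y, ∑ i, b i (inv1 y) * MvPolynomial.eval (fun i => x i) (polyLap (Q i)) = 0 := by
      intro y
      have := congrArg (MvPolynomial.eval (fun i => x i)) (polyLap_pol (inv1 y) k)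
      simpa [he, polyLap_sum, polyLap_C_mul] using this
    simp only [polyLap_sum, polyLap_C_mul, map_sum, map_mul, MvPolynomial.eval_C]
    rw [(hsum _).2]
    simp [h0]
  · have h0 : ∀ y, MvPolynomial.eval (fun i => x i) (pol (inv1 y) k)
        = ∑ i, b i (inv1 y) * MvPolynomial.eval (fun i => x i) (Q i) := by
      intro y; simp [he]
    simp only [h0, map_sum, map_mul, MvPolynomial.eval_C]
    exact hsum _

end

/-! ### Newtonian representation of compactly supported functions -/

section

variable {N : ℕ}

lemma continuous_laplacian {v : EuclideanSpace ℝ (Fin N) → ℝ} (hv : ContDiff ℝ 2 v) :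
    Continuous (laplacian v) := by
  have h1 : ContDiff ℝ 1 (fderiv ℝ v) := hv.fderiv_right (by norm_num)
  have h2 : Continuous (fderiv ℝ (fderiv ℝ v)) := h1.continuous_fderiv (by norm_num)
  have h3 : laplacian v = _ := funext (laplacian_eq_sum_fderiv v)
  rw [h3]
  fun_prop

lemma hasCompactSupport_laplacian {v : EuclideanSpace ℝ (Fin N) → ℝ}
    (hs : HasCompactSupport v) : HasCompactSupport (laplacian v) := by
  refine (hs.iteratedFDeriv (𝕜 := ℝ) 2).mono' (fun x hx => ?_)
  by_contra h
  have h0 := image_eq_zero_of_notMem_tsupport h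
  exact hx (by simp [laplacian, h0])

/-- Green's second identity for a compactly supported factor. -/
lemma green {f g : EuclideanSpace ℝ (Fin N) → ℝ} (hf : ContDiff ℝ 2 f) (hg : ContDiff ℝ 2 g)
    (hs : HasCompactSupport g) :
    ∫ y, f y * laplacian g y = ∫ y, laplacian f y * g y := by
  have hf1 : ContDiff ℝ 1 (fderiv ℝ f) := hf.fderiv_right (by norm_num)
  have hg1 : ContDiff ℝ 1 (fderiv ℝ g) := hg.fderiv_right (by norm_num)
  have hf2 : Continuous (fderiv ℝ (fderiv ℝ f)) := hf1.continuous_fderiv (by norm_num)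
  have hg2 : Continuous (fderiv ℝ (fderiv ℝ g)) := hg1.continuous_fderiv (by norm_num)
  have hs1 : HasCompactSupport (fderiv ℝ g) := hs.fderiv (𝕜 := ℝ)
  have hs2 : HasCompactSupport (fderiv ℝ (fderiv ℝ g)) := hs1.fderiv (𝕜 := ℝ)
  have cf := hf.continuous
  have cg := hg.continuous
  have cf1 := hf1.continuous
  have cg1 := hg1.continuous
  have hev : ∀ (h : EuclideanSpace ℝ (Fin N) → ℝ) (hh : ContDiff ℝ 1 (fderiv ℝ h))
      (e y : EuclideanSpace ℝ (Fin N)),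
      fderiv ℝ (fderiv ℝ h) y e e = fderiv ℝ (fun z => fderiv ℝ h z e) y e := by
    intro h hh e y
    rw [fderiv_clm_apply (hh.differentiable (by norm_num) y) (differentiableAt_const _)]
    simp
  have hcs1 : ∀ e, HasCompactSupport (fun y => fderiv ℝ g y e) := fun e =>
    hs1.comp_left (g := fun L : EuclideanSpace ℝ (Fin N) →L[ℝ] ℝ => L e) (by simp)
  have hcs2 : ∀ e, HasCompactSupport (fun y => fderiv ℝ (fderiv ℝ g) y e e) := fun e =>
    hs2.comp_left (g := fun L : EuclideanSpace ℝ (Fin N) →L[ℝ]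
      EuclideanSpace ℝ (Fin N) →L[ℝ] ℝ => L e e) (by simp)
  have i1 : ∀ e, Integrable (fun y => f y * fderiv ℝ (fderiv ℝ g) y e e) := fun e =>
    (by fun_prop : Continuous _).integrable_of_hasCompactSupport ((hcs2 e).mul_left)
  have i2 : ∀ e, Integrable (fun y => fderiv ℝ f y e * fderiv ℝ g y e) := fun e =>
    (by fun_prop : Continuous _).integrable_of_hasCompactSupport ((hcs1 e).mul_left)
  have i3 : ∀ e, Integrable (fun y => fderiv ℝ (fderiv ℝ f) y e e * g y) := fun e =>
    (by fun_prop : Continuous _).integrable_of_hasCompactSupport (hs.mul_left)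
  have i4 : ∀ e, Integrable (fun y => f y * fderiv ℝ g y e) := fun e =>
    (by fun_prop : Continuous _).integrable_of_hasCompactSupport ((hcs1 e).mul_left)
  have i5 : ∀ e, Integrable (fun y => fderiv ℝ f y e * g y) := fun e =>
    (by fun_prop : Continuous _).integrable_of_hasCompactSupport (hs.mul_left)
  have key : ∀ e, ∫ y, f y * fderiv ℝ (fderiv ℝ g) y e e
      = ∫ y, fderiv ℝ (fderiv ℝ f) y e e * g y := by
    intro e
    have h1 := integral_mul_fderiv_eq_neg_fderiv_mul_of_integrable (μ := volume) (v := e)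
      (f := f) (g := fun y => fderiv ℝ g y e) (i2 e)
      (by simpa only [hev g hg1] using i1 e) (i4 e)
      (fun y _ => hf.differentiable (by norm_num) y)
      (fun y _ => (hg1.differentiable (by norm_num) y).clm_apply (differentiableAt_const _))
    have h2 := integral_mul_fderiv_eq_neg_fderiv_mul_of_integrable (μ := volume) (v := e)
      (f := fun y => fderiv ℝ f y e) (g := g) (by simpa only [hev f hf1] using i3 e)
      (i2 e) (i5 e)
      (fun y _ => (hf1.differentiable (by norm_num) y).clm_apply (differentiableAt_const _))
      (fun y _ => hg.differentiable (by norm_num) y)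
    simp only [hev g hg1, hev f hf1]
    rw [h1, h2, neg_neg]
  simp only [laplacian_eq_sum_fderiv, Finset.mul_sum, Finset.sum_mul]
  rw [integral_finsetSum _ fun i _ => i1 _, integral_finsetSum _ fun i _ => i3 _]
  exact Finset.sum_congr rfl fun i _ => key _

lemma contDiffAt_hf (N : ℕ) {ρ : ℝ} (hρ : 0 < ρ) : ContDiffAt ℝ 2 (hf N) ρ := by
  by_cases h : N = 2
  · have : hf N = fun ρ => -(Real.log ρ) / 2 := by ext; simp [hf, h]
    rw [this]
    exact ((Real.contDiffAt_log.2 hρ.ne').neg).div_const 2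
  · have : hf N = fun ρ => ρ ^ (-(mu N) / 2) / mu N := by ext; simp [hf, h]
    rw [this]
    exact (Real.contDiffAt_rpow_const_of_ne hρ.ne').div_const _

lemma contDiff_hf_reg {e : ℝ} (he : 0 < e) :
    ContDiff ℝ 2 (fun z : EuclideanSpace ℝ (Fin N) => hf N (‖z‖ ^ 2 + e)) := by
  rw [contDiff_iff_contDiffAt]
  intro z
  have h : ContDiffAt ℝ 2 (fun z : EuclideanSpace ℝ (Fin N) => ‖z‖ ^ 2 + e) z :=
    ((contDiff_norm_sq ℝ).add contDiff_const).contDiffAt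
  exact (contDiffAt_hf N (ρ := ‖z‖ ^ 2 + e) (by positivity)).comp z h

/-- The Laplacian of the regularised kernel is an approximate identity, up to the factor
`-kap N`. -/
lemma laplacian_hf_reg {e : ℝ} (he : 0 < e) (z : EuclideanSpace ℝ (Fin N)) :
    laplacian (fun z : EuclideanSpace ℝ (Fin N) => hf N (‖z‖ ^ 2 + e)) z
      = -(N * e * (‖z‖ ^ 2 + e) ^ (-((N : ℝ) + 2) / 2)) := by
  have hpos : 0 < ‖z‖ ^ 2 + e := by positivity
  have h1 : ∀ᶠ ρ in nhds (‖z‖ ^ 2), HasDerivAt (fun ρ => hf N (ρ + e))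
      ((fun ρ => -(1 / 2) * (ρ + e) ^ (-(N : ℝ) / 2)) ρ) ρ := by
    filter_upwards [lt_mem_nhds (show -e < ‖z‖ ^ 2 by linarith)] with ρ hρ
    exact (hasDerivAt_hf N (ρ := ρ + e) (by linarith)).comp_add_const ρ e
  have h2 : HasDerivAt (fun ρ => -(1 / 2) * (ρ + e) ^ (-(N : ℝ) / 2))
      (-(1 / 2) * (-(N : ℝ) / 2 * (‖z‖ ^ 2 + e) ^ (-(N : ℝ) / 2 - 1))) (‖z‖ ^ 2) :=
    ((Real.hasDerivAt_rpow_const (p := -(N : ℝ) / 2) (Or.inl hpos.ne')).comp_add_const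
      (‖z‖ ^ 2) e).const_mul _
  rw [laplacian_comp_normSq (χ := fun ρ => hf N (ρ + e)) h1 h2]
  have h3 : (‖z‖ ^ 2 + e) ^ (-(N : ℝ) / 2)
      = (‖z‖ ^ 2 + e) * (‖z‖ ^ 2 + e) ^ (-(N : ℝ) / 2 - 1) := by
    rw [Real.rpow_sub_one hpos.ne']; field_simp
  rw [h3, show -((N : ℝ) + 2) / 2 = -(N : ℝ) / 2 - 1 by ring]
  ring

lemma laplacian_comp_sub (u : EuclideanSpace ℝ (Fin N) → ℝ) (x y : EuclideanSpace ℝ (Fin N)) :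
    laplacian (fun z => u (z - x)) y = laplacian u (y - x) := by
  simp only [laplacian, iteratedFDeriv_comp_sub]

/-- Difference bound for the regularised kernel, uniform in the regularisation `e ≥ 0`. -/
lemma abs_hf_sub_le (hN : 2 ≤ N) {a b e : ℝ} (ha : 0 < a) (hb : 0 < b) (he : 0 ≤ e) :
    |hf N (a ^ 2 + e) - hf N (b ^ 2 + e)| ≤ |a - b| * (a⁻¹ ^ (N - 1) + b⁻¹ ^ (N - 1)) := by
  wlog hab : a ≤ b generalizing a b
  · have := this hb ha (not_le.1 hab).le
    rwa [abs_sub_comm, abs_sub_comm a b, add_comm (a⁻¹ ^ (N - 1))]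
  have h := Convex.norm_image_sub_le_of_norm_hasDerivWithin_le (s := Icc a b)
    (f := fun s => hf N (s ^ 2 + e))
    (f' := fun s => (-(1 / 2) * (s ^ 2 + e) ^ (-(N : ℝ) / 2)) * (2 * s)) (x := b) (y := a)
    (C := a⁻¹ ^ (N - 1)) (fun s hs => ?_) (fun s hs => ?_) (convex_Icc a b)
    (right_mem_Icc.2 hab) (left_mem_Icc.2 hab)
  · rw [Real.norm_eq_abs, Real.norm_eq_abs] at h
    refine h.trans ?_
    rw [mul_comm]
    gcongr
    linarith [show 0 ≤ b⁻¹ ^ (N - 1) by positivity]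
  · have hs0 : 0 < s := ha.trans_le hs.1
    have h1 : HasDerivAt (fun s : ℝ => s ^ 2 + e) (2 * s) s := by
      simpa using (hasDerivAt_pow 2 s).add_const e
    exact ((hasDerivAt_hf N (ρ := s ^ 2 + e) (by positivity)).comp s h1).hasDerivWithinAt
  · have hs0 : 0 < s := ha.trans_le hs.1
    have h2 : (s ^ 2 + e) ^ (-(N : ℝ) / 2) ≤ s⁻¹ ^ N := by
      calc (s ^ 2 + e) ^ (-(N : ℝ) / 2) ≤ (s ^ 2) ^ (-(N : ℝ) / 2) := by
            refine Real.rpow_le_rpow_of_nonpos (by positivity) (by linarith) ?_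
            have : (0 : ℝ) ≤ N := by positivity
            linarith
        _ = s⁻¹ ^ N := by
            rw [← Real.rpow_natCast s 2, ← Real.rpow_mul hs0.le]
            rw [show ((2 : ℕ) : ℝ) * (-(N : ℝ) / 2) = -(N : ℝ) by push_cast; ring,
              Real.rpow_neg hs0.le, Real.rpow_natCast, inv_pow]
    have h3 : 0 ≤ (s ^ 2 + e) ^ (-(N : ℝ) / 2) := by positivity
    calc ‖(-(1 / 2) * (s ^ 2 + e) ^ (-(N : ℝ) / 2)) * (2 * s)‖
        = (s ^ 2 + e) ^ (-(N : ℝ) / 2) * s := by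
          rw [show (-(1 / 2) * (s ^ 2 + e) ^ (-(N : ℝ) / 2)) * (2 * s)
            = -((s ^ 2 + e) ^ (-(N : ℝ) / 2) * s) by ring, norm_neg, Real.norm_of_nonneg]
          positivity
      _ ≤ s⁻¹ ^ N * s := by gcongr
      _ = s⁻¹ ^ (N - 1) := by
          obtain ⟨n, rfl⟩ := Nat.exists_eq_add_of_le hN
          rw [show 2 + n - 1 = n + 1 by lia, show 2 + n = n + 1 + 1 by lia, pow_succ _ (n + 1)]
          field_simp
      _ ≤ a⁻¹ ^ (N - 1) := by gcongr; exact hs.1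

lemma nontrivial_euclidean (hN : 2 ≤ N) : Nontrivial (EuclideanSpace ℝ (Fin N)) := by
  have : Nonempty (Fin N) := ⟨⟨0, by lia⟩⟩
  infer_instance

lemma integrableOn_ball_inv_pow (hN : 2 ≤ N) (R : ℝ) :
    IntegrableOn (fun y : EuclideanSpace ℝ (Fin N) => ‖y‖⁻¹ ^ (N - 1)) (ball 0 R) := by
  have := nontrivial_euclidean hN
  rw [integrableOn_fun_norm_addHaar volume (f := fun s => s⁻¹ ^ (N - 1))]
  have h : IntegrableOn (fun _ : ℝ => (1 : ℝ)) (Ioo 0 R) := by simp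
  refine h.congr_fun (fun s hs => ?_) measurableSet_Ioo
  have : s ≠ 0 := hs.1.ne'
  simp only [finrank_euclideanSpace, Fintype.card_fin, smul_eq_mul]
  rw [← mul_pow, mul_inv_cancel₀ this, one_pow]

/-- The normalisation constant of the Newtonian kernel `hf`. -/
noncomputable def kap (N : ℕ) : ℝ :=
  ∫ w : EuclideanSpace ℝ (Fin N), N * (1 + ‖w‖ ^ 2) ^ (-((N : ℝ) + 2) / 2)

lemma integrable_kap (N : ℕ) : Integrable (fun w : EuclideanSpace ℝ (Fin N) =>
    N * (1 + ‖w‖ ^ 2) ^ (-((N : ℝ) + 2) / 2)) :=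
  (integrable_rpow_neg_one_add_norm_sq (by simp)).const_mul _

lemma kap_pos (hN : 2 ≤ N) : 0 < kap N := by
  have hN' : (0 : ℝ) < N := by positivity
  rw [kap, integral_pos_iff_support_of_nonneg (fun w => by positivity) (integrable_kap N)]
  have : Function.support (fun w : EuclideanSpace ℝ (Fin N) =>
      N * (1 + ‖w‖ ^ 2) ^ (-((N : ℝ) + 2) / 2)) = univ := by
    ext w
    simp only [Function.mem_support, mem_univ, iff_true]
    positivity
  rw [this]
  exact isOpen_univ.measure_pos _ univ_nonempty

/-- Green's identity with the regularised kernel, after rescaling. -/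
lemma reg_representation {v : EuclideanSpace ℝ (Fin N) → ℝ} (hv : ContDiff ℝ 2 v)
    (hs : HasCompactSupport v) {ε : ℝ} (hε : 0 < ε) (x : EuclideanSpace ℝ (Fin N)) :
    ∫ y, hf N (‖y - x‖ ^ 2 + ε ^ 2) * laplacian v y
      = -∫ w, N * (1 + ‖w‖ ^ 2) ^ (-((N : ℝ) + 2) / 2) * v (ε • w + x) := by
  have he : 0 < ε ^ 2 := by positivity
  have h1 : ContDiff ℝ 2 (fun z : EuclideanSpace ℝ (Fin N) => hf N (‖z - x‖ ^ 2 + ε ^ 2)) :=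
    (contDiff_hf_reg he).comp (contDiff_id.sub contDiff_const)
  rw [green h1 hv hs]
  simp only [laplacian_comp_sub (fun z => hf N (‖z‖ ^ 2 + ε ^ 2)), laplacian_hf_reg he]
  have h2 := integral_sub_right_eq_self (μ := volume) (fun z : EuclideanSpace ℝ (Fin N) =>
    -(N * ε ^ 2 * (‖z‖ ^ 2 + ε ^ 2) ^ (-((N : ℝ) + 2) / 2)) * v (z + x)) x
  simp only [sub_add_cancel] at h2
  rw [h2]
  have h3 := Measure.integral_comp_smul (μ := volume) (fun z : EuclideanSpace ℝ (Fin N) =>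
    -(N * ε ^ 2 * (‖z‖ ^ 2 + ε ^ 2) ^ (-((N : ℝ) + 2) / 2)) * v (z + x)) ε
  simp only [finrank_euclideanSpace, Fintype.card_fin, smul_eq_mul] at h3
  rw [abs_of_pos (by positivity), eq_inv_mul_iff_mul_eq₀ (by positivity)] at h3
  rw [← h3, ← integral_neg, ← integral_const_mul]
  congr 1
  ext w
  rw [norm_smul, Real.norm_of_nonneg hε.le,
    show (ε * ‖w‖) ^ 2 + ε ^ 2 = ε ^ 2 * (1 + ‖w‖ ^ 2) by ring,
    Real.mul_rpow he.le (by positivity)]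
  have h4 : (ε ^ 2) ^ (-((N : ℝ) + 2) / 2) = (ε ^ (N + 2))⁻¹ := by
    rw [← Real.rpow_natCast ε 2, ← Real.rpow_mul hε.le,
      show ((2 : ℕ) : ℝ) * (-((N : ℝ) + 2) / 2) = -((N + 2 : ℕ) : ℝ) by push_cast; ring,
      Real.rpow_neg hε.le, Real.rpow_natCast]
  rw [h4, pow_add]
  field_simp

lemma tendsto_reg {v : EuclideanSpace ℝ (Fin N) → ℝ} (hv : Continuous v)
    (hs : HasCompactSupport v) (x : EuclideanSpace ℝ (Fin N)) :
    Tendsto (fun ε : ℝ => ∫ w, N * (1 + ‖w‖ ^ 2) ^ (-((N : ℝ) + 2) / 2) * v (ε • w + x))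
      (nhdsWithin 0 (Ioi 0)) (nhds (kap N * v x)) := by
  obtain ⟨B, hB⟩ := hs.exists_bound_of_continuous hv
  rw [kap, ← integral_mul_const]
  have hc : Continuous fun w : EuclideanSpace ℝ (Fin N) =>
      (1 + ‖w‖ ^ 2) ^ (-((N : ℝ) + 2) / 2) :=
    Continuous.rpow_const (by fun_prop) fun w => Or.inl (by positivity)
  refine tendsto_integral_filter_of_dominated_convergence
    (fun w => N * (1 + ‖w‖ ^ 2) ^ (-((N : ℝ) + 2) / 2) * B) ?_ ?_
    ((integrable_kap N).mul_const B) ?_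
  · exact Eventually.of_forall fun ε => (by fun_prop : Continuous _).aestronglyMeasurable
  · refine Eventually.of_forall fun ε => Eventually.of_forall fun w => ?_
    rw [norm_mul, Real.norm_of_nonneg (by positivity)]
    gcongr
    exact hB _
  · refine Eventually.of_forall fun w => ?_
    refine Tendsto.const_mul _ ?_
    have : Tendsto (fun ε : ℝ => v (ε • w + x)) (nhds 0) (nhds (v x)) := by
      have h : Continuous fun ε : ℝ => v (ε • w + x) := by fun_prop
      simpa using h.tendsto 0
    exact this.mono_left nhdsWithin_le_nhds

lemma integrable_kernel_bound (hN : 2 ≤ N) {g : EuclideanSpace ℝ (Fin N) → ℝ} (hg : Continuous g)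
    (hs : HasCompactSupport g) (x : EuclideanSpace ℝ (Fin N)) :
    Integrable (fun y => ‖y - x‖⁻¹ ^ (N - 1) * |g y|) := by
  obtain ⟨B, hB⟩ := hs.exists_bound_of_continuous hg
  obtain ⟨R, hR⟩ := hs.isCompact.isBounded.subset_ball x
  have h1 : IntegrableOn (fun y : EuclideanSpace ℝ (Fin N) => ‖y - x‖⁻¹ ^ (N - 1)) (ball x R) := by
    have h := integrableOn_ball_inv_pow hN R
    rw [← integrable_indicator_iff measurableSet_ball] at h ⊢
    have h2 := h.comp_sub_right x
    refine h2.congr (Eventually.of_forall fun y => ?_)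
    simp only [indicator, mem_ball, dist_eq_norm, sub_zero]
  rw [← integrable_indicator_iff measurableSet_ball] at h1
  refine (h1.mul_const B).mono' (Measurable.aestronglyMeasurable ?_)
    (Eventually.of_forall fun y => ?_)
  · have := hg.measurable
    fun_prop
  · rw [norm_mul, Real.norm_of_nonneg (by positivity), Real.norm_eq_abs, abs_abs]
    by_cases hy : y ∈ ball x R
    · rw [indicator_of_mem hy]
      gcongr
      exact hB y
    · have : g y = 0 := image_eq_zero_of_notMem_tsupport fun h => hy (hR h)
      simp [this, hy]

lemma abs_kernel_le (hN : 2 ≤ N) {e : ℝ} (he : 0 ≤ e) {x y : EuclideanSpace ℝ (Fin N)}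
    (hx : y ≠ x) (hy : y ≠ 0) :
    |hf N (‖y - x‖ ^ 2 + e) - hf N (‖y‖ ^ 2 + e)|
      ≤ ‖x‖ * (‖y - x‖⁻¹ ^ (N - 1) + ‖y‖⁻¹ ^ (N - 1)) := by
  refine (abs_hf_sub_le hN (norm_pos_iff.2 (sub_ne_zero.2 hx)) (norm_pos_iff.2 hy) he).trans ?_
  gcongr
  have := abs_norm_sub_norm_le (y - x) y
  simpa using this

/-- Newtonian representation of a compactly supported `C²` function, normalised at the origin. -/
lemma representation (hN : 2 ≤ N) {v : EuclideanSpace ℝ (Fin N) → ℝ} (hv : ContDiff ℝ 2 v)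
    (hs : HasCompactSupport v) (x : EuclideanSpace ℝ (Fin N)) :
    kap N * (v x - v 0)
      = -∫ y, (hf N (‖y - x‖ ^ 2) - hf N (‖y‖ ^ 2)) * laplacian v y := by
  have := nontrivial_euclidean hN
  have hc := continuous_laplacian hv
  have hcs := hasCompactSupport_laplacian hs
  have hmem : ∀ᶠ ε : ℝ in nhdsWithin 0 (Ioi 0), 0 < ε := eventually_mem_nhdsWithin
  have hae : ∀ᵐ y : EuclideanSpace ℝ (Fin N), y ≠ x ∧ y ≠ 0 := by
    have h1 : ∀ z : EuclideanSpace ℝ (Fin N), ∀ᵐ y : EuclideanSpace ℝ (Fin N), y ≠ z := by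
      intro z
      rw [ae_iff]; simp
    filter_upwards [h1 x, h1 0] with y h1 h2 using ⟨h1, h2⟩
  have hcont : ∀ (z : EuclideanSpace ℝ (Fin N)) {ε : ℝ}, 0 < ε →
      Continuous fun y : EuclideanSpace ℝ (Fin N) => hf N (‖y - z‖ ^ 2 + ε ^ 2) := by
    intro z ε hε
    exact (contDiff_hf_reg (N := N) (e := ε ^ 2) (by positivity)).continuous.comp
      (continuous_id.sub continuous_const)
  have hintg : ∀ (z : EuclideanSpace ℝ (Fin N)) {ε : ℝ}, 0 < ε →
      Integrable fun y => hf N (‖y - z‖ ^ 2 + ε ^ 2) * laplacian v y := fun z ε hε =>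
    ((hcont z hε).mul hc).integrable_of_hasCompactSupport hcs.mul_left
  have hL : Tendsto (fun ε : ℝ => ∫ y, (hf N (‖y - x‖ ^ 2 + ε ^ 2) - hf N (‖y‖ ^ 2 + ε ^ 2))
      * laplacian v y) (nhdsWithin 0 (Ioi 0))
      (nhds (∫ y, (hf N (‖y - x‖ ^ 2) - hf N (‖y‖ ^ 2)) * laplacian v y)) := by
    have hb1 := integrable_kernel_bound hN hc hcs x
    have hb0 := integrable_kernel_bound hN hc hcs 0
    simp only [sub_zero] at hb0
    refine tendsto_integral_filter_of_dominated_convergence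
      (fun y => ‖x‖ * (‖y - x‖⁻¹ ^ (N - 1) * |laplacian v y| + ‖y‖⁻¹ ^ (N - 1) * |laplacian v y|))
      ?_ ?_ ((hb1.add hb0).const_mul _) ?_
    · filter_upwards [hmem] with ε hε
      have h0 := hcont 0 hε
      simp only [sub_zero] at h0
      exact (((hcont x hε).sub h0).mul hc).aestronglyMeasurable
    · refine Eventually.of_forall fun ε => ?_
      filter_upwards [hae] with y hy
      rw [norm_mul, Real.norm_eq_abs, Real.norm_eq_abs, ← add_mul, ← mul_assoc]
      gcongr
      exact abs_kernel_le hN (by positivity) hy.1 hy.2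
    · filter_upwards [hae] with y hy
      refine Tendsto.mul_const _ (Tendsto.sub ?_ ?_)
      · have hp : 0 < ‖y - x‖ ^ 2 := by have := sub_ne_zero.2 hy.1; positivity
        have h1 : Tendsto (fun ε : ℝ => ‖y - x‖ ^ 2 + ε ^ 2) (nhds 0) (nhds (‖y - x‖ ^ 2)) := by
          have : Continuous fun ε : ℝ => ‖y - x‖ ^ 2 + ε ^ 2 := by fun_prop
          simpa using this.tendsto 0
        exact (((hasDerivAt_hf N hp).continuousAt.tendsto).comp h1).mono_left nhdsWithin_le_nhds
      · have hp : 0 < ‖y‖ ^ 2 := by have := hy.2; positivity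
        have h1 : Tendsto (fun ε : ℝ => ‖y‖ ^ 2 + ε ^ 2) (nhds 0) (nhds (‖y‖ ^ 2)) := by
          have : Continuous fun ε : ℝ => ‖y‖ ^ 2 + ε ^ 2 := by fun_prop
          simpa using this.tendsto 0
        exact (((hasDerivAt_hf N hp).continuousAt.tendsto).comp h1).mono_left nhdsWithin_le_nhds
  have hR := ((tendsto_reg hv.continuous hs x).neg).sub ((tendsto_reg hv.continuous hs 0).neg)
  have hL' := hL.congr' (f₂ := fun ε =>
    (-∫ w, N * (1 + ‖w‖ ^ 2) ^ (-((N : ℝ) + 2) / 2) * v (ε • w + x))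
      - -∫ w, N * (1 + ‖w‖ ^ 2) ^ (-((N : ℝ) + 2) / 2) * v (ε • w + 0)) (by
    filter_upwards [hmem] with ε hε
    have h0 := hintg 0 hε
    have r0 := reg_representation hv hs hε 0
    rw [← reg_representation hv hs hε x, ← r0]
    simp only [sub_zero] at h0 ⊢
    rw [← integral_sub (hintg x hε) h0]
    congr 1
    ext y
    ring)
  have := tendsto_nhds_unique hL' hR
  rw [this]
  ring

end

/-! ### Radial integrals -/

section

variable {N : ℕ}

/-- `f` is integrable with integral `c`. -/
def HasInt (f : EuclideanSpace ℝ (Fin N) → ℝ) (c : ℝ) : Prop :=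
  Integrable f ∧ ∫ y, f y = c

lemma HasInt.add {f g : EuclideanSpace ℝ (Fin N) → ℝ} {a b : ℝ} (hf : HasInt f a)
    (hg : HasInt g b) : HasInt (fun y => f y + g y) (a + b) :=
  ⟨hf.1.add hg.1, by rw [integral_add hf.1 hg.1, hf.2, hg.2]⟩

lemma HasInt.const_mul {f : EuclideanSpace ℝ (Fin N) → ℝ} {a : ℝ} (c : ℝ) (hf : HasInt f a) :
    HasInt (fun y => c * f y) (c * a) :=
  ⟨hf.1.const_mul c, by rw [integral_const_mul, hf.2]⟩

lemma HasInt.sum {ι : Type} {s : Finset ι} {f : ι → EuclideanSpace ℝ (Fin N) → ℝ} {a : ι → ℝ}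
    (hf : ∀ i ∈ s, HasInt (f i) (a i)) : HasInt (fun y => ∑ i ∈ s, f i y) (∑ i ∈ s, a i) :=
  ⟨integrable_finsetSum _ fun i hi => (hf i hi).1, by
    rw [integral_finsetSum _ fun i hi => (hf i hi).1]
    exact Finset.sum_congr rfl fun i hi => (hf i hi).2⟩

lemma HasInt.comp_sub {f : EuclideanSpace ℝ (Fin N) → ℝ} {a : ℝ} (hf : HasInt f a)
    (x : EuclideanSpace ℝ (Fin N)) : HasInt (fun y => f (y - x)) a :=
  ⟨hf.1.comp_sub_right x, by rw [integral_sub_right_eq_self f x, hf.2]⟩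

/-- The surface area of the unit sphere. -/
noncomputable def sig (N : ℕ) : ℝ := N * volume.real (ball (0 : EuclideanSpace ℝ (Fin N)) 1)

lemma sig_nonneg (N : ℕ) : 0 ≤ sig N := by unfold sig; positivity

lemma hasInt_radial (hN : 2 ≤ N) {f h : ℝ → ℝ} {s : Set ℝ} (hs : MeasurableSet s)
    (hs0 : s ⊆ Ioi 0) (hfh : ∀ r > 0, r ^ (N - 1) * f r = s.indicator h r)
    (hh : IntegrableOn h s) {c : ℝ} (hc : ∫ r in s, h r = c) :
    HasInt (fun y : EuclideanSpace ℝ (Fin N) => f ‖y‖) (sig N * c) := by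
  have := nontrivial_euclidean hN
  constructor
  · rw [integrable_fun_norm_addHaar volume (f := f)]
    simp only [finrank_euclideanSpace, Fintype.card_fin, smul_eq_mul]
    rw [integrableOn_congr_fun (g := s.indicator h) (s := Ioi 0) (fun r hr => hfh r hr)
      measurableSet_Ioi]
    exact (hh.integrable_indicator hs).integrableOn
  · rw [integral_fun_norm_addHaar volume f]
    simp only [finrank_euclideanSpace, Fintype.card_fin, smul_eq_mul, nsmul_eq_mul]
    rw [setIntegral_congr_fun (g := s.indicator h) measurableSet_Ioi (fun r hr => hfh r hr),
      setIntegral_indicator hs, inter_eq_self_of_subset_right hs0, hc, sig]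
    ring

lemma pow_mul_rpow (hN : 2 ≤ N) {r t : ℝ} (hr : 0 < r) :
    r ^ (N - 1) * r ^ (t - N) = r ^ (t - 1) := by
  rw [← Real.rpow_natCast, ← Real.rpow_add hr]
  congr 1
  rw [Nat.cast_sub (by lia)]
  push_cast
  ring

lemma hasInt_inner (hN : 2 ≤ N) {t R : ℝ} (ht : 0 < t) (hR : 0 < R) :
    HasInt (fun y : EuclideanSpace ℝ (Fin N) => if ‖y‖ < R then ‖y‖ ^ (t - N) else 0)
      (sig N * (R ^ t / t)) := by
  refine hasInt_radial hN (f := fun r => if r < R then r ^ (t - N) else 0)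
    (h := fun r => r ^ (t - 1)) (s := Ioo 0 R) measurableSet_Ioo (fun r hr => hr.1)
    (fun r hr => ?_) ?_ ?_
  · by_cases h : r < R
    · have : r ∈ Ioo 0 R := ⟨hr, h⟩
      simp only [h, if_true, indicator_of_mem this]
      exact pow_mul_rpow hN hr
    · have : r ∉ Ioo 0 R := fun h' => h h'.2
      simp [h]
  · have := (intervalIntegral.intervalIntegrable_rpow' (a := 0) (b := R) (r := t - 1)
      (by linarith))
    rw [intervalIntegrable_iff_integrableOn_Ioo_of_le hR.le] at this
    exact this
  · rw [← integral_Ioc_eq_integral_Ioo, ← intervalIntegral.integral_of_le hR.le,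
      integral_rpow (Or.inl (by linarith))]
    rw [sub_add_cancel, Real.zero_rpow ht.ne', sub_zero]

lemma hasInt_outer (hN : 2 ≤ N) {t R : ℝ} (ht : 0 < t) (hR : 0 < R) :
    HasInt (fun y : EuclideanSpace ℝ (Fin N) => if R ≤ ‖y‖ then ‖y‖ ^ (-t - N) else 0)
      (sig N * (R ^ (-t) / t)) := by
  refine hasInt_radial hN (f := fun r => if R ≤ r then r ^ (-t - N) else 0)
    (h := fun r => r ^ (-t - 1)) (s := Ici R) measurableSet_Ici (fun r hr => hR.trans_le hr)
    (fun r hr => ?_) ?_ ?_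
  · by_cases h : R ≤ r
    · have : r ∈ Ici R := h
      simp only [h, if_true, indicator_of_mem this]
      exact pow_mul_rpow hN hr
    · have : r ∉ Ici R := h
      simp [h]
  · rw [integrableOn_Ici_iff_integrableOn_Ioi]
    exact integrableOn_Ioi_rpow_of_lt (by linarith) hR
  · rw [integral_Ici_eq_integral_Ioi, integral_Ioi_rpow_of_lt (by linarith) hR, sub_add_cancel]
    rw [neg_div_neg_eq]

/-! ### Tail of the kernel expansion -/

lemma tail_sum (q n : ℕ) (hn : 1 ≤ n) :
    ∃ S, HasSum (fun j : ℕ => (1 / (n : ℝ)) * (Nat.factorial q * 2 ^ q * Real.exp (1 / 2)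
      * Real.exp (-(1 / (2 * n))) ^ j)) S ∧ S ≤ 3 * (Nat.factorial q * 2 ^ q * Real.exp (1 / 2)) := by
  have hn' : (1 : ℝ) ≤ n := by exact_mod_cast hn
  have hx : (0 : ℝ) < 1 / (2 * n) := by positivity
  have h1 : Real.exp (-(1 / (2 * n : ℝ))) < 1 := by
    rw [Real.exp_lt_one_iff]; linarith
  refine ⟨_, ((hasSum_geometric_of_lt_one (Real.exp_pos _).le h1).mul_left _).mul_left _, ?_⟩
  have h2 : (1 - Real.exp (-(1 / (2 * n : ℝ))))⁻¹ ≤ 1 + 2 * n := by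
    rw [inv_le_comm₀ (by linarith) (by positivity)]
    have h3 : Real.exp (-(1 / (2 * n : ℝ))) ≤ (1 + 1 / (2 * n : ℝ))⁻¹ := by
      rw [Real.exp_neg]
      gcongr
      linarith [Real.add_one_le_exp (1 / (2 * n : ℝ))]
    have h4 : (1 + 1 / (2 * n : ℝ))⁻¹ = 1 - (1 + 2 * (n : ℝ))⁻¹ := by field_simp; ring
    linarith
  set K : ℝ := Nat.factorial q * 2 ^ q * Real.exp (1 / 2) with hK
  have hK0 : 0 < K := by positivity
  calc 1 / (n : ℝ) * (K * (1 - Real.exp (-(1 / (2 * n : ℝ))))⁻¹)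
      ≤ 1 / (n : ℝ) * (K * (1 + 2 * n)) := by gcongr
    _ = K * (1 / n + 2) := by field_simp
    _ ≤ K * (1 + 2) := by
        gcongr
        rw [div_le_one (by linarith)]; exact hn'
    _ = 3 * K := by ring

lemma tail_term (q n j : ℕ) (hn : 1 ≤ n) {θ : ℝ} (h0 : 0 ≤ θ) (hθ : θ ≤ Real.exp (-(1 / n))) :
    ((n : ℝ) + j) ^ q / (n + j) * θ ^ (n + j) ≤ (n : ℝ) ^ q * θ ^ n *
      ((1 / (n : ℝ)) * (Nat.factorial q * 2 ^ q * Real.exp (1 / 2)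
        * Real.exp (-(1 / (2 * n))) ^ j)) := by
  have hn' : (1 : ℝ) ≤ n := by exact_mod_cast hn
  have hn0 : (0 : ℝ) < n := by linarith
  have hj : (0 : ℝ) ≤ j := by positivity
  have h1 : ((n : ℝ) + j) ^ q = n ^ q * (1 + j / n) ^ q := by
    rw [← mul_pow]; congr 1; field_simp
  have h2 : (1 + (j : ℝ) / n) ^ q ≤ Nat.factorial q * 2 ^ q * Real.exp ((1 + j / n) / 2) := by
    have := Real.pow_div_factorial_le_exp ((1 + (j : ℝ) / n) / 2) (by positivity) q
    rw [div_le_iff₀ (by positivity), div_pow, div_le_iff₀ (by positivity)] at this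
    linarith
  have h3 : θ ^ j ≤ Real.exp (-(j / n)) := by
    calc θ ^ j ≤ Real.exp (-(1 / n)) ^ j := by gcongr
      _ = _ := by rw [← Real.exp_nat_mul]; congr 1; ring
  have h4 : Real.exp ((1 + j / n) / 2) * Real.exp (-(j / (n : ℝ)))
      = Real.exp (1 / 2) * Real.exp (-(1 / (2 * n))) ^ j := by
    rw [← Real.exp_nat_mul, ← Real.exp_add, ← Real.exp_add]; congr 1; field_simp; ring
  calc ((n : ℝ) + j) ^ q / (n + j) * θ ^ (n + j)
      ≤ ((n : ℝ) + j) ^ q / n * θ ^ (n + j) := by gcongr; linarith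
    _ = n ^ q * θ ^ n * (1 / n * ((1 + j / n) ^ q * θ ^ j)) := by rw [h1, pow_add]; ring
    _ ≤ n ^ q * θ ^ n * (1 / n * ((Nat.factorial q * 2 ^ q * Real.exp ((1 + j / n) / 2))
          * Real.exp (-(j / n)))) := by gcongr
    _ = _ := by rw [mul_assoc (_ * _) (Real.exp _), h4]; ring

/-- Remainder of the kernel expansion after `m` terms. The constant `T` does not depend on `m`,
provided `‖y‖` exceeds `‖x‖` by a factor `exp (1 / (m + 1))`. -/
lemma tail_bound (hN : 2 ≤ N) : ∃ T > 0, ∀ (m : ℕ) (x y : EuclideanSpace ℝ (Fin N)), 0 < ‖y‖ →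
    ‖x‖ / ‖y‖ ≤ Real.exp (-(1 / ((m : ℝ) + 1))) →
    |hf N (‖x - y‖ ^ 2) - hf N (‖y‖ ^ 2) - ∑ k ∈ Finset.range m,
      ‖y‖ ^ (-mu N) * MvPolynomial.eval (fun i => x i) (pol (inv1 y) (k + 1))|
      ≤ T * (‖y‖ ^ (-mu N) * ((m : ℝ) + 1) ^ (N - 2) * (‖x‖ / ‖y‖) ^ (m + 1)) := by
  refine ⟨3 * (Nat.factorial (N - 2) * 2 ^ (N - 2) * Real.exp (1 / 2)), by positivity,
    fun m x y hy hxy => ?_⟩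
  have hlt : ‖x‖ < ‖y‖ := by
    have : Real.exp (-(1 / ((m : ℝ) + 1))) < 1 := by
      rw [Real.exp_lt_one_iff]
      have : 0 < 1 / ((m : ℝ) + 1) := by positivity
      linarith
    have h := hxy.trans_lt this
    rwa [div_lt_one hy] at h
  have hs := (hasSum_nat_add_iff' m).2 (kernel_expansion hN hlt)
  obtain ⟨S, hS, hS3⟩ := tail_sum (N - 2) (m + 1) (by lia)
  have hg := hS.mul_left (‖y‖ ^ (-mu N) * ((m : ℝ) + 1) ^ (N - 2) * (‖x‖ / ‖y‖) ^ (m + 1))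
  have h := hs.norm_le_of_bounded hg (fun j => ?_)
  · rw [Real.norm_eq_abs] at h
    refine h.trans ?_
    rw [mul_comm _ S]
    gcongr
  · rw [norm_mul, Real.norm_of_nonneg (by positivity), Real.norm_eq_abs, mul_assoc, mul_assoc]
    gcongr
    refine (abs_eval_pol_le hN x (inv1 y) (j + m)).trans ?_
    have ht := tail_term (N - 2) (m + 1) j (by lia) (θ := ‖x‖ / ‖y‖) (by positivity)
      (by push_cast; exact hxy)
    rw [norm_inv1, ← div_eq_mul_inv]
    push_cast at ht ⊢
    rw [show j + m + 1 = m + 1 + j by lia, show (j : ℝ) + m + 1 = m + 1 + j by ring]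
    rw [← mul_assoc]
    exact ht

end

/-! ### Approximation of compactly supported functions by harmonic polynomials -/

section

variable {N : ℕ}

lemma distToInt_facts {β : ℝ} (hβ : 0 < β) (hz : ∀ z : ℤ, (z : ℝ) ≠ β) :
    0 < distToInt β ∧ distToInt β ≤ 1 / 2 ∧ distToInt β ≤ β - ⌊β⌋₊ ∧
      distToInt β ≤ ⌊β⌋₊ + 1 - β := by
  have h1 : Int.fract β = β - ⌊β⌋₊ := by
    rw [Int.fract, ← natCast_floor_eq_intCast_floor hβ.le]
  have h2 : 0 < Int.fract β := by
    rw [Int.fract_pos]; exact fun h => hz _ h.symm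
  have h3 := Int.fract_lt_one β
  unfold distToInt
  refine ⟨lt_min h2 (by linarith), ?_, h1 ▸ min_le_left _ _, ?_⟩
  · rcases le_total (Int.fract β) (1 / 2) with h | h
    · exact (min_le_left _ _).trans h
    · exact (min_le_right _ _).trans (by linarith)
  · exact (min_le_right _ _).trans (by rw [h1]; linarith)

/-- Partial fractions for the low-degree terms: only the factor closest to zero feels the distance
from `β` to the integers. -/
lemma sum_inv_le {β : ℝ} (hβ : 0 < β) (hz : ∀ z : ℤ, (z : ℝ) ≠ β) :
    ∑ k ∈ Finset.range (⌊β⌋₊ + 2), 1 / (((k : ℝ) + 1) * (β + 1 - k)) ≤ 2 / distToInt β := by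
  obtain ⟨hd0, hd1, hd2, -⟩ := distToInt_facts hβ hz
  set d := distToInt β
  have hfl : (⌊β⌋₊ : ℝ) ≤ β := Nat.floor_le hβ.le
  have hterm : ∀ k ∈ Finset.range (⌊β⌋₊ + 2),
      1 / (((k : ℝ) + 1) * (β + 1 - k)) ≤ 1 / (β + 2) * (2 / d) := by
    intro k hk
    have hk' : (k : ℝ) ≤ ⌊β⌋₊ + 1 := by
      have := Finset.mem_range.1 hk
      exact_mod_cast (by lia : k ≤ ⌊β⌋₊ + 1)
    have ht : d ≤ β + 1 - k := by linarith
    have ht0 : 0 < β + 1 - k := by linarith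
    have hk0 : (0 : ℝ) < (k : ℝ) + 1 := by positivity
    have e : 1 / (((k : ℝ) + 1) * (β + 1 - k))
        = 1 / (β + 2) * (1 / (k + 1) + 1 / (β + 1 - k)) := by
      field_simp; ring
    rw [e]
    have h1 : 1 / ((k : ℝ) + 1) ≤ 1 / d := by
      apply one_div_le_one_div_of_le hd0
      have : (0 : ℝ) ≤ k := by positivity
      linarith
    have h2 : 1 / (β + 1 - k) ≤ 1 / d := one_div_le_one_div_of_le hd0 ht
    gcongr
    calc _ ≤ 1 / d + 1 / d := add_le_add h1 h2
      _ = 2 / d := by ring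
  refine (Finset.sum_le_card_nsmul _ _ _ hterm).trans ?_
  rw [Finset.card_range, nsmul_eq_mul, ← mul_assoc]
  have h3 : ((⌊β⌋₊ + 2 : ℕ) : ℝ) * (1 / (β + 2)) ≤ 1 := by
    rw [mul_one_div, div_le_one (by linarith)]
    push_cast; linarith
  calc _ ≤ 1 * (2 / d) := by gcongr
    _ = _ := one_mul _

lemma rpow_combine (N k : ℕ) {s : ℝ} (hs : 0 < s) (β : ℝ) :
    s⁻¹ ^ (k + 1) * (s ^ (-mu N) * s ^ β) = s ^ ((β + 1 - k) - N) := by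
  rw [← Real.rpow_natCast, Real.inv_rpow hs.le, ← Real.rpow_neg hs.le, ← Real.rpow_add hs,
    ← Real.rpow_add hs]
  congr 1
  rw [mu]; push_cast; ring

lemma inv_pow_eq_rpow (hN : 2 ≤ N) {s : ℝ} (hs : 0 < s) :
    s⁻¹ ^ (N - 1) = s ^ ((1 : ℝ) - N) := by
  rw [← Real.rpow_natCast, Real.inv_rpow hs.le, ← Real.rpow_neg hs.le, Nat.cast_sub (by lia)]
  congr 1
  push_cast; ring

/-- Majorant of the remainder kernel times `‖y‖ ^ β`, after `m` terms. The kernel is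
estimated term by term for `‖y‖ < exp (1 / (m + 1)) ‖x‖`, and through its tail otherwise. -/
noncomputable def majorant (N : ℕ) (T β : ℝ) (m : ℕ) (x y : EuclideanSpace ℝ (Fin N)) : ℝ :=
  (3 * ‖x‖ ^ (β + 1)) * ((if ‖y - x‖ < 4 * ‖x‖ then ‖y - x‖ ^ ((1 : ℝ) - N) else 0)
      + (if ‖y‖ < 4 * ‖x‖ then ‖y‖ ^ ((1 : ℝ) - N) else 0))
    + ∑ k ∈ Finset.range m, (((k : ℝ) + 1) ^ (N - 2) / (k + 1) * ‖x‖ ^ (k + 1)) *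
      (if ‖y‖ < Real.exp (1 / ((m : ℝ) + 1)) * ‖x‖ then ‖y‖ ^ ((β + 1 - k) - N) else 0)
    + (T * ((m : ℝ) + 1) ^ (N - 2) * ‖x‖ ^ (m + 1)) *
      (if Real.exp (1 / ((m : ℝ) + 1)) * ‖x‖ ≤ ‖y‖ then ‖y‖ ^ (-(m - 1 - β) - N) else 0)

lemma exp_lt_three {s : ℝ} (hs : s ≤ 1) : Real.exp s < 3 :=
  (Real.exp_le_exp.2 hs).trans_lt (by linarith [Real.exp_one_lt_d9])

/-- The distance from `β` to the integers enters through the two radial integrals whose exponents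
are closest to the borderline: the last term of the sum, and the tail. -/
lemma hasInt_majorant (hN : 2 ≤ N) (T : ℝ) {β : ℝ} (hβ : 0 < β) (hz : ∀ z : ℤ, (z : ℝ) ≠ β)
    {x : EuclideanSpace ℝ (Fin N)} (hx : 0 < ‖x‖) (hT : 0 < T) :
    ∃ c ≤ sig N * (30 + T) * ((⌊β⌋₊ + 2 : ℕ) + 1) ^ (N - 2) / distToInt β * ‖x‖ ^ (β + 2),
      HasInt (majorant N T β (⌊β⌋₊ + 2) x) c := by
  obtain ⟨hd0, hd1, hd2, hd3⟩ := distToInt_facts hβ hz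
  have hfl : (⌊β⌋₊ : ℝ) ≤ β := Nat.floor_le hβ.le
  set d := distToInt β
  set m : ℕ := ⌊β⌋₊ + 2 with hm
  have hmr : (m : ℝ) = ⌊β⌋₊ + 2 := by rw [hm]; push_cast; ring
  set τ := Real.exp (1 / ((m : ℝ) + 1)) with hτ
  have hτ0 : 0 < τ := Real.exp_pos _
  have hτ1 : 1 ≤ τ := Real.one_le_exp (by positivity)
  have hi := hasInt_inner hN (t := 1) (R := 4 * ‖x‖) one_pos (by positivity)
  have ht : ∀ k ∈ Finset.range m, 0 < β + 1 - k := by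
    intro k hk
    have hk' : (k : ℝ) ≤ ⌊β⌋₊ + 1 := by
      have := Finset.mem_range.1 hk
      exact_mod_cast (by lia : k ≤ ⌊β⌋₊ + 1)
    linarith
  have ht' : d ≤ m - 1 - β := by linarith
  have hj := HasInt.sum (s := Finset.range m) fun k hk =>
    (hasInt_inner hN (ht k hk) (R := τ * ‖x‖) (by positivity)).const_mul
      (((k : ℝ) + 1) ^ (N - 2) / (k + 1) * ‖x‖ ^ (k + 1))
  have ho := (hasInt_outer hN (t := m - 1 - β) (R := τ * ‖x‖) (by linarith)
    (by positivity)).const_mul (T * ((m : ℝ) + 1) ^ (N - 2) * ‖x‖ ^ (m + 1))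
  refine ⟨_, ?_, ((((hi.comp_sub x).add hi).const_mul (3 * ‖x‖ ^ (β + 1))).add hj).add ho⟩
  have hs := sig_nonneg N
  set r := ‖x‖ with hr
  set q : ℝ := ((m : ℝ) + 1) ^ (N - 2) with hq
  have hq1 : 1 ≤ q := one_le_pow₀ (by linarith [show (0 : ℝ) ≤ m by positivity])
  have e1 : (3 * r ^ (β + 1)) * (sig N * ((4 * r) ^ (1 : ℝ) / 1) + sig N * ((4 * r) ^ (1 : ℝ) / 1))
      = 24 * sig N * r ^ (β + 2) := by
    have : r ^ (β + 2) = r ^ (β + 1) * r := by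
      rw [← Real.rpow_add_one hx.ne']; congr 1; ring
    rw [Real.rpow_one, this]
    ring
  have h1d : 1 ≤ q / d := by
    rw [le_div_iff₀ hd0]; linarith
  have b1 : 24 * sig N * r ^ (β + 2) ≤ 24 * sig N * r ^ (β + 2) * (q / d) :=
    le_mul_of_one_le_right (by positivity) h1d
  have b2 : ∑ k ∈ Finset.range m, (((k : ℝ) + 1) ^ (N - 2) / (k + 1) * r ^ (k + 1)) *
      (sig N * ((τ * r) ^ (β + 1 - k) / (β + 1 - k)))
      ≤ 6 * sig N * r ^ (β + 2) * (q / d) := by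
    have hterm : ∀ k ∈ Finset.range m, (((k : ℝ) + 1) ^ (N - 2) / (k + 1) * r ^ (k + 1)) *
      (sig N * ((τ * r) ^ (β + 1 - k) / (β + 1 - k)))
      ≤ (3 * sig N * r ^ (β + 2) * q) * (1 / (((k : ℝ) + 1) * (β + 1 - k))) := by
      intro k hk
      have htk := ht k hk
      have hkm : (k : ℝ) ≤ m := by exact_mod_cast (Finset.mem_range.1 hk).le
      have h1 : ((k : ℝ) + 1) ^ (N - 2) ≤ q := by rw [hq]; gcongr
      have h2 : τ ^ (β + 1 - k) ≤ 3 := by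
        rw [hτ, ← Real.exp_mul]
        refine (exp_lt_three ?_).le
        rw [one_div_mul_eq_div, div_le_one (by positivity)]
        have : (0 : ℝ) ≤ k := by positivity
        linarith
      have h3 : r ^ (k + 1) * r ^ (β + 1 - k) = r ^ (β + 2) := by
        rw [← Real.rpow_natCast, ← Real.rpow_add hx]; congr 1; push_cast; ring
      rw [Real.mul_rpow hτ0.le hx.le]
      calc _ = sig N * ((k : ℝ) + 1) ^ (N - 2) * τ ^ (β + 1 - k) * (r ^ (k + 1) * r ^ (β + 1 - k))
            * (1 / (((k : ℝ) + 1) * (β + 1 - k))) := by field_simp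
        _ ≤ sig N * q * 3 * r ^ (β + 2) * (1 / (((k : ℝ) + 1) * (β + 1 - k))) := by
            rw [h3]; gcongr
        _ = _ := by ring
    refine (Finset.sum_le_sum hterm).trans ?_
    rw [← Finset.mul_sum]
    calc _ ≤ (3 * sig N * r ^ (β + 2) * q) * (2 / d) := by
          gcongr
          exact sum_inv_le hβ hz
      _ = _ := by ring
  have b3 : (T * q * r ^ (m + 1)) * (sig N * ((τ * r) ^ (-(m - 1 - β)) / (m - 1 - β)))
      ≤ T * sig N * r ^ (β + 2) * (q / d) := by
    have h1 : (τ * r) ^ (-(m - 1 - β)) ≤ r ^ (-(m - 1 - β)) :=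
      Real.rpow_le_rpow_of_nonpos hx (le_mul_of_one_le_left hx.le hτ1) (by linarith)
    have h3 : r ^ (m + 1) * r ^ (-(m - 1 - β)) = r ^ (β + 2) := by
      rw [← Real.rpow_natCast, ← Real.rpow_add hx]; congr 1; push_cast; ring
    calc _ ≤ (T * q * r ^ (m + 1)) * (sig N * (r ^ (-(m - 1 - β)) / d)) := by gcongr
      _ = T * q * sig N * (r ^ (m + 1) * r ^ (-(m - 1 - β))) / d := by ring
      _ = _ := by rw [h3]; ring
  rw [e1]
  calc _ ≤ 24 * sig N * r ^ (β + 2) * (q / d) + 6 * sig N * r ^ (β + 2) * (q / d)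
        + T * sig N * r ^ (β + 2) * (q / d) := add_le_add (add_le_add b1 b2) b3
    _ = _ := by ring

lemma pointwise_majorant (hN : 2 ≤ N) {T : ℝ}
    (hT : ∀ (m : ℕ) (x y : EuclideanSpace ℝ (Fin N)), 0 < ‖y‖ →
      ‖x‖ / ‖y‖ ≤ Real.exp (-(1 / ((m : ℝ) + 1))) →
      |hf N (‖x - y‖ ^ 2) - hf N (‖y‖ ^ 2) - ∑ k ∈ Finset.range m,
        ‖y‖ ^ (-mu N) * MvPolynomial.eval (fun i => x i) (pol (inv1 y) (k + 1))|
        ≤ T * (‖y‖ ^ (-mu N) * ((m : ℝ) + 1) ^ (N - 2) * (‖x‖ / ‖y‖) ^ (m + 1)))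
    {β : ℝ} (hβ : 0 < β) {m : ℕ} (hm : β ≤ m + 1) {x y : EuclideanSpace ℝ (Fin N)} (hx : 0 < ‖x‖)
    (hy : 0 < ‖y‖) (hxy : y ≠ x) :
    |hf N (‖y - x‖ ^ 2) - hf N (‖y‖ ^ 2) - ∑ k ∈ Finset.range m,
        ‖y‖ ^ (-mu N) * MvPolynomial.eval (fun i => x i) (pol (inv1 y) (k + 1))| * ‖y‖ ^ β
      ≤ majorant N T β m x y := by
  set τ := Real.exp (1 / ((m : ℝ) + 1)) with hτ
  have hτ0 : 0 < τ := Real.exp_pos _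
  have hm0 : (0 : ℝ) < (m : ℝ) + 1 := by positivity
  by_cases h : τ * ‖x‖ ≤ ‖y‖
  · have h1 := hT m x y hy (by
      rw [Real.exp_neg, div_le_iff₀ hy, ← hτ, inv_mul_eq_div, le_div_iff₀ hτ0]; linarith)
    rw [norm_sub_rev x y] at h1
    have h2 : T * (‖y‖ ^ (-mu N) * ((m : ℝ) + 1) ^ (N - 2) * (‖x‖ / ‖y‖) ^ (m + 1)) * ‖y‖ ^ β
        = (T * ((m : ℝ) + 1) ^ (N - 2) * ‖x‖ ^ (m + 1)) * ‖y‖ ^ (-(m - 1 - β) - N) := by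
      rw [show -((m : ℝ) - 1 - β) - N = (β + 1 - m) - N by ring, ← rpow_combine N m hy β,
        div_eq_mul_inv, mul_pow]
      ring
    have h3 := mul_le_mul_of_nonneg_right h1 (by positivity : 0 ≤ ‖y‖ ^ β)
    rw [h2] at h3
    refine h3.trans ?_
    unfold majorant
    rw [← hτ, if_pos h]
    refine le_add_of_nonneg_left (add_nonneg ?_ (Finset.sum_nonneg fun k _ => ?_))
    · refine mul_nonneg (by positivity) (add_nonneg ?_ ?_) <;> split_ifs <;> positivity
    · refine mul_nonneg (by positivity) ?_
      split_ifs <;> positivity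
  · have h' := not_le.1 h
    have hτ3 : τ < 3 := exp_lt_three (by
      rw [div_le_one hm0]; linarith [show (0 : ℝ) ≤ m by positivity])
    have hy3 : ‖y‖ < 3 * ‖x‖ := h'.trans (by gcongr)
    have hy4 : ‖y‖ < 4 * ‖x‖ := by linarith
    have hyx4 : ‖y - x‖ < 4 * ‖x‖ := (norm_sub_le y x).trans_lt (by linarith)
    have hyβ : ‖y‖ ^ β ≤ 3 * ‖x‖ ^ β := by
      calc ‖y‖ ^ β ≤ (τ * ‖x‖) ^ β := by gcongr
        _ = τ ^ β * ‖x‖ ^ β := Real.mul_rpow hτ0.le hx.le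
        _ ≤ 3 * ‖x‖ ^ β := by
            gcongr
            rw [hτ, ← Real.exp_mul]
            refine (exp_lt_three ?_).le
            rw [one_div_mul_eq_div, div_le_one hm0]
            exact hm
    have hyx0 : 0 < ‖y - x‖ := norm_pos_iff.2 (sub_ne_zero.2 hxy)
    have hK := abs_kernel_le hN le_rfl hxy (norm_pos_iff.1 hy)
    simp only [add_zero] at hK
    rw [inv_pow_eq_rpow hN hyx0, inv_pow_eq_rpow hN hy] at hK
    have hS : |∑ k ∈ Finset.range m,
        ‖y‖ ^ (-mu N) * MvPolynomial.eval (fun i => x i) (pol (inv1 y) (k + 1))| * ‖y‖ ^ β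
        ≤ ∑ k ∈ Finset.range m, (((k : ℝ) + 1) ^ (N - 2) / (k + 1) * ‖x‖ ^ (k + 1)) *
          ‖y‖ ^ ((β + 1 - k) - N) := by
      refine (mul_le_mul_of_nonneg_right (Finset.abs_sum_le_sum_abs _ _) (by positivity)).trans ?_
      rw [Finset.sum_mul]
      refine Finset.sum_le_sum fun k _ => ?_
      have hb := abs_eval_pol_le hN x (inv1 y) k
      rw [norm_inv1] at hb
      rw [abs_mul, abs_of_pos (by positivity), ← rpow_combine N k hy β]
      calc _ ≤ ‖y‖ ^ (-mu N) * (((k : ℝ) + 1) ^ (N - 2) / (k + 1) * (‖x‖ * ‖y‖⁻¹) ^ (k + 1))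
            * ‖y‖ ^ β := by gcongr
        _ = _ := by rw [mul_pow]; ring
    have hfirst : |hf N (‖y - x‖ ^ 2) - hf N (‖y‖ ^ 2)| * ‖y‖ ^ β
        ≤ (3 * ‖x‖ ^ (β + 1)) * (‖y - x‖ ^ ((1 : ℝ) - N) + ‖y‖ ^ ((1 : ℝ) - N)) := by
      calc _ ≤ (‖x‖ * (‖y - x‖ ^ ((1 : ℝ) - N) + ‖y‖ ^ ((1 : ℝ) - N))) * (3 * ‖x‖ ^ β) := by
            gcongr
        _ = _ := by rw [Real.rpow_add_one hx.ne']; ring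
    unfold majorant
    rw [← hτ, if_neg h, if_pos hy4, if_pos hyx4, mul_zero, add_zero]
    simp only [if_pos h']
    refine le_trans ?_ (add_le_add hfirst hS)
    rw [← add_mul]
    gcongr
    exact abs_sub _ _

/-- Approximation of a compactly supported function whose Laplacian vanishes to order `β` at the
origin: the harmonic polynomial collects the terms of degree at most `⌊β⌋ + 2` in the expansion of
the Newtonian kernel. -/
lemma core (hN : 2 ≤ N) : ∃ T > 0, ∀ β A : ℝ, 0 < β → (∀ z : ℤ, (z : ℝ) ≠ β) → 0 ≤ A →
    ∀ v : EuclideanSpace ℝ (Fin N) → ℝ, ContDiff ℝ 2 v → HasCompactSupport v →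
    (∀ y, |laplacian v y| ≤ A * ‖y‖ ^ β) →
    ∃ P : MvPolynomial (Fin N) ℝ, P.totalDegree ≤ ⌊β⌋₊ + 2 ∧
      (∀ x : EuclideanSpace ℝ (Fin N), MvPolynomial.eval (fun i => x i) (polyLap P) = 0) ∧
      ∀ x, |v x - MvPolynomial.eval (fun i => x i) P|
        ≤ T * A * (β + 3) ^ (N - 2) / distToInt β * ‖x‖ ^ (β + 2) := by
  have := nontrivial_euclidean hN
  obtain ⟨T, hT0, hT⟩ := tail_bound hN
  have hκ := kap_pos hN
  have hs := sig_nonneg N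
  refine ⟨(kap N)⁻¹ * (sig N * (30 + T)) + 1, by positivity, ?_⟩
  intro β A hβ hz hA v hv hcs hΔ
  obtain ⟨hd0, hd1, hd2, hd3⟩ := distToInt_facts hβ hz
  have hfl : (⌊β⌋₊ : ℝ) ≤ β := Nat.floor_le hβ.le
  set m : ℕ := ⌊β⌋₊ + 2 with hm
  have hmr : (m : ℝ) = ⌊β⌋₊ + 2 := by rw [hm]; push_cast; ring
  set g := laplacian v with hg
  have hgc : Continuous g := continuous_laplacian hv
  have hgs : HasCompactSupport g := hasCompactSupport_laplacian hcs
  have hne : ∀ z : EuclideanSpace ℝ (Fin N), ∀ᵐ y : EuclideanSpace ℝ (Fin N), y ≠ z := by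
    intro z
    rw [ae_iff]; simp
  set ω : EuclideanSpace ℝ (Fin N) → ℝ := fun y => ‖y‖ ^ (-mu N) * g y with hω
  have hωm : Measurable ω := by
    have := hgc.measurable
    fun_prop
  obtain ⟨R, hR0, hR⟩ := hgs.isCompact.isBounded.subset_ball_lt 0 0
  have hintg : ∀ k, k < m → Integrable (fun y => ‖y‖⁻¹ ^ (k + 1) * |ω y|) := by
    intro k hk
    have hk' : (k : ℝ) ≤ ⌊β⌋₊ + 1 := by exact_mod_cast (by lia : k ≤ ⌊β⌋₊ + 1)
    refine ((hasInt_inner hN (t := β + 1 - k) (R := R) (by linarith) hR0).1.const_mul A).mono'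
      (by fun_prop : Measurable _).aestronglyMeasurable ?_
    filter_upwards [hne 0] with y hy
    have hy0 := norm_pos_iff.2 hy
    by_cases hyR : ‖y‖ < R
    · rw [if_pos hyR, ← rpow_combine N k hy0 β, Real.norm_of_nonneg (by positivity), hω, abs_mul,
        abs_of_pos (by positivity)]
      calc _ ≤ ‖y‖⁻¹ ^ (k + 1) * (‖y‖ ^ (-mu N) * (A * ‖y‖ ^ β)) := by
            gcongr
            exact hΔ y
        _ = _ := by ring
    · have h0 : g y = 0 := image_eq_zero_of_notMem_tsupport fun h => hyR (by simpa using hR h)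
      simp [hω, h0, hyR]
  have hPex : ∀ k, ∃ P : MvPolynomial (Fin N) ℝ, k < m → P.totalDegree ≤ k + 1 ∧
      (∀ x : EuclideanSpace ℝ (Fin N), MvPolynomial.eval (fun i => x i) (polyLap P) = 0) ∧
      ∀ x : EuclideanSpace ℝ (Fin N),
        Integrable (fun y => ω y * MvPolynomial.eval (fun i => x i) (pol (inv1 y) (k + 1))) ∧
        MvPolynomial.eval (fun i => x i) P
          = ∫ y, ω y * MvPolynomial.eval (fun i => x i) (pol (inv1 y) (k + 1)) := by
    intro k
    by_cases hk : k < m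
    · obtain ⟨P, hP⟩ := exists_poly_integral (k + 1) hωm (hintg k hk)
      exact ⟨P, fun _ => hP⟩
    · exact ⟨0, fun h => absurd h hk⟩
  choose Q hQ using hPex
  refine ⟨MvPolynomial.C (v 0) - MvPolynomial.C (kap N)⁻¹ * ∑ k : Fin m, Q k, ?_, ?_, ?_⟩
  · refine (MvPolynomial.totalDegree_sub _ _).trans (max_le (by simp) ?_)
    refine (MvPolynomial.totalDegree_mul _ _).trans ?_
    rw [MvPolynomial.totalDegree_C, zero_add]
    refine (MvPolynomial.totalDegree_finsetSum _ _).trans (Finset.sup_le fun k _ => ?_)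
    exact (hQ k k.2).1.trans k.2
  · intro x
    have hC : polyLap (MvPolynomial.C (v 0) : MvPolynomial (Fin N) ℝ) = 0 := by simp [polyLap]
    rw [polyLap_sub, polyLap_C_mul, polyLap_sum, hC]
    simp only [map_sub, map_mul, map_sum, map_zero]
    rw [Finset.sum_eq_zero fun (k : Fin m) _ => (hQ k k.2).2.1 x]
    simp
  · intro x
    -- the remainder is the integral of the truncated kernel against the Laplacian
    have hrep : kap N * (v x - MvPolynomial.eval (fun i => x i)
        (MvPolynomial.C (v 0) - MvPolynomial.C (kap N)⁻¹ * ∑ k : Fin m, Q k))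
        = -∫ y, (hf N (‖y - x‖ ^ 2) - hf N (‖y‖ ^ 2) - ∑ k ∈ Finset.range m,
          ‖y‖ ^ (-mu N) * MvPolynomial.eval (fun i => x i) (pol (inv1 y) (k + 1))) * g y := by
      have hKi : Integrable fun y => (hf N (‖y - x‖ ^ 2) - hf N (‖y‖ ^ 2)) * g y := by
        have hb1 := integrable_kernel_bound hN hgc hgs x
        have hb0 := integrable_kernel_bound hN hgc hgs 0
        simp only [sub_zero] at hb0
        have hfm : Measurable (hf N) := by
          unfold hf
          split_ifs <;> fun_prop
        have hgm := hgc.measurable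
        refine ((hb1.add hb0).const_mul ‖x‖).mono'
          (Measurable.aestronglyMeasurable (by fun_prop)) ?_
        filter_upwards [hne 0, hne x] with y hy hyx
        have := abs_kernel_le hN le_rfl hyx hy
        simp only [add_zero] at this
        rw [norm_mul, Real.norm_eq_abs, Real.norm_eq_abs]
        refine (mul_le_mul_of_nonneg_right this (abs_nonneg _)).trans_eq ?_
        simp only [Pi.add_apply]
        ring
      have hSi : ∀ k ∈ Finset.range m, Integrable fun y =>
          ω y * MvPolynomial.eval (fun i => x i) (pol (inv1 y) (k + 1)) := fun k hk =>
        ((hQ k (Finset.mem_range.1 hk)).2.2 x).1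
      have hsplit : (fun y => (hf N (‖y - x‖ ^ 2) - hf N (‖y‖ ^ 2) - ∑ k ∈ Finset.range m,
          ‖y‖ ^ (-mu N) * MvPolynomial.eval (fun i => x i) (pol (inv1 y) (k + 1))) * g y)
          = fun y => (hf N (‖y - x‖ ^ 2) - hf N (‖y‖ ^ 2)) * g y - ∑ k ∈ Finset.range m,
            ω y * MvPolynomial.eval (fun i => x i) (pol (inv1 y) (k + 1)) := by
        ext y
        rw [sub_mul, Finset.sum_mul]
        congr 1
        exact Finset.sum_congr rfl fun k _ => by rw [hω]; ring
      rw [hsplit, integral_sub hKi (integrable_finsetSum _ hSi), integral_finsetSum _ hSi]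
      have hr := representation hN hv hcs x
      rw [← hg] at hr
      simp only [map_sub, map_mul, map_sum, MvPolynomial.eval_C]
      rw [Fin.sum_univ_eq_sum_range (fun k => MvPolynomial.eval (fun i => x i) (Q k)),
        Finset.sum_congr rfl fun k hk => ((hQ k (Finset.mem_range.1 hk)).2.2 x).2]
      rw [neg_sub', ← hr]
      field_simp
      ring
    have hqq : ((m : ℝ) + 1) ^ (N - 2) ≤ (β + 3) ^ (N - 2) :=
      pow_le_pow_left₀ (by positivity) (by linarith) _
    have hbound : |∫ y, (hf N (‖y - x‖ ^ 2) - hf N (‖y‖ ^ 2) - ∑ k ∈ Finset.range m,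
          ‖y‖ ^ (-mu N) * MvPolynomial.eval (fun i => x i) (pol (inv1 y) (k + 1))) * g y|
        ≤ A * (sig N * (30 + T) * ((m : ℝ) + 1) ^ (N - 2) / distToInt β * ‖x‖ ^ (β + 2)) := by
      rcases eq_or_ne x 0 with rfl | hx
      · have h0 : ∀ y : EuclideanSpace ℝ (Fin N), ∀ k,
            MvPolynomial.eval (fun i => (0 : EuclideanSpace ℝ (Fin N)) i) (pol (inv1 y) (k + 1))
              = 0 := by
          intro y k
          have := abs_eval_pol_le hN 0 (inv1 y) k
          simpa using this
        simp only [h0]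
        simp
        positivity
      · have hx0 := norm_pos_iff.2 hx
        obtain ⟨c, hc, hI⟩ := hasInt_majorant hN T hβ hz hx0 hT0
        have hI' := hI.const_mul A
        have := norm_integral_le_of_norm_le hI'.1 (f := fun y =>
          (hf N (‖y - x‖ ^ 2) - hf N (‖y‖ ^ 2) - ∑ k ∈ Finset.range m,
          ‖y‖ ^ (-mu N) * MvPolynomial.eval (fun i => x i) (pol (inv1 y) (k + 1))) * g y) (by
            filter_upwards [hne 0, hne x] with y hy hyx
            have hp := pointwise_majorant hN hT hβ (m := m) (by linarith) hx0
              (norm_pos_iff.2 hy) hyx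
            rw [norm_mul, Real.norm_eq_abs, Real.norm_eq_abs]
            calc _ ≤ |hf N (‖y - x‖ ^ 2) - hf N (‖y‖ ^ 2) - ∑ k ∈ Finset.range m,
                  ‖y‖ ^ (-mu N) * MvPolynomial.eval (fun i => x i) (pol (inv1 y) (k + 1))|
                    * (A * ‖y‖ ^ β) := by
                  gcongr
                  exact hΔ y
              _ = A * (|hf N (‖y - x‖ ^ 2) - hf N (‖y‖ ^ 2) - ∑ k ∈ Finset.range m,
                  ‖y‖ ^ (-mu N) * MvPolynomial.eval (fun i => x i) (pol (inv1 y) (k + 1))|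
                    * ‖y‖ ^ β) := by ring
              _ ≤ _ := mul_le_mul_of_nonneg_left hp hA)
        rw [hI'.2, Real.norm_eq_abs] at this
        exact this.trans (mul_le_mul_of_nonneg_left hc hA)
    have h1 : |v x - MvPolynomial.eval (fun i => x i)
        (MvPolynomial.C (v 0) - MvPolynomial.C (kap N)⁻¹ * ∑ k : Fin m, Q k)|
        ≤ (kap N)⁻¹ *
          (A * (sig N * (30 + T) * ((m : ℝ) + 1) ^ (N - 2) / distToInt β * ‖x‖ ^ (β + 2))) := by
      rw [← div_eq_inv_mul, le_div_iff₀ hκ, mul_comm, ← abs_of_pos hκ, ← abs_mul, abs_of_pos hκ,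
        hrep, abs_neg]
      exact hbound
    refine h1.trans ?_
    have h2 : 0 ≤ A * (β + 3) ^ (N - 2) / distToInt β * ‖x‖ ^ (β + 2) := by positivity
    calc _ ≤ (kap N)⁻¹ *
          (A * (sig N * (30 + T) * (β + 3) ^ (N - 2) / distToInt β * ‖x‖ ^ (β + 2))) := by
          gcongr
      _ = (kap N)⁻¹ * (sig N * (30 + T)) *
          (A * (β + 3) ^ (N - 2) / distToInt β * ‖x‖ ^ (β + 2)) := by ring
      _ ≤ ((kap N)⁻¹ * (sig N * (30 + T)) + 1) *
          (A * (β + 3) ^ (N - 2) / distToInt β * ‖x‖ ^ (β + 2)) := by gcongr; linarith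
      _ = _ := by ring

end

/-! ### Cutting off near the unit sphere -/

section

variable {N : ℕ}

lemma add_four_sq_le {β : ℝ} (hβ : 0 < β) : (β + 4) ^ 2 ≤ 16 * (2:ℝ) ^ β := by
  have h1 : 1 + β / 4 ≤ Real.exp (β / 4) := by linarith [Real.add_one_le_exp (β / 4)]
  have h2 : Real.exp (β / 4) ^ 2 ≤ (2:ℝ) ^ β := by
    rw [← Real.exp_nat_mul, Real.rpow_def_of_pos two_pos]
    apply Real.exp_le_exp.2
    push_cast
    nlinarith [Real.log_two_gt_d9]
  have h3 : (1 + β / 4) ^ 2 ≤ Real.exp (β / 4) ^ 2 := pow_le_pow_left₀ (by positivity) h1 2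
  nlinarith

/-- In the shell `1 - ‖x‖² ≤ 2 / (β + 4)` the power `‖x‖ ^ (β + 2)` is bounded below,
uniformly in `β`. -/
lemma one_le_three_mul_rpow {β : ℝ} (hβ : 0 < β) {r : ℝ} (hr : 0 ≤ r)
    (h : (β + 4) * (1 - r ^ 2) ≤ 2) : 1 ≤ 3 * r ^ (β + 2) := by
  have h1 : 1 ≤ r ^ 2 * Real.exp (2 / (β + 2)) := by
    have h2 : 1 + 2 / (β + 2) ≤ Real.exp (2 / (β + 2)) := by
      linarith [Real.add_one_le_exp (2 / (β + 2))]
    have h3 : 1 ≤ r ^ 2 * (1 + 2 / (β + 2)) := by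
      have : 1 + 2 / (β + 2) = (β + 4) / (β + 2) := by field_simp; ring
      rw [this, ← mul_div_assoc, le_div_iff₀ (by positivity)]
      nlinarith
    exact h3.trans (mul_le_mul_of_nonneg_left h2 (by positivity))
  have h4 : (1:ℝ) ≤ (r ^ 2 * Real.exp (2 / (β + 2))) ^ ((β + 2) / 2) :=
    Real.one_le_rpow h1 (by positivity)
  rw [Real.mul_rpow (by positivity) (Real.exp_pos _).le, ← Real.exp_mul, ← Real.rpow_natCast,
    ← Real.rpow_mul hr] at h4
  have e1 : ((2:ℕ):ℝ) * ((β + 2) / 2) = β + 2 := by push_cast; ring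
  have e2 : 2 / (β + 2) * ((β + 2) / 2) = 1 := by field_simp
  rw [e1, e2] at h4
  have : Real.exp 1 ≤ 3 := by linarith [Real.exp_one_lt_d9]
  have h5 : 0 ≤ r ^ (β + 2) := by positivity
  nlinarith

/-- The barrier `‖x‖ ^ (2 * k + 2)`. -/
lemma laplacian_normSq_pow (k : ℕ) (x : EuclideanSpace ℝ (Fin N)) :
    laplacian (fun z : EuclideanSpace ℝ (Fin N) => (‖z‖ ^ 2) ^ (k + 1)) x
      = 2 * (k + 1) * (N + 2 * k) * (‖x‖ ^ 2) ^ k := by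
  rw [laplacian_comp_normSq (χ := fun t => t ^ (k + 1)) (χ₁ := fun t => (k + 1 : ℝ) * t ^ k)
    (χ₂ := (k + 1 : ℝ) * (k * (‖x‖ ^ 2) ^ (k - 1)))]
  · rcases k with _ | k
    · simp
    · simp only [Nat.add_sub_cancel]; push_cast; ring
  · filter_upwards with t
    exact (hasDerivAt_pow (k + 1) t).congr_deriv (by push_cast; simp)
  · exact ((hasDerivAt_pow k (‖x‖ ^ 2)).const_mul _)

lemma sup_bound_aux (hN : 2 ≤ N) {β A M₁ : ℝ} (hβ : 0 < β) (hA : (2:ℝ) ^ β ≤ A) (hM : 0 ≤ M₁)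
    {v : EuclideanSpace ℝ (Fin N) → ℝ} (hv : ContDiffOn ℝ 2 v (closedBall 0 1))
    (hb : ∀ x ∈ sphere (0 : EuclideanSpace ℝ (Fin N)) 1, v x ≤ M₁)
    (hl : ∀ x ∈ ball (0 : EuclideanSpace ℝ (Fin N)) 1, -(A * ‖x‖ ^ β) ≤ laplacian v x) :
    ∀ x ∈ closedBall (0 : EuclideanSpace ℝ (Fin N)) 1,
      v x ≤ (16 * M₁ + 9) * A / (β + 4) ^ 2 := by
  have hN' : (2:ℝ) ≤ N := by exact_mod_cast hN
  have hA0 : 0 < A := (by positivity : (0:ℝ) < 2 ^ β).trans_le hA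
  set k := ⌊β / 2⌋₊ with hk
  have hk1 : (k:ℝ) ≤ β / 2 := Nat.floor_le (by positivity)
  have hk2 : β / 2 < k + 1 := Nat.lt_floor_add_one _
  have hk0 : (0:ℝ) ≤ k := by positivity
  set D : ℝ := 2 * (k + 1) * (N + 2 * k) with hD
  have hD9 : (β + 4) ^ 2 ≤ 9 * D := by
    have h1 : (2 * (k + 1 : ℝ)) ^ 2 ≤ D := by rw [hD]; nlinarith
    have h2 : β + 4 ≤ 3 * (2 * (k + 1 : ℝ)) := by linarith
    nlinarith
  have hD0 : 0 < D := by positivity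
  have hbar : ContDiff ℝ 2 (fun z : EuclideanSpace ℝ (Fin N) => A / D * (‖z‖ ^ 2) ^ (k + 1)) :=
    contDiff_const.mul ((contDiff_norm_sq ℝ).pow _)
  have hbar' : ContDiff ℝ 2 (fun z : EuclideanSpace ℝ (Fin N) => (‖z‖ ^ 2) ^ (k + 1)) :=
    (contDiff_norm_sq ℝ).pow _
  have hC : ∀ x ∈ ball (0 : EuclideanSpace ℝ (Fin N)) 1, ContDiffAt ℝ 2 v x := fun x hx =>
    hv.contDiffAt (mem_of_superset (isOpen_ball.mem_nhds hx) ball_subset_closedBall)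
  intro x hx
  have hw := weak_max (by lia : 1 ≤ N) (M := M₁ + A / D)
    (w := fun z => v z + A / D * (‖z‖ ^ 2) ^ (k + 1))
    (hv.continuousOn.add hbar.continuous.continuousOn)
    (fun z hz => (hC z hz).add hbar.contDiffAt) (fun z hz => by
      rw [laplacian_add (hC z hz) hbar.contDiffAt, laplacian_const_mul _ hbar'.contDiffAt,
        laplacian_normSq_pow, ← hD]
      have hz1 : ‖z‖ < 1 := by simpa using hz
      have hp : ‖z‖ ^ β ≤ (‖z‖ ^ 2) ^ k := by
        rw [← pow_mul, ← Real.rpow_natCast]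
        exact Real.rpow_le_rpow_of_exponent_ge' (norm_nonneg _) hz1.le (by positivity)
          (by push_cast; linarith)
      have e : A / D * (D * (‖z‖ ^ 2) ^ k) = A * (‖z‖ ^ 2) ^ k := by field_simp
      rw [e]
      linarith [hl z hz, mul_le_mul_of_nonneg_left hp hA0.le])
    (fun z hz => by
      have hz1 : ‖z‖ = 1 := by simpa using hz
      simp only [hz1, one_pow, mul_one]
      linarith [hb z hz]) x hx
  have h0 : 0 ≤ A / D * (‖x‖ ^ 2) ^ (k + 1) := by positivity
  have h1 : A / D ≤ 9 * A / (β + 4) ^ 2 := by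
    rw [div_le_div_iff₀ hD0 (by positivity)]
    nlinarith
  have h2 : M₁ ≤ 16 * M₁ * A / (β + 4) ^ 2 := by
    rw [le_div_iff₀ (by positivity)]
    nlinarith [add_four_sq_le hβ]
  have e : (16 * M₁ + 9) * A / (β + 4) ^ 2
      = 16 * M₁ * A / (β + 4) ^ 2 + 9 * A / (β + 4) ^ 2 := by ring
  rw [e]
  linarith

/-- Comparison with a barrier: the Laplacian bound improves the boundary bound `M₁` to one of
order `A / (β + 4)²`. -/
lemma sup_bound (hN : 2 ≤ N) {β A M₁ : ℝ} (hβ : 0 < β) (hA : (2:ℝ) ^ β ≤ A) (hM : 0 ≤ M₁)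
    {v : EuclideanSpace ℝ (Fin N) → ℝ} (hv : ContDiffOn ℝ 2 v (closedBall 0 1))
    (hb : ∀ x ∈ sphere (0 : EuclideanSpace ℝ (Fin N)) 1, |v x| ≤ M₁)
    (hl : ∀ x ∈ ball (0 : EuclideanSpace ℝ (Fin N)) 1, |laplacian v x| ≤ A * ‖x‖ ^ β) :
    ∀ x ∈ closedBall (0 : EuclideanSpace ℝ (Fin N)) 1,
      |v x| ≤ (16 * M₁ + 9) * A / (β + 4) ^ 2 := by
  intro x hx
  have hC : ∀ x ∈ ball (0 : EuclideanSpace ℝ (Fin N)) 1, ContDiffAt ℝ 2 v x := fun x hx =>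
    hv.contDiffAt (mem_of_superset (isOpen_ball.mem_nhds hx) ball_subset_closedBall)
  refine abs_le'.2 ⟨sup_bound_aux hN hβ hA hM hv (fun z hz => (abs_le.1 (hb z hz)).2)
    (fun z hz => (abs_le.1 (hl z hz)).1) x hx, ?_⟩
  have := sup_bound_aux hN hβ hA hM (v := fun z => (-1) * v z) (contDiffOn_const.mul hv)
    (fun z hz => by linarith [(abs_le.1 (hb z hz)).1]) (fun z hz => by
      rw [laplacian_const_mul _ (hC z hz)]
      linarith [(abs_le.1 (hl z hz)).2]) x hx
  linarith

lemma contDiff_deriv_smoothTransition : ContDiff ℝ 1 (deriv Real.smoothTransition) := by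
  have h : ContDiff ℝ (1 + 1) Real.smoothTransition := Real.smoothTransition.contDiff
  exact (contDiff_succ_iff_deriv.1 h).2.2

lemma smoothTransition_deriv_bound : ∃ B > 0, ∀ t : ℝ,
    |deriv Real.smoothTransition t| ≤ B ∧ |deriv (deriv Real.smoothTransition) t| ≤ B := by
  have hs : ContDiff ℝ 2 Real.smoothTransition := Real.smoothTransition.contDiff
  have hs1 : ContDiff ℝ 1 (deriv Real.smoothTransition) :=
    contDiff_deriv_smoothTransition
  have hcs : HasCompactSupport (deriv Real.smoothTransition) := by
    refine HasCompactSupport.intro (isCompact_Icc (a := (0:ℝ)) (b := 1)) fun t ht => ?_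
    rcases lt_or_ge t 0 with h | h
    · have : Real.smoothTransition =ᶠ[nhds t] fun _ => 0 := by
        filter_upwards [Iio_mem_nhds h] with y hy
        exact Real.smoothTransition.zero_of_nonpos (le_of_lt hy)
      rw [this.deriv_eq]; simp
    · have h1 : 1 < t := by
        by_contra! h1; exact ht ⟨h, h1⟩
      have : Real.smoothTransition =ᶠ[nhds t] fun _ => 1 := by
        filter_upwards [Ioi_mem_nhds h1] with y hy
        exact Real.smoothTransition.one_of_one_le (le_of_lt hy)
      rw [this.deriv_eq]; simp
  obtain ⟨B₁, h1⟩ := hcs.exists_bound_of_continuous hs1.continuous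
  obtain ⟨B₂, h2⟩ := hcs.deriv.exists_bound_of_continuous (hs1.continuous_deriv le_rfl)
  refine ⟨max 1 (max B₁ B₂), by positivity, fun t => ⟨?_, ?_⟩⟩
  · exact (h1 t).trans (by simp)
  · exact (h2 t).trans (by simp)

/-- The radial cutoff: equal to `1` where `m (1 - ‖x‖²) ≥ 2` and to `0` where
`m (1 - ‖x‖²) ≤ 1`. -/
noncomputable def cutoff (m : ℝ) (x : EuclideanSpace ℝ (Fin N)) : ℝ :=
  Real.smoothTransition (m * (1 - ‖x‖ ^ 2) - 1)

lemma contDiff_cutoff (m : ℝ) : ContDiff ℝ 2 (cutoff (N := N) m) :=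
  Real.smoothTransition.contDiff.comp
    ((contDiff_const.mul (contDiff_const.sub (contDiff_norm_sq ℝ))).sub contDiff_const)

lemma cutoff_mem (m : ℝ) (x : EuclideanSpace ℝ (Fin N)) : |cutoff m x| ≤ 1 := by
  rw [cutoff, abs_of_nonneg (Real.smoothTransition.nonneg _)]
  exact Real.smoothTransition.le_one _

lemma cutoff_bounds {m B : ℝ} (hm : 0 ≤ m) (hB : ∀ t : ℝ,
    |deriv Real.smoothTransition t| ≤ B ∧ |deriv (deriv Real.smoothTransition) t| ≤ B)
    {x : EuclideanSpace ℝ (Fin N)} (hx : ‖x‖ ≤ 1) :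
    ‖fderiv ℝ (cutoff m) x‖ ≤ 2 * m * B ∧
      |laplacian (cutoff m) x| ≤ 2 * N * (m * B) + 4 * (m ^ 2 * B) := by
  have hB0 : 0 ≤ B := (abs_nonneg _).trans (hB 0).1
  have hs : ContDiff ℝ 2 Real.smoothTransition := Real.smoothTransition.contDiff
  have hs1 : ContDiff ℝ 1 (deriv Real.smoothTransition) :=
    contDiff_deriv_smoothTransition
  have hin : ∀ t, HasDerivAt (fun t : ℝ => m * (1 - t) - 1) (-m) t := fun t =>
    ((((hasDerivAt_id t).const_sub 1).const_mul m).sub_const 1).congr_deriv (by simp)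
  have h1 : ∀ t, HasDerivAt (fun t => Real.smoothTransition (m * (1 - t) - 1))
      (deriv Real.smoothTransition (m * (1 - t) - 1) * (-m)) t := fun t =>
    ((hs.differentiable (by norm_num) _).hasDerivAt).comp t (hin t)
  have h2 : ∀ t, HasDerivAt (fun t => deriv Real.smoothTransition (m * (1 - t) - 1) * (-m))
      (deriv (deriv Real.smoothTransition) (m * (1 - t) - 1) * (-m) * (-m)) t := fun t =>
    (((hs1.differentiable (by norm_num) _).hasDerivAt).comp t (hin t)).mul_const _
  set s := m * (1 - ‖x‖ ^ 2) - 1 with hs'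
  have hx2 : ‖x‖ ^ 2 ≤ 1 := pow_le_one₀ (norm_nonneg _) hx
  constructor
  · have := (hasFDerivAt_comp_normSq (h1 (‖x‖ ^ 2))).fderiv
    have e : fderiv ℝ (cutoff m) x = _ := this
    rw [e, norm_smul, innerSL_apply_norm, Real.norm_eq_abs, ← hs', abs_mul, abs_mul, abs_neg,
      abs_of_nonneg hm, abs_two]
    calc 2 * (|deriv Real.smoothTransition s| * m) * ‖x‖
        ≤ 2 * (B * m) * 1 := by
          gcongr
          exact (hB s).1
      _ = _ := by ring
  · have e := laplacian_comp_normSq (x := x) (Eventually.of_forall h1) (h2 (‖x‖ ^ 2))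
    change |laplacian (fun z : EuclideanSpace ℝ (Fin N) =>
      Real.smoothTransition (m * (1 - ‖z‖ ^ 2) - 1)) x| ≤ _
    rw [e, ← hs']
    refine (abs_add_le _ _).trans (add_le_add ?_ ?_)
    · rw [abs_mul, abs_of_nonneg (by positivity : (0:ℝ) ≤ 2 * N), abs_mul, abs_neg,
        abs_of_nonneg hm, mul_comm m B]
      gcongr
      exact (hB s).1
    · rw [abs_mul, abs_of_nonneg (by positivity : (0:ℝ) ≤ 4 * ‖x‖ ^ 2), abs_mul, abs_mul, abs_neg,
        abs_of_nonneg hm]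
      calc 4 * ‖x‖ ^ 2 * (|deriv (deriv Real.smoothTransition) s| * m * m)
          ≤ 4 * 1 * (B * m * m) := by
            gcongr
            exact (hB s).2
        _ = 4 * (m ^ 2 * B) := by ring


/-- Near the sphere, but away from it by `1 / (β + 4)`, the gradient is of order
`A / (β + 4)`. -/
lemma shell_gradient (hN : 2 ≤ N) {β A K : ℝ} (hβ : 0 < β) (hA : 0 < A) (hK : 0 < K)
    {v : EuclideanSpace ℝ (Fin N) → ℝ} (hv : ContDiffOn ℝ 2 v (closedBall 0 1))
    (hs : ∀ x ∈ closedBall (0 : EuclideanSpace ℝ (Fin N)) 1, |v x| ≤ K * A / (β + 4) ^ 2)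
    (hl : ∀ x ∈ ball (0 : EuclideanSpace ℝ (Fin N)) 1, |laplacian v x| ≤ A * ‖x‖ ^ β)
    {x : EuclideanSpace ℝ (Fin N)} (hx : 1 ≤ (β + 4) * (1 - ‖x‖ ^ 2)) :
    ‖fderiv ℝ v x‖ ≤ ((4 * N + 2) * 4 * K + 1) * A / (β + 4) := by
  set m := β + 4 with hm
  have hm0 : 0 < m := by positivity
  have hxn : ‖x‖ ≤ 1 - 1 / (2 * m) := by
    have h1 : 1 / m ≤ 1 - ‖x‖ ^ 2 := by rwa [div_le_iff₀ hm0, mul_comm]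
    have h2 : 1 / (2 * m) ≤ 1 / 2 := by
      rw [div_le_div_iff₀ (by positivity) (by norm_num)]; linarith
    have h3 : 1 / m = 2 * (1 / (2 * m)) := by field_simp
    refine le_of_sq_le_sq ?_ (by linarith)
    nlinarith [sq_nonneg (1 / (2 * m))]
  have hball : ∀ z ∈ closedBall x (1 / (4 * m)), z ∈ ball (0 : EuclideanSpace ℝ (Fin N)) 1 := by
    intro z hz
    rw [mem_closedBall, dist_eq_norm] at hz
    rw [mem_ball, dist_zero_right]
    have h1 : ‖z‖ ≤ ‖z - x‖ + ‖x‖ := by simpa using norm_add_le (z - x) x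
    have h3 : 1 / (2 * m) = 2 * (1 / (4 * m)) := by field_simp; norm_num
    have h4 : 0 < 1 / (4 * m) := by positivity
    linarith
  have h := interior_gradient (by lia : 1 ≤ N) (w := v) (x₀ := x) (ρ := 1 / (4 * m))
    (S := K * A / m ^ 2) (F := A) (by positivity) (by positivity) hA.le
    (fun z hz => hv.contDiffAt
      (mem_of_superset (isOpen_ball.mem_nhds (hball z hz)) ball_subset_closedBall))
    (fun z hz => hs z (ball_subset_closedBall (hball z hz)))
    (fun z hz => by
      refine (hl z (hball z hz)).trans ?_
      have : ‖z‖ < 1 := by simpa using hball z hz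
      have : ‖z‖ ^ β ≤ 1 := Real.rpow_le_one (norm_nonneg _) this.le hβ.le
      nlinarith)
  refine h.trans ?_
  have e : (4 * N + 2) * (K * A / m ^ 2 / (1 / (4 * m))) + 2 * (1 / (4 * m) * A)
      = ((4 * N + 2) * 4 * K + 1 / 2) * A / m := by field_simp; ring
  rw [e]
  gcongr
  norm_num

/-- Multiplying by the cutoff at distance of order `1 / (β + 4)` from the sphere keeps the
Laplacian bound, up to a constant that does not depend on `β`. -/
lemma exists_cutoff (hN : 2 ≤ N) {M₁ : ℝ} (hM : 0 ≤ M₁) : ∃ K > 0, ∀ β A : ℝ, 0 < β →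
    (2:ℝ) ^ β ≤ A → ∀ v : EuclideanSpace ℝ (Fin N) → ℝ, ContDiffOn ℝ 2 v (closedBall 0 1) →
    (∀ x ∈ sphere (0 : EuclideanSpace ℝ (Fin N)) 1, |v x| ≤ M₁) →
    (∀ x ∈ ball (0 : EuclideanSpace ℝ (Fin N)) 1, |laplacian v x| ≤ A * ‖x‖ ^ β) →
    ∃ u : EuclideanSpace ℝ (Fin N) → ℝ, ContDiff ℝ 2 u ∧ HasCompactSupport u ∧
      (∀ x, |laplacian u x| ≤ K * A * ‖x‖ ^ β) ∧
      (∀ x, 2 < (β + 4) * (1 - ‖x‖ ^ 2) → u =ᶠ[nhds x] v) ∧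
      (∀ x ∈ ball (0 : EuclideanSpace ℝ (Fin N)) 1, |v x - u x| ≤ K * A) ∧
      (∀ x, (β + 4) * (1 - ‖x‖ ^ 2) ≤ 2 → ‖fderiv ℝ u x‖ ≤ K * A) := by
  obtain ⟨B, hB0, hB⟩ := smoothTransition_deriv_bound
  set K₀ := 16 * M₁ + 9 with hK₀
  have hK₀0 : 0 < K₀ := by positivity
  set K₁ : ℝ := (4 * N + 2) * 4 * K₀ + 1 with hK₁
  have hK₁0 : 0 < K₁ := by positivity
  set K : ℝ := 1 + 3 * (K₀ * (2 * N * B + 4 * B) + 2 * (N * (2 * B * K₁))) + 2 * K₀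
    + (K₁ + 2 * B * K₀) with hK
  refine ⟨K, by positivity, ?_⟩
  intro β A hβ hA v hv hb hl
  have hA0 : 0 < A := (by positivity : (0:ℝ) < 2 ^ β).trans_le hA
  have hsup := sup_bound hN hβ hA hM hv hb hl
  rw [← hK₀] at hsup
  have hC : ∀ x ∈ ball (0 : EuclideanSpace ℝ (Fin N)) 1, ContDiffAt ℝ 2 v x := fun x hx =>
    hv.contDiffAt (mem_of_superset (isOpen_ball.mem_nhds hx) ball_subset_closedBall)
  set m := β + 4 with hm
  have hm4 : 4 ≤ m := by linarith
  have hm0 : 0 < m := by linarith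
  set u : EuclideanSpace ℝ (Fin N) → ℝ := fun x => cutoff m x * v x with hu
  have hcont : Continuous fun x : EuclideanSpace ℝ (Fin N) => m * (1 - ‖x‖ ^ 2) := by fun_prop
  have hball : ∀ x : EuclideanSpace ℝ (Fin N), 1 ≤ m * (1 - ‖x‖ ^ 2) → ‖x‖ < 1 := by
    intro x hx
    by_contra! h
    have : 1 ≤ ‖x‖ ^ 2 := one_le_pow₀ h
    nlinarith
  have hout : ∀ x : EuclideanSpace ℝ (Fin N), m * (1 - ‖x‖ ^ 2) < 1 → u =ᶠ[nhds x] fun _ => 0 := by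
    intro x hx
    filter_upwards [hcont.continuousAt.eventually_lt_const hx] with z hz
    rw [hu]
    simp only [cutoff]
    rw [Real.smoothTransition.zero_of_nonpos (by linarith), zero_mul]
  have hinn : ∀ x : EuclideanSpace ℝ (Fin N), 2 < m * (1 - ‖x‖ ^ 2) → u =ᶠ[nhds x] v := by
    intro x hx
    filter_upwards [hcont.continuousAt.eventually_const_lt hx] with z hz
    rw [hu]
    simp only [cutoff]
    rw [Real.smoothTransition.one_of_one_le (by linarith), one_mul]
  have hKa : 1 ≤ K := by
    have : 0 ≤ 3 * (K₀ * (2 * N * B + 4 * B) + 2 * (N * (2 * B * K₁))) + 2 * K₀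
      + (K₁ + 2 * B * K₀) := by positivity
    linarith
  have hKb : 2 * K₀ ≤ K := by
    have : 0 ≤ 1 + 3 * (K₀ * (2 * N * B + 4 * B) + 2 * (N * (2 * B * K₁)))
      + (K₁ + 2 * B * K₀) := by positivity
    linarith
  have hKc : K₁ + 2 * B * K₀ ≤ K := by
    have : 0 ≤ 1 + 3 * (K₀ * (2 * N * B + 4 * B) + 2 * (N * (2 * B * K₁))) + 2 * K₀ := by
      positivity
    linarith
  have hKd : 1 + 3 * (K₀ * (2 * N * B + 4 * B) + 2 * (N * (2 * B * K₁))) ≤ K := by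
    have : 0 ≤ 2 * K₀ + (K₁ + 2 * B * K₀) := by positivity
    linarith
  have hgrad : ∀ x : EuclideanSpace ℝ (Fin N), 1 ≤ m * (1 - ‖x‖ ^ 2) →
      ‖fderiv ℝ v x‖ ≤ K₁ * A / m := fun x hx =>
    shell_gradient hN hβ hA0 hK₀0 hv hsup hl hx
  refine ⟨u, ?_, ?_, ?_, hinn, ?_, ?_⟩
  · refine contDiff_iff_contDiffAt.2 fun x => ?_
    rcases lt_or_ge (m * (1 - ‖x‖ ^ 2)) 1 with h | h
    · exact contDiffAt_const.congr_of_eventuallyEq (hout x h)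
    · exact (contDiff_cutoff m).contDiffAt.mul (hC x (by simpa using hball x h))
  · refine HasCompactSupport.intro (isCompact_closedBall (0 : EuclideanSpace ℝ (Fin N)) 1)
      fun x hx => (hout x ?_).self_of_nhds
    by_contra! h
    exact hx (by simpa using (hball x h).le)
  · intro x
    have hr0 : 0 ≤ ‖x‖ ^ β := by positivity
    rcases lt_or_ge (m * (1 - ‖x‖ ^ 2)) 1 with h | h
    · rw [laplacian_congr (hout x h)]
      have : laplacian (fun _ : EuclideanSpace ℝ (Fin N) => (0:ℝ)) x = 0 := by
        simp [laplacian]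
      rw [this, abs_zero]
      positivity
    · have hx1 := hball x h
      have hxb : x ∈ ball (0 : EuclideanSpace ℝ (Fin N)) 1 := by simpa using hx1
      rcases lt_or_ge 2 (m * (1 - ‖x‖ ^ 2)) with h2 | h2
      · rw [laplacian_congr (hinn x h2)]
        refine (hl x hxb).trans ?_
        have := mul_le_mul_of_nonneg_right hKa (by positivity : 0 ≤ A * ‖x‖ ^ β)
        linarith
      · rw [hu, laplacian_mul (contDiff_cutoff m).contDiffAt (hC x hxb)]
        obtain ⟨hc1, hc2⟩ := cutoff_bounds (N := N) hm0.le hB hx1.le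
        have hrl : 1 ≤ 3 * ‖x‖ ^ β := by
          have h3 := one_le_three_mul_rpow hβ (norm_nonneg x) h2
          have h4 : ‖x‖ ^ (β + 2) ≤ ‖x‖ ^ β :=
            Real.rpow_le_rpow_of_exponent_ge' (norm_nonneg _) hx1.le hβ.le (by linarith)
          linarith
        have t1 : |cutoff m x * laplacian v x| ≤ A * ‖x‖ ^ β := by
          rw [abs_mul]
          calc _ ≤ 1 * (A * ‖x‖ ^ β) :=
                mul_le_mul (cutoff_mem m x) (hl x hxb) (abs_nonneg _) zero_le_one
            _ = _ := one_mul _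
        have t2 : |v x * laplacian (cutoff m) x| ≤ A * (K₀ * (2 * N * B + 4 * B)) := by
          rw [abs_mul]
          calc _ ≤ K₀ * A / m ^ 2 * (2 * N * (m * B) + 4 * (m ^ 2 * B)) :=
                mul_le_mul (hsup x (ball_subset_closedBall hxb)) hc2 (abs_nonneg _) (by positivity)
            _ = A * (K₀ * (2 * N * B / m + 4 * B)) := by field_simp
            _ ≤ A * (K₀ * (2 * N * B + 4 * B)) := by
                gcongr
                exact div_le_self (by positivity) (by linarith)
        have t3 : |∑ i : Fin N, fderiv ℝ (cutoff m) x (EuclideanSpace.single i 1)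
            * fderiv ℝ v x (EuclideanSpace.single i 1)| ≤ A * (N * (2 * B * K₁)) := by
          refine (Finset.abs_sum_le_sum_abs _ _).trans ?_
          have hi : ∀ i ∈ (Finset.univ : Finset (Fin N)),
              |fderiv ℝ (cutoff m) x (EuclideanSpace.single i 1)
                * fderiv ℝ v x (EuclideanSpace.single i 1)| ≤ 2 * m * B * (K₁ * A / m) := by
            intro i _
            have hop : ∀ L : EuclideanSpace ℝ (Fin N) →L[ℝ] ℝ,
                |L (EuclideanSpace.single i 1)| ≤ ‖L‖ := fun L => by
              have := L.le_opNorm (EuclideanSpace.single i 1)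
              simpa using this
            rw [abs_mul]
            exact mul_le_mul ((hop _).trans hc1) ((hop _).trans (hgrad x h)) (abs_nonneg _)
              (by positivity)
          refine (Finset.sum_le_card_nsmul _ _ _ hi).trans_eq ?_
          simp only [Finset.card_univ, Fintype.card_fin, nsmul_eq_mul]
          field_simp
        have t4 : A * (K₀ * (2 * N * B + 4 * B) + 2 * (N * (2 * B * K₁)))
            ≤ A * (K₀ * (2 * N * B + 4 * B) + 2 * (N * (2 * B * K₁))) * (3 * ‖x‖ ^ β) :=
          le_mul_of_one_le_right (by positivity) hrl
        have t5 := mul_le_mul_of_nonneg_right hKd (by positivity : 0 ≤ A * ‖x‖ ^ β)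
        refine (abs_add_le _ _).trans ((add_le_add (abs_add_le _ _) le_rfl).trans ?_)
        rw [abs_mul 2, abs_two]
        linarith
  · intro x hx
    have h1 : v x - u x = (1 - cutoff m x) * v x := by rw [hu]; ring
    have h2 : |1 - cutoff m x| ≤ 1 := by
      rw [cutoff, abs_of_nonneg (by linarith [Real.smoothTransition.le_one (m * (1 - ‖x‖ ^ 2) - 1)])]
      linarith [Real.smoothTransition.nonneg (m * (1 - ‖x‖ ^ 2) - 1)]
    rw [h1, abs_mul]
    have h3 : |v x| ≤ K₀ * A := (hsup x (ball_subset_closedBall hx)).trans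
      (div_le_self (by positivity) (one_le_pow₀ (by linarith)))
    have h4 := mul_le_mul h2 h3 (abs_nonneg _) zero_le_one
    have h5 := mul_le_mul_of_nonneg_right hKb hA0.le
    have h6 : 0 ≤ K₀ * A := by positivity
    linarith
  · intro x h2
    rcases lt_or_ge (m * (1 - ‖x‖ ^ 2)) 1 with h | h
    · rw [(hout x h).fderiv_eq]
      simp only [fderiv_fun_const, Pi.zero_apply, norm_zero]
      positivity
    · have hx1 := hball x h
      have hxb : x ∈ ball (0 : EuclideanSpace ℝ (Fin N)) 1 := by simpa using hx1
      obtain ⟨hc1, -⟩ := cutoff_bounds (N := N) hm0.le hB hx1.le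
      have hd := (((contDiff_cutoff m).contDiffAt.differentiableAt (by norm_num)).hasFDerivAt.mul
        ((hC x hxb).differentiableAt (by norm_num)).hasFDerivAt).fderiv
      have e : fderiv ℝ u x = cutoff m x • fderiv ℝ v x + v x • fderiv ℝ (cutoff m) x := hd
      rw [e]
      refine (norm_add_le _ _).trans ?_
      rw [norm_smul, norm_smul, Real.norm_eq_abs, Real.norm_eq_abs]
      have g1 : |cutoff m x| * ‖fderiv ℝ v x‖ ≤ 1 * (K₁ * A) :=
        mul_le_mul (cutoff_mem m x) ((hgrad x h).trans
          (div_le_self (by positivity) (by linarith))) (norm_nonneg _) zero_le_one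
      have g2 : |v x| * ‖fderiv ℝ (cutoff m) x‖ ≤ 2 * B * K₀ * A := by
        calc _ ≤ K₀ * A / m ^ 2 * (2 * m * B) :=
              mul_le_mul (hsup x (ball_subset_closedBall hxb)) hc1 (norm_nonneg _) (by positivity)
          _ = 2 * B * K₀ * A / m := by field_simp
          _ ≤ _ := div_le_self (by positivity) (by linarith)
      have g3 := mul_le_mul_of_nonneg_right hKc hA0.le
      linarith

end

/-! ### From the approximation of values to the approximation of gradients -/

section

variable {N : ℕ}

/-- A function that is `O(‖x‖ ^ (β + 2))` with Laplacian `O(‖x‖ ^ β)` has gradient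
`O(‖x‖ ^ (β + 1))`: apply the interior gradient estimate in the ball of radius
`‖x‖ / (β + 4)` about `x`, on which `‖z‖ ^ (β + 2) ≤ 3 ‖x‖ ^ (β + 2)`. -/
lemma gradient_of_growth (hN : 2 ≤ N) {β E F : ℝ} (hβ : 0 < β) (hE : 0 < E) (hF : 0 ≤ F)
    {w : EuclideanSpace ℝ (Fin N) → ℝ} (hw : ContDiff ℝ 2 w)
    (hs : ∀ x, |w x| ≤ E * ‖x‖ ^ (β + 2)) (hl : ∀ x, |laplacian w x| ≤ F * ‖x‖ ^ β)
    (x : EuclideanSpace ℝ (Fin N)) :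
    ‖fderiv ℝ w x‖ ≤ ((4 * N + 2) * 3 * E * (β + 4) + 6 * F) * ‖x‖ ^ (β + 1) := by
  rcases eq_or_ne x 0 with rfl | hx
  · have hO : w =O[nhds 0] fun z => ‖z - 0‖ ^ 2 := by
      refine IsBigO.of_bound E ?_
      filter_upwards [ball_mem_nhds (0 : EuclideanSpace ℝ (Fin N)) one_pos] with z hz
      have hz1 : ‖z‖ < 1 := by simpa using hz
      rw [sub_zero, Real.norm_eq_abs, Real.norm_of_nonneg (by positivity)]
      refine (hs z).trans (mul_le_mul_of_nonneg_left ?_ hE.le)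
      rw [← Real.rpow_natCast]
      exact Real.rpow_le_rpow_of_exponent_ge' (norm_nonneg _) hz1.le (by positivity)
        (by push_cast; linarith)
    rw [(hO.hasFDerivAt (by norm_num)).fderiv, norm_zero]
    positivity
  have hx0 := norm_pos_iff.2 hx
  set m := β + 4 with hm
  have hm0 : 0 < m := by positivity
  have hzn : ∀ z ∈ closedBall x (‖x‖ / m), ‖z‖ ≤ ‖x‖ * (1 + 1 / m) := by
    intro z hz
    rw [mem_closedBall, dist_eq_norm] at hz
    have h1 : ‖z‖ ≤ ‖z - x‖ + ‖x‖ := by simpa using norm_add_le (z - x) x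
    have h2 : ‖x‖ * (1 + 1 / m) = ‖x‖ / m + ‖x‖ := by ring
    linarith
  have hgr : ∀ γ, 0 ≤ γ → γ ≤ β + 2 → ∀ z ∈ closedBall x (‖x‖ / m), ‖z‖ ^ γ ≤ 3 * ‖x‖ ^ γ := by
    intro γ hγ hγ' z hz
    calc ‖z‖ ^ γ ≤ (‖x‖ * (1 + 1 / m)) ^ γ := Real.rpow_le_rpow (norm_nonneg _) (hzn z hz) hγ
      _ ≤ (‖x‖ * Real.exp (1 / m)) ^ γ := by
          gcongr
          linarith [Real.add_one_le_exp (1 / m)]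
      _ = Real.exp (1 / m * γ) * ‖x‖ ^ γ := by
          rw [Real.mul_rpow hx0.le (Real.exp_pos _).le, ← Real.exp_mul, mul_comm]
      _ ≤ 3 * ‖x‖ ^ γ := by
          gcongr
          have : 1 / m * γ ≤ 1 := by
            rw [one_div, inv_mul_le_iff₀ hm0]; linarith
          linarith [Real.exp_le_exp.2 this, Real.exp_one_lt_d9]
  have h := interior_gradient (by lia : 1 ≤ N) (w := w) (x₀ := x) (ρ := ‖x‖ / m)
    (S := E * (3 * ‖x‖ ^ (β + 2))) (F := F * (3 * ‖x‖ ^ β)) (by positivity) (by positivity)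
    (by positivity) (fun z _ => hw.contDiffAt)
    (fun z hz => (hs z).trans
      (mul_le_mul_of_nonneg_left (hgr _ (by positivity) le_rfl z hz) hE.le))
    (fun z hz => (hl z).trans
      (mul_le_mul_of_nonneg_left (hgr _ hβ.le (by linarith) z hz) hF))
  refine h.trans ?_
  have e1 : ‖x‖ ^ (β + 2) = ‖x‖ ^ (β + 1) * ‖x‖ := by
    rw [← Real.rpow_add_one hx0.ne']; ring_nf
  have e2 : ‖x‖ ^ (β + 1) = ‖x‖ ^ β * ‖x‖ := Real.rpow_add_one hx0.ne' _
  have h1 : E * (3 * ‖x‖ ^ (β + 2)) / (‖x‖ / m) = 3 * E * m * ‖x‖ ^ (β + 1) := by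
    rw [e1]; field_simp
  have h2 : ‖x‖ / m * (F * (3 * ‖x‖ ^ β)) ≤ 3 * F * ‖x‖ ^ (β + 1) := by
    have : ‖x‖ / m * (F * (3 * ‖x‖ ^ β)) = 3 * F * ‖x‖ ^ (β + 1) / m := by rw [e2]; ring
    rw [this]
    exact div_le_self (by positivity) (by linarith)
  rw [h1]
  linarith

end

end CaffarelliFriedman

open CaffarelliFriedman

theorem caffarelli_friedman_lemma {N : ℕ} (hN : 2 ≤ N) {β₀ : ℝ} (hβ₀ : 0 < β₀)
    {M₁ M₂ : ℝ} (hM₁ : 0 ≤ M₁) (hM₂ : 0 ≤ M₂) :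
    ∃ C > (0:ℝ), ∀ (β Cβ : ℝ), β₀ ≤ β → (∀ z : ℤ, (z : ℝ) ≠ β) → (2:ℝ) ^ β ≤ Cβ →
      ∀ v : EuclideanSpace ℝ (Fin N) → ℝ,
        ContDiffOn ℝ 2 v (closedBall 0 1) →
        (∀ x ∈ sphere (0 : EuclideanSpace ℝ (Fin N)) 1, |v x| ≤ M₁) →
        (∀ x ∈ sphere (0 : EuclideanSpace ℝ (Fin N)) 1,
          ‖fderivWithin ℝ v (closedBall 0 1) x‖ ≤ M₂) →
        (∀ x ∈ ball (0 : EuclideanSpace ℝ (Fin N)) 1, |laplacian v x| ≤ Cβ * ‖x‖ ^ β) →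
        ∃ P : MvPolynomial (Fin N) ℝ,
          P.totalDegree ≤ Nat.floor β + 2 ∧
          (∀ x : EuclideanSpace ℝ (Fin N),
            laplacian (fun y : EuclideanSpace ℝ (Fin N) =>
              MvPolynomial.eval (fun i => y i) P) x = 0) ∧
          (∀ x ∈ ball (0 : EuclideanSpace ℝ (Fin N)) 1,
            |v x - MvPolynomial.eval (fun i => x i) P| ≤
              C * Cβ * β ^ (N - 2) / distToInt β * ‖x‖ ^ (β + 2) ∧
            ‖fderiv ℝ (fun y : EuclideanSpace ℝ (Fin N) =>
                v y - MvPolynomial.eval (fun i => y i) P) x‖ ≤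
              C * Cβ * β ^ N / distToInt β * ‖x‖ ^ (β + 1)) := by
  obtain ⟨T, hT0, hT⟩ := core hN
  obtain ⟨K, hK0, hK⟩ := exists_cutoff hN hM₁
  set C₁ : ℝ := 3 * K + T * K with hC₁
  set C₂ : ℝ := (4 * N + 2) * 3 * T * K + 6 * K + 3 * (M₂ + 5 + K) with hC₂
  -- `q` absorbs the passage from powers of `β + 4` to powers of `β`
  set q : ℝ := 1 + 4 / β₀ with hq
  have hq1 : 1 ≤ q := by
    have : 0 ≤ 4 / β₀ := by positivity
    linarith
  refine ⟨(C₁ + C₂) * q ^ N, by positivity, ?_⟩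
  intro β A hβ hz hA v hv hb hb' hl
  have hβ0 : 0 < β := hβ₀.trans_le hβ
  have hA1 : 1 ≤ A := (Real.one_le_rpow one_le_two hβ0.le).trans hA
  have hA0 : 0 < A := by linarith
  obtain ⟨hd0, hd1, -, -⟩ := distToInt_facts hβ0 hz
  set d := distToInt β with hd
  obtain ⟨u, hu, hucs, huΔ, huv, huv', huD⟩ := hK β A hβ0 hA v hv hb hl
  obtain ⟨P, hPd, hPl, hP⟩ := hT β (K * A) hβ0 hz (by positivity) u hu hucs huΔ
  have hPlap : ∀ x : EuclideanSpace ℝ (Fin N), laplacian (fun y : EuclideanSpace ℝ (Fin N) =>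
      MvPolynomial.eval (fun i => y i) P) x = 0 := fun x => by
    rw [laplacian_eval, hPl]
  have hPc : ContDiff ℝ 2 (fun y : EuclideanSpace ℝ (Fin N) =>
      MvPolynomial.eval (fun i => y i) P) := contDiff_eval P
  refine ⟨P, hPd, hPlap, fun x hx => ?_⟩
  have hx1 : ‖x‖ < 1 := by simpa using hx
  set m := β + 4 with hm
  have hm1 : 1 ≤ m := by linarith
  have hmq : m ≤ q * β := by
    have : 4 ≤ 4 / β₀ * β := by
      rw [div_mul_eq_mul_div, le_div_iff₀ hβ₀]; linarith
    rw [hq, hm]; linarith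
  have hpow : ∀ n, n ≤ N → m ^ n ≤ q ^ N * β ^ n := fun n hn => by
    calc m ^ n ≤ (q * β) ^ n := pow_le_pow_left₀ (by positivity) hmq n
      _ = q ^ n * β ^ n := mul_pow _ _ _
      _ ≤ q ^ N * β ^ n := by gcongr
  have hmd : ∀ n, 1 ≤ m ^ n / d := fun n => by
    rw [le_div_iff₀ hd0]
    linarith [one_le_pow₀ hm1 (n := n)]
  have hfin : ∀ (n : ℕ) (c r : ℝ), n ≤ N → 0 ≤ r → c ≤ C₁ + C₂ →
      c * A * m ^ n / d * r ≤ (C₁ + C₂) * q ^ N * A * β ^ n / d * r := by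
    intro n c r hn hr hc
    have hCC : 0 ≤ C₁ + C₂ := by positivity
    calc c * A * m ^ n / d * r ≤ (C₁ + C₂) * A * m ^ n / d * r := by gcongr
      _ ≤ (C₁ + C₂) * A * (q ^ N * β ^ n) / d * r := by gcongr; exact hpow n hn
      _ = _ := by ring
  have hC₁0 : 0 ≤ C₁ := by positivity
  have hC₂0 : 0 ≤ C₂ := by positivity
  -- coarser form of the bound for the compactly supported function
  have hP' : ∀ z : EuclideanSpace ℝ (Fin N), |u z - MvPolynomial.eval (fun i => z i) P|
      ≤ T * K * A * m ^ (N - 2) / d * ‖z‖ ^ (β + 2) := fun z => by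
    refine (hP z).trans ?_
    have : (β + 3) ^ (N - 2) ≤ m ^ (N - 2) := pow_le_pow_left₀ (by positivity) (by linarith) _
    calc T * (K * A) * (β + 3) ^ (N - 2) / d * ‖z‖ ^ (β + 2)
        ≤ T * (K * A) * m ^ (N - 2) / d * ‖z‖ ^ (β + 2) := by gcongr
      _ = _ := by ring
  have hG := gradient_of_growth hN hβ0 (by positivity : 0 < T * K * A * m ^ (N - 2) / d)
    (by positivity : 0 ≤ K * A) (hu.sub hPc) hP' (fun z => by
      rw [laplacian_sub hu.contDiffAt hPc.contDiffAt, hPlap, sub_zero]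
      exact huΔ z) x
  have hr1 : 0 ≤ ‖x‖ ^ (β + 1) := by positivity
  have hr2 : 0 ≤ ‖x‖ ^ (β + 2) := by positivity
  have hG' : ‖fderiv ℝ (fun y : EuclideanSpace ℝ (Fin N) =>
      u y - MvPolynomial.eval (fun i => y i) P) x‖
      ≤ ((4 * N + 2) * 3 * T * K + 6 * K) * A * m ^ N / d * ‖x‖ ^ (β + 1) := by
    refine hG.trans (mul_le_mul_of_nonneg_right ?_ hr1)
    have h1 : m ^ (N - 2) * m ≤ m ^ N := by
      rw [← pow_succ]; exact pow_le_pow_right₀ hm1 (by lia)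
    have h2 : (4 * N + 2) * 3 * (T * K * A * m ^ (N - 2) / d) * m
        ≤ (4 * N + 2) * 3 * T * K * A * m ^ N / d := by
      calc _ = (4 * N + 2) * 3 * T * K * A * (m ^ (N - 2) * m) / d := by ring
        _ ≤ _ := by gcongr
    have h3 : 6 * (K * A) ≤ 6 * (K * A) * (m ^ N / d) :=
      le_mul_of_one_le_right (by positivity) (hmd N)
    calc _ ≤ _ := add_le_add h2 h3
      _ = _ := by ring
  rcases lt_or_ge 2 (m * (1 - ‖x‖ ^ 2)) with hcase | hcase
  · have hev := huv x hcase
    constructor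
    · rw [← hev.self_of_nhds]
      refine (hP' x).trans ?_
      exact hfin (N - 2) (T * K) _ (Nat.sub_le _ _) hr2 (by linarith)
    · have hev' : (fun y : EuclideanSpace ℝ (Fin N) => v y - MvPolynomial.eval (fun i => y i) P)
          =ᶠ[nhds x] fun y => u y - MvPolynomial.eval (fun i => y i) P := by
        filter_upwards [hev] with y hy
        rw [hy]
      rw [hev'.fderiv_eq]
      refine hG'.trans (hfin N _ _ le_rfl hr1 ?_)
      have : 0 ≤ 3 * (M₂ + 5 + K) := by positivity
      linarith
  · have hl2 : 1 ≤ 3 * ‖x‖ ^ (β + 2) := one_le_three_mul_rpow hβ0 (norm_nonneg x) hcase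
    have hl1 : 1 ≤ 3 * ‖x‖ ^ (β + 1) := by
      have : ‖x‖ ^ (β + 2) ≤ ‖x‖ ^ (β + 1) :=
        Real.rpow_le_rpow_of_exponent_ge' (norm_nonneg _) hx1.le (by positivity) (by linarith)
      linarith
    constructor
    · refine le_trans ?_ (hfin (N - 2) C₁ _ (Nat.sub_le _ _) hr2 (by linarith))
      have h1 : |v x - MvPolynomial.eval (fun i => x i) P|
          ≤ |v x - u x| + |u x - MvPolynomial.eval (fun i => x i) P| := abs_sub_le _ _ _
      have h2 : K * A ≤ K * A * ((m ^ (N - 2) / d) * (3 * ‖x‖ ^ (β + 2))) :=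
        le_mul_of_one_le_right (by positivity)
          (one_le_mul_of_one_le_of_one_le (hmd _) hl2)
      calc _ ≤ _ := h1
        _ ≤ _ := add_le_add ((huv' x hx).trans h2) (hP' x)
        _ = _ := by rw [hC₁]; ring
    · refine le_trans ?_ (hfin N C₂ _ le_rfl hr1 (by linarith))
      have hvd : DifferentiableAt ℝ v x := (hv.contDiffAt
        (mem_of_superset (isOpen_ball.mem_nhds hx) ball_subset_closedBall)).differentiableAt
          (by norm_num)
      have hud : DifferentiableAt ℝ u x := hu.contDiffAt.differentiableAt (by norm_num)
      have hpd : DifferentiableAt ℝ (fun y : EuclideanSpace ℝ (Fin N) =>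
        MvPolynomial.eval (fun i => y i) P) x := hPc.contDiffAt.differentiableAt (by norm_num)
      have hgv := global_gradient hA0 hM₂ hv hb' (fun z hz => by
        refine (hl z hz).trans ?_
        have hz1 : ‖z‖ < 1 := by simpa using hz
        have : ‖z‖ ^ β ≤ 1 := Real.rpow_le_one (norm_nonneg _) hz1.le hβ0.le
        nlinarith) x hx
      have e : fderiv ℝ (fun y : EuclideanSpace ℝ (Fin N) =>
          v y - MvPolynomial.eval (fun i => y i) P) x
          = fderiv ℝ v x - fderiv ℝ u x + fderiv ℝ (fun y : EuclideanSpace ℝ (Fin N) =>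
          u y - MvPolynomial.eval (fun i => y i) P) x := by
        rw [fderiv_fun_sub hvd hpd, fderiv_fun_sub hud hpd]
        abel
      have h1 : ‖fderiv ℝ v x - fderiv ℝ u x‖ ≤ (M₂ + 5 + K) * A := by
        refine (norm_sub_le _ _).trans ((add_le_add hgv (huD x hcase)).trans ?_)
        nlinarith
      have h2 : (M₂ + 5 + K) * A ≤ (M₂ + 5 + K) * A * ((m ^ N / d) * (3 * ‖x‖ ^ (β + 1))) :=
        le_mul_of_one_le_right (by positivity)
          (one_le_mul_of_one_le_of_one_le (hmd _) hl1)
      rw [e]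
      calc _ ≤ _ := norm_add_le _ _
        _ ≤ _ := add_le_add (h1.trans h2) hG'
        _ = _ := by rw [hC₂]; ring
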